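/- arXiv:2205.08453 — 2 statements merged into one kernel-verified Lean document; each statement's English description precedes it below -/
import Mathlib

section
/- For the Fadell–Neuwirth fibration p : F(ℝ^d, m+n) → F(ℝ^d, m) (forgetting the last n points) with d ≥ 3 odd, n ≥ 1, m ≥ 2 and r ≥ 2, the r-th sequential parametrized topological complexity equals TC_r[p] = rn + m − 1. -/
open Set unitInterval

universe u v

/-- `HasSecatLE p k`: the base admits an open cover by `k+1` sets,
each admitting a continuous local section of `p`. -/
def HasSecatLE {E : Type u} {B : Type v} [TopologicalSpace E] [TopologicalSpace B]
    (p : E → B) (k : ℕ) : Prop :=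
  ∃ U : Fin (k + 1) → Set B, (∀ i, IsOpen (U i)) ∧ (⋃ i, U i) = Set.univ ∧
    ∀ i, ∃ s : C(U i, E), ∀ x : U i, p (s x) = (x : B)

/-- The sectional category (Schwarz genus) of a map, valued in `ℕ∞`. -/
noncomputable def secat {E : Type u} {B : Type v} [TopologicalSpace E] [TopologicalSpace B]
    (p : E → B) : ℕ∞ :=
  ⨅ k ∈ {k : ℕ | HasSecatLE p k}, (k : ℕ∞)

/-- A Hurewicz fibration: a continuous map with the homotopy lifting property
with respect to all spaces. -/
def IsHurewiczFibration {E : Type u} {B : Type v} [TopologicalSpace E] [TopologicalSpace B]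
    (p : E → B) : Prop :=
  Continuous p ∧
    ∀ (Z : Type (max u v)) [TopologicalSpace Z] (H : C(Z × unitInterval, B)) (h : C(Z, E)),
      (∀ z, p (h z) = H (z, 0)) →
        ∃ H' : C(Z × unitInterval, E), (∀ z, H' (z, 0) = h z) ∧ ∀ q, p (H' q) = H q

/-- The standard time schedule `t_i = i/(r-1)`, `i = 0, …, r-1` in `[0,1]`. -/
noncomputable def schedule (r : ℕ) (i : Fin r) : unitInterval :=
  Set.projIcc 0 1 zero_le_one ((i : ℝ) / ((r : ℝ) - 1))

/-- The space `E^I_B` of paths in `E` along which `p` is constant. -/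
def FibConstPath {E : Type u} {B : Type v} [TopologicalSpace E] [TopologicalSpace B]
    (p : E → B) : Set C(unitInterval, E) :=
  {α | ∀ s t, p (α s) = p (α t)}

/-- The space `E^r_B` of `r`-tuples in `E` lying in a common fibre of `p`. -/
def ParamSpace {E : Type u} {B : Type v} [TopologicalSpace E] [TopologicalSpace B]
    (p : E → B) (r : ℕ) : Set (Fin r → E) :=
  {e | ∀ i j, p (e i) = p (e j)}

/-- The evaluation fibration `Π_r : E^I_B → E^r_B`. -/
noncomputable def paramEval {E : Type u} {B : Type v} [TopologicalSpace E] [TopologicalSpace B]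
    (p : E → B) (r : ℕ) (α : FibConstPath p) : ParamSpace p r :=
  ⟨fun i => α.1 (schedule r i), fun _ _ => α.2 _ _⟩

/-- The `r`-th sequential parametrized topological complexity `TC_r[p : E → B]`. -/
noncomputable def seqParamTC {E : Type u} {B : Type v} [TopologicalSpace E] [TopologicalSpace B]
    (p : E → B) (r : ℕ) : ℕ∞ :=
  secat (paramEval p r)

/-- The `r`-th sequential topological complexity `TC_r(X)` of a space. -/
noncomputable def seqTC (X : Type u) [TopologicalSpace X] (r : ℕ) : ℕ∞ :=
  secat (fun (α : C(unitInterval, X)) (i : Fin r) => α (schedule r i))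

/-- `HasCatLE Y k`: `Y` admits an open cover by `k+1` sets each contractible in `Y`. -/
def HasCatLE (Y : Type u) [TopologicalSpace Y] (k : ℕ) : Prop :=
  ∃ U : Fin (k + 1) → Set Y, (∀ i, IsOpen (U i)) ∧ (⋃ i, U i) = Set.univ ∧
    ∀ i, ∃ (H : C((U i) × unitInterval, Y)) (y : Y),
      (∀ x, H (x, 0) = (x.1 : Y)) ∧ (∀ x, H (x, 1) = y)

/-- The Lusternik–Schnirelmann category of a space, valued in `ℕ∞`. -/
noncomputable def LScat (Y : Type u) [TopologicalSpace Y] : ℕ∞ :=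
  ⨅ k ∈ {k : ℕ | HasCatLE Y k}, (k : ℕ∞)

/-- The ordered configuration space `F(ℝ^d, N)` of `N` distinct points in `ℝ^d`. -/
abbrev Conf (d N : ℕ) : Type :=
  {u : Fin N → EuclideanSpace ℝ (Fin d) // Function.Injective u}

/-- The Fadell–Neuwirth fibration `F(ℝ^d, m+n) → F(ℝ^d, m)` forgetting the last `n` points. -/
def fnProj (d m n : ℕ) (u : Conf d (m + n)) : Conf d m :=
  ⟨fun i => u.1 (Fin.castAdd n i), fun a b h => by
    have h2 : Fin.castAdd n a = Fin.castAdd n b := u.2 h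
    exact Fin.ext (by simpa using congrArg Fin.val h2)⟩

/-!
Upper bound. Partition the first coordinates of the `m` base points and of the `n` moving points at
each of the `r` times into clusters, so that coordinates in one cluster are closer than coordinates
in different ones. The tuples clustered by a given partition form an open set, and these sets are
disjoint for different partitions with the same number of classes. As there are between `1` and
`m + rn` classes, it remains to find a section over each set. There the moving points of all `r`
configurations can escape to a common hub: first their first coordinates move into the gaps just
above the clusters, then the second coordinates move beyond the base points, then the first
coordinates move to `0`. Visiting the `r` configurations in turn, each time via the hub, gives the
section.

Lower bound. Let `q = d - 1`, which is even. A family of tuples parametrised by a product of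
`N = rn + m - 1` spheres `S^q`, with fundamental classes `x_ρ`, has the following property: over
each set with a section, the difference of two points of the configuration at time `0` is homotopic
to the difference of the same points at a later time. So the classes `x_{(i,a)} - x_{(i,0)}` for
`a ≠ 0` and, because the antipodal map of `S^q` has degree `-1`, the classes `x_k + x_{(0,1)}` for
the base points `k` other than the first vanish there. If `N` open sets with sections covered
everything, the cup product of `N` such classes would vanish; take each of them once, and
`x_{(i,1)} - x_{(i,0)}` twice. Only `x_k` involves the sphere `k`, so it has to be chosen from its
factor, and what is left is nonzero since `(x_{(i,1)} - x_{(i,0)})² = -2 x_{(i,1)} x_{(i,0)}` for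
even `q`. To make do without singular cohomology, pull the spheres back to a torus along maps
`(S¹)^q → S^q` of degree `±1`, label nonvanishing maps by vertices of a simplex as in Sperner's
lemma, and evaluate the cup product of the cochains of these labellings on the Kuhn triangulation of
a fine discrete torus.
-/

namespace FadellNeuwirth

/-! ### Cochains on lists -/

section Cochains

variable {X Y A R : Type*} [AddCommGroup A] [CommRing R]

/-- The Alexander–Spanier coboundary. A `p`-cochain on `X` is a function of lists of length
`p + 1`; the degree is not recorded in the type. -/
def coboundary : (List X → A) → List X → A
  | _, [] => 0
  | φ, a :: l => φ l - coboundary (fun t => φ (a :: t)) l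

theorem coboundary_add (φ ψ : List X → A) (l : List X) :
    coboundary (fun t => φ t + ψ t) l = coboundary φ l + coboundary ψ l := by
  induction l generalizing φ ψ with
  | nil => simp [coboundary]
  | cons a l ih => simp only [coboundary, ih]; abel

theorem coboundary_sub (φ ψ : List X → A) (l : List X) :
    coboundary (fun t => φ t - ψ t) l = coboundary φ l - coboundary ψ l := by
  induction l generalizing φ ψ with
  | nil => simp [coboundary]
  | cons a l ih => simp only [coboundary, ih]; abel

theorem coboundary_zero (l : List X) : coboundary (fun _ => (0 : A)) l = 0 := by
  simpa using coboundary_sub (fun _ => (0 : A)) (fun _ => 0) l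

theorem coboundary_sum {ι : Type*} (s : Finset ι) (φ : ι → List X → A) (l : List X) :
    coboundary (fun t => ∑ i ∈ s, φ i t) l = ∑ i ∈ s, coboundary (φ i) l := by
  classical
  induction s using Finset.induction_on with
  | empty => simpa using coboundary_zero l
  | insert i s hi ih => simp only [Finset.sum_insert hi, coboundary_add, ih]

theorem coboundary_const_mul (c : R) (φ : List X → R) (l : List X) :
    coboundary (fun t => c * φ t) l = c * coboundary φ l := by
  induction l generalizing φ with
  | nil => simp [coboundary]
  | cons a l ih => simp only [coboundary, ih]; ring

theorem coboundary_coboundary (φ : List X → A) (l : List X) :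
    coboundary (coboundary φ) l = 0 := by
  induction l generalizing φ with
  | nil => rfl
  | cons a l ih => simp only [coboundary, coboundary_sub, ih]; abel

theorem coboundary_comp_map (f : X → Y) (φ : List Y → A) (l : List X) :
    coboundary (fun t => φ (t.map f)) l = coboundary φ (l.map f) := by
  induction l generalizing φ with
  | nil => rfl
  | cons a l ih => simp only [coboundary, List.map_cons, ih fun t => φ (f a :: t)]

theorem coboundary_ofFn {n : ℕ} (φ : List X → A) (x : Fin (n + 1) → X) :
    coboundary φ (List.ofFn x) =
      ∑ i : Fin (n + 1), (-1 : ℤ) ^ (i : ℕ) • φ (List.ofFn fun k => x (i.succAbove k)) := by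
  induction n generalizing φ with
  | zero => simp [coboundary]
  | succ n ih =>
    rw [List.ofFn_succ, coboundary, ih, Fin.sum_univ_succ (n := n + 1), sub_eq_add_neg,
      ← Finset.sum_neg_distrib]
    simp [pow_succ]

/-- The prism operator of two maps `f` and `g`, a chain homotopy between the pullbacks of cochains
along `f` and along `g`. -/
def prism (f g : X → Y) : (List Y → A) → List X → A
  | _, [] => 0
  | φ, a :: l => φ (f a :: g a :: l.map g) - prism f g (fun t => φ (f a :: t)) l

theorem prism_sub (f g : X → Y) (φ ψ : List Y → A) (l : List X) :
    prism f g (fun t => φ t - ψ t) l = prism f g φ l - prism f g ψ l := by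
  induction l generalizing φ ψ with
  | nil => simp [prism]
  | cons a l ih => simp only [prism, ih]; abel

theorem coboundary_prism_add_prism_coboundary (f g : X → Y) (φ : List Y → A) (l : List X) :
    coboundary (prism f g φ) l + prism f g (coboundary φ) l = φ (l.map g) - φ (l.map f) := by
  induction l generalizing φ with
  | nil => simp [coboundary, prism]
  | cons a l ih =>
    have ih_tail := ih fun t => φ (f a :: t)
    simp only [coboundary, prism, List.map_cons]
    rw [prism_sub, coboundary_sub, coboundary_comp_map g fun t => φ (f a :: g a :: t)]
    linear_combination (norm := module) ih_tail

theorem prism_eq_zero {f g : X → Y} {φ : List Y → A} {l : List X}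
    (h : ∀ t : List Y, (∀ y ∈ t, ∃ x ∈ l, y = f x ∨ y = g x) → t.length = l.length + 1 →
      φ t = 0) : prism f g φ l = 0 := by
  induction l generalizing φ with
  | nil => rfl
  | cons a l ih =>
    have h_head : φ (f a :: g a :: l.map g) = 0 := by
      refine h _ (fun y hy => ?_) (by simp)
      simp only [List.mem_cons, List.mem_map] at hy
      rcases hy with rfl | rfl | ⟨x, hx, rfl⟩
      · exact ⟨a, by simp, Or.inl rfl⟩
      · exact ⟨a, by simp, Or.inr rfl⟩
      · exact ⟨x, by simp [hx], Or.inr rfl⟩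
    have h_tail : prism f g (fun t => φ (f a :: t)) l = 0 := by
      refine ih fun t ht hlen => h _ (fun y hy => ?_) (by simp [hlen])
      rcases List.mem_cons.1 hy with rfl | hy
      · exact ⟨a, by simp, Or.inl rfl⟩
      · obtain ⟨x, hx, hxy⟩ := ht y hy
        exact ⟨x, by simp [hx], hxy⟩
    rw [prism, h_head, h_tail, sub_zero]

/-- The Alexander–Whitney cup product; `p` is the degree of the first factor. -/
def cup (p : ℕ) (φ ψ : List X → R) (l : List X) : R :=
  φ (l.take (p + 1)) * ψ (l.drop p)

theorem coboundary_cup {p : ℕ} (φ ψ : List X → R) {l : List X} (hl : p + 2 ≤ l.length) :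
    coboundary (cup p φ ψ) l =
      cup (p + 1) (coboundary φ) ψ l + (-1) ^ p * cup p φ (coboundary ψ) l := by
  induction p generalizing φ l with
  | zero =>
    match l, hl with
    | a :: b :: l, _ =>
      have h : coboundary (fun t => cup 0 φ ψ (a :: t)) (b :: l) =
          φ [a] * coboundary (fun t => ψ (a :: t)) (b :: l) :=
        coboundary_const_mul (φ [a]) (fun t => ψ (a :: t)) (b :: l)
      rw [coboundary, h]
      simp only [cup, coboundary, List.take_succ_cons, List.take_zero, List.drop_succ_cons,
        List.drop_zero, zero_add]
      ring
  | succ p ih =>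
    match l, hl with
    | a :: l, hl =>
      have h : (fun t => cup (p + 1) φ ψ (a :: t)) = cup p (fun t => φ (a :: t)) ψ := by
        funext t; simp [cup]
      rw [coboundary, h, ih _ (by simpa using hl)]
      simp only [cup, coboundary, List.take_succ_cons, List.drop_succ_cons]
      ring

/-- The cup product of a finite family of `q`-cochains. -/
def cupProd (q : ℕ) {N : ℕ} (u : Fin N → List X → R) (l : List X) : R :=
  ∏ j : Fin N, u j ((l.drop (j * q)).take (q + 1))

theorem cupProd_succ (q : ℕ) {N : ℕ} (u : Fin (N + 1) → List X → R) :
    cupProd q u = cup q (u 0) (cupProd q (Fin.tail u)) := by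
  funext l
  simp only [cupProd, cup, Fin.prod_univ_succ, Fin.val_zero, zero_mul, List.drop_zero,
    Fin.val_succ, List.drop_drop, Fin.tail]
  simp only [add_mul, one_mul, add_comm]

theorem coboundary_cupProd_eq_zero {S : List X → Prop} (hS : ∀ {l t}, t.Sublist l → S l → S t)
    {q N : ℕ} {u : Fin N → List X → R}
    (hu : ∀ j l, S l → l.length = q + 2 → coboundary (u j) l = 0) {l : List X} (hl : S l)
    (hlen : l.length = N * q + 2) : coboundary (cupProd q u) l = 0 := by
  induction N generalizing l with
  | zero =>
    obtain ⟨a, b, rfl⟩ := List.length_eq_two.1 (hlen.trans (by simp))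
    simp [coboundary, cupProd]
  | succ N ih =>
    rw [add_mul, one_mul] at hlen
    have h_head : coboundary (u 0) (l.take (q + 2)) = 0 :=
      hu 0 _ (hS (List.take_sublist ..) hl) (by rw [List.length_take]; omega)
    have h_tail : coboundary (cupProd q (Fin.tail u)) (l.drop q) = 0 :=
      ih (fun j => hu j.succ) (hS (List.drop_sublist ..) hl) (by rw [List.length_drop]; omega)
    rw [cupProd_succ, coboundary_cup _ _ (by omega), cup, cup, h_head, h_tail]
    ring

theorem exists_cupProd_sub_cupProd_eq_coboundary {S : List X → Prop}
    (hS : ∀ {l t}, t.Sublist l → S l → S t) {q N : ℕ} (hq : q ≠ 0)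
    {u u' w : Fin N → List X → R}
    (hu : ∀ j l, S l → l.length = q + 2 → coboundary (u j) l = 0)
    (hu' : ∀ j l, S l → l.length = q + 2 → coboundary (u' j) l = 0)
    (hw : ∀ j l, S l → l.length = q + 1 → u j l - u' j l = coboundary (w j) l) :
    ∃ W : List X → R, ∀ l, S l → l.length = N * q + 1 →
      cupProd q u l - cupProd q u' l = coboundary W l := by
  obtain ⟨p, rfl⟩ := Nat.exists_eq_succ_of_ne_zero hq
  induction N with
  | zero => exact ⟨fun _ => 0, fun l _ _ => by simp [cupProd, coboundary_zero]⟩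
  | succ N ih =>
    obtain ⟨W, hW⟩ := ih (u := Fin.tail u) (u' := Fin.tail u') (w := Fin.tail w)
      (fun j => hu j.succ) (fun j => hu' j.succ) (fun j => hw j.succ)
    rcases N.eq_zero_or_pos with rfl | hN
    · refine ⟨w 0, fun l hl hlen => ?_⟩
      rw [zero_add, one_mul] at hlen
      simpa [cupProd, List.take_of_length_le hlen.le] using hw 0 l hl hlen
    -- `u₀ ∪ P - u₀' ∪ P' = δw₀ ∪ P + u₀' ∪ (P - P')`
    refine ⟨fun l => cup p (w 0) (cupProd (p + 1) (Fin.tail u)) l +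
      (-1) ^ (p + 1) * cup (p + 1) (u' 0) W l, fun l hl hlen => ?_⟩
    have hNp : p + 1 ≤ N * (p + 1) := Nat.le_mul_of_pos_left _ hN
    rw [Nat.succ_eq_add_one, add_mul, one_mul] at hlen
    have h_tail : coboundary (cupProd (p + 1) (Fin.tail u)) (l.drop p) = 0 :=
      coboundary_cupProd_eq_zero hS (u := Fin.tail u) (fun j => hu j.succ)
        (hS (List.drop_sublist ..) hl) (by rw [List.length_drop]; omega)
    have h_head : coboundary (u' 0) (l.take (p + 1 + 2)) = 0 :=
      hu' 0 _ (hS (List.take_sublist ..) hl) (by rw [List.length_take]; omega)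
    have h_diff_head := hw 0 (l.take (p + 1 + 1)) (hS (List.take_sublist ..) hl)
      (by rw [List.length_take]; omega)
    have h_diff_tail := hW (l.drop (p + 1)) (hS (List.drop_sublist ..) hl)
      (by rw [List.length_drop, Nat.succ_eq_add_one]; omega)
    have h_sign : (-1 : R) ^ (p + 1) * (-1) ^ (p + 1) = 1 := by rw [← mul_pow]; simp
    rw [coboundary_add, coboundary_const_mul, coboundary_cup _ _ (by omega),
      coboundary_cup _ _ (by omega), cupProd_succ, cupProd_succ]
    simp only [cup, h_tail, h_head, ← h_diff_tail, ← h_diff_head]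
    linear_combination -u' 0 (l.take (p + 1 + 1)) *
      (cupProd (p + 1) (Fin.tail u) (l.drop (p + 1)) -
        cupProd (p + 1) (Fin.tail u') (l.drop (p + 1))) * h_sign

end Cochains

/-! ### The fundamental cycle of the discrete torus -/

section TorusCycle

variable {D n L : ℕ}

/-- The vertices of the Kuhn simplex in the unit cube of the discrete torus at `v` that belongs to
the permutation `τ`: the `s`-th one is obtained from `v` by a unit step in the directions
`τ 0, …, τ (s - 1)`. -/
def kuhnVertex (v : Fin D → ZMod L) (τ : Equiv.Perm (Fin D)) (s : ℕ) : Fin D → ZMod L :=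
  fun c => v c + if (τ.symm c : ℕ) < s then 1 else 0

/-- The Kuhn simplex of `v` and `τ` as the list of its vertices. -/
def kuhnSimplex (v : Fin D → ZMod L) (τ : Equiv.Perm (Fin D)) : List (Fin D → ZMod L) :=
  List.ofFn fun k : Fin (D + 1) => kuhnVertex v τ k

theorem kuhnVertex_mul_swap (v : Fin (n + 1) → ZMod L) (τ : Equiv.Perm (Fin (n + 1)))
    {i : Fin n} {s : ℕ} (hs : s ≠ i + 1) :
    kuhnVertex v (τ * Equiv.swap i.castSucc i.succ) s = kuhnVertex v τ s := by
  funext c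
  have h_lt : (Equiv.swap i.castSucc i.succ (τ.symm c) : ℕ) < s ↔ (τ.symm c : ℕ) < s := by
    rw [Equiv.swap_apply_def]
    split_ifs with h h
    · simp only [h, Fin.val_succ, Fin.val_castSucc]; omega
    · simp only [h, Fin.val_succ, Fin.val_castSucc]; omega
    · rfl
  have h_symm : (τ * Equiv.swap i.castSucc i.succ).symm c =
      Equiv.swap i.castSucc i.succ (τ.symm c) := rfl
  simp only [kuhnVertex, h_symm, h_lt]

theorem kuhnVertex_mul_finRotate (v : Fin (n + 1) → ZMod L) (τ : Equiv.Perm (Fin (n + 1)))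
    {s : ℕ} (hs : s ≤ n) :
    kuhnVertex (v + Pi.single (τ 0) 1) (τ * finRotate (n + 1)) s = kuhnVertex v τ (s + 1) := by
  funext c
  obtain ⟨x, rfl⟩ := (τ * finRotate (n + 1)).surjective c
  have h_symm : (τ * finRotate (n + 1)).symm (τ (finRotate (n + 1) x)) = x :=
    Equiv.symm_apply_apply _ x
  simp only [kuhnVertex, Pi.add_apply, Equiv.symm_apply_apply, Equiv.Perm.mul_apply, h_symm,
    Pi.single_apply, EmbeddingLike.apply_eq_iff_eq, add_assoc, add_right_inj]
  rcases eq_or_ne x (Fin.last n) with rfl | hx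
  · simp; omega
  · have h_val : (finRotate (n + 1) x : ℕ) = x + 1 := coe_finRotate_of_ne_last hx
    have h_ne : finRotate (n + 1) x ≠ 0 := fun h => by simp [h] at h_val
    rw [if_neg h_ne, h_val]
    simp

variable [NeZero L]

/-- The value of a cochain on the fundamental cycle of the discrete torus `(ℤ/L)^D`, the signed sum
of all Kuhn simplices. -/
def torusEval (φ : List (Fin D → ZMod L) → ℤ) : ℤ :=
  ∑ τ : Equiv.Perm (Fin D), ∑ v : Fin D → ZMod L, (Equiv.Perm.sign τ : ℤ) * φ (kuhnSimplex v τ)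

/-- The value of a cochain on the signed sum of the `i`-th faces of all Kuhn simplices. -/
def torusFaceEval (φ : List (Fin (n + 1) → ZMod L) → ℤ) (i : Fin (n + 2)) : ℤ :=
  ∑ τ : Equiv.Perm (Fin (n + 1)), ∑ v : Fin (n + 1) → ZMod L,
    (Equiv.Perm.sign τ : ℤ) * φ (List.ofFn fun k => kuhnVertex v τ (i.succAbove k))

theorem torusEval_coboundary_eq_sum (φ : List (Fin (n + 1) → ZMod L) → ℤ) :
    torusEval (coboundary φ) = ∑ i : Fin (n + 2), (-1) ^ (i : ℕ) * torusFaceEval φ i := by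
  simp only [torusEval, torusFaceEval, kuhnSimplex, coboundary_ofFn, Finset.mul_sum]
  rw [Finset.sum_congr rfl fun τ _ => Finset.sum_comm, Finset.sum_comm]
  refine Finset.sum_congr rfl fun i _ => Finset.sum_congr rfl fun τ _ =>
    Finset.sum_congr rfl fun v _ => ?_
  rw [smul_eq_mul]
  ring

theorem torusFaceEval_castSucc_succ (φ : List (Fin (n + 1) → ZMod L) → ℤ) (i : Fin n) :
    torusFaceEval φ i.succ.castSucc = 0 := by
  suffices h : torusFaceEval φ i.succ.castSucc = -torusFaceEval φ i.succ.castSucc by omega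
  have h_face (v) (τ : Equiv.Perm (Fin (n + 1))) (k : Fin (n + 1)) :
      kuhnVertex (L := L) v (τ * Equiv.swap i.castSucc i.succ) (i.succ.castSucc.succAbove k) =
        kuhnVertex v τ (i.succ.castSucc.succAbove k) :=
    kuhnVertex_mul_swap v τ fun h => Fin.succAbove_ne i.succ.castSucc k (Fin.ext h)
  have h_ne : i.castSucc ≠ i.succ := Fin.castSucc_lt_succ.ne
  conv_lhs => rw [torusFaceEval, ← Equiv.sum_comp (Equiv.mulRight (Equiv.swap i.castSucc i.succ))]
  simp only [torusFaceEval, ← Finset.sum_neg_distrib, Equiv.coe_mulRight, h_face,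
    Equiv.Perm.sign_mul, Equiv.Perm.sign_swap h_ne, mul_neg, mul_one, Units.val_neg, neg_mul]

theorem torusFaceEval_last (φ : List (Fin (n + 1) → ZMod L) → ℤ) :
    torusFaceEval φ (Fin.last (n + 1)) = (-1) ^ n * torusFaceEval φ 0 := by
  simp only [torusFaceEval]
  rw [← Equiv.sum_comp (Equiv.mulRight (finRotate (n + 1))), Finset.mul_sum]
  refine Finset.sum_congr rfl fun τ _ => ?_
  rw [← Equiv.sum_comp (Equiv.addRight (Pi.single (τ 0) 1)), Finset.mul_sum]
  refine Finset.sum_congr rfl fun v _ => ?_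
  have h_face (k : Fin (n + 1)) :
      kuhnVertex (v + Pi.single (τ 0) 1) (τ * finRotate (n + 1))
        ((Fin.last (n + 1)).succAbove k) = kuhnVertex v τ ((0 : Fin (n + 2)).succAbove k) := by
    rw [Fin.succAbove_last, Fin.succAbove_zero, Fin.val_castSucc, Fin.val_succ]
    exact kuhnVertex_mul_finRotate v τ (Nat.lt_succ_iff.1 k.2)
  simp only [Equiv.coe_mulRight, Equiv.coe_addRight, h_face, Equiv.Perm.sign_mul, sign_finRotate]
  push_cast
  ring

theorem torusEval_coboundary (hD : D ≠ 0) (φ : List (Fin D → ZMod L) → ℤ) :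
    torusEval (coboundary φ) = 0 := by
  obtain ⟨n, rfl⟩ := Nat.exists_eq_succ_of_ne_zero hD
  rw [torusEval_coboundary_eq_sum, Fin.sum_univ_castSucc, Fin.sum_univ_succ]
  have h_inner (i : Fin n) :
      (-1) ^ (i.succ.castSucc : ℕ) * torusFaceEval φ i.succ.castSucc = 0 := by
    rw [torusFaceEval_castSucc_succ, mul_zero]
  rw [Finset.sum_eq_zero fun i _ => h_inner i, torusFaceEval_last, Fin.castSucc_zero]
  have h_sign : (-1 : ℤ) ^ n * (-1) ^ n = 1 := by rw [← mul_pow]; simp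
  simp only [Fin.val_zero, Fin.val_last, pow_succ]
  linear_combination -torusFaceEval φ 0 * h_sign

end TorusCycle

/-! ### The simplicial sphere and labellings -/

section SimplexCocycle

variable {q : ℕ}

/-- The `q`-cochain on the vertex set `{0, …, q + 1}` that represents the generator of the
cohomology of the boundary of the `(q + 1)`-simplex: it is the sign of a permutation of
`1, …, q + 1` and `0` on all other lists. -/
def simplexCocycle (q : ℕ) (l : List (Fin (q + 2))) : ℤ :=
  Matrix.det <| .of fun i j : Fin (q + 1) => if l[(i : ℕ)]? = some j.succ then (1 : ℤ) else 0

theorem simplexCocycle_ofFn (x : Fin (q + 1) → Fin (q + 2)) :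
    simplexCocycle q (List.ofFn x) =
      Matrix.det (.of fun i j : Fin (q + 1) => if x i = j.succ then (1 : ℤ) else 0) := by
  unfold simplexCocycle
  congr 1
  funext i j
  simp [-List.ofFn_succ, Nat.lt_succ_iff.1 i.2]

theorem coboundary_simplexCocycle_ofFn (x : Fin (q + 2) → Fin (q + 2)) :
    coboundary (simplexCocycle q) (List.ofFn x) =
      Matrix.det (.of fun i c : Fin (q + 2) =>
        if c = 0 then (1 : ℤ) else if x i = c then 1 else 0) := by
  rw [coboundary_ofFn, Matrix.det_succ_column_zero]
  refine Finset.sum_congr rfl fun i _ => ?_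
  rw [simplexCocycle_ofFn, Matrix.of_apply, smul_eq_mul, if_pos rfl, mul_one]
  congr 2

theorem coboundary_simplexCocycle_eq_zero {l : List (Fin (q + 2))} (hl : l.length = q + 2)
    {j : Fin (q + 2)} (hj : j ∉ l) : coboundary (simplexCocycle q) l = 0 := by
  obtain ⟨x, rfl⟩ : ∃ x : Fin (q + 2) → Fin (q + 2), l = List.ofFn x :=
    ⟨fun i => l.get (Fin.cast hl.symm i), List.ext_get (by simp [hl]) (by simp [-List.ofFn_succ])⟩
  have hx (i) : x i ≠ j := fun h => hj (List.mem_ofFn.2 ⟨i, h⟩)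
  rw [coboundary_simplexCocycle_ofFn]
  rcases eq_or_ne j 0 with rfl | hj0
  · -- The columns `1, …, q + 1` add up to the column `0`.
    rw [← Matrix.exists_mulVec_eq_zero_iff]
    refine ⟨Fin.cons (-1) fun _ => 1, fun h => by simpa using congrFun h 0, funext fun i => ?_⟩
    obtain ⟨c, hc⟩ := Fin.exists_succ_eq.2 (hx i)
    simp [Matrix.mulVec, dotProduct, Fin.sum_univ_succ, ← hc]
  · exact Matrix.det_eq_zero_of_column_eq_zero j fun i => by simp [hj0, hx i]

theorem injective_and_ne_zero_of_simplexCocycle_ne_zero {x : Fin (q + 1) → Fin (q + 2)}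
    (h : simplexCocycle q (List.ofFn x) ≠ 0) : Function.Injective x ∧ ∀ i, x i ≠ 0 := by
  rw [simplexCocycle_ofFn] at h
  refine ⟨fun a b hab => ?_, fun i hi => h ?_⟩
  · by_contra hne
    exact h (Matrix.det_zero_of_row_eq hne (funext fun c => by simp [hab]))
  · exact Matrix.det_eq_zero_of_row_eq_zero i fun j => by simp [hi, (Fin.succ_ne_zero j).symm]

theorem simplexCocycle_ofFn_succ : simplexCocycle q (List.ofFn Fin.succ) = 1 := by
  rw [simplexCocycle_ofFn, ← Matrix.det_one (n := Fin (q + 1))]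
  congr 1
  funext i j
  simp [Matrix.one_apply]

/-- The difference of the pullbacks of the simplex cocycle along two labellings. -/
def labelDiff {X : Type*} (f g : X → Fin (q + 2)) (l : List X) : ℤ :=
  simplexCocycle q (l.map f) - simplexCocycle q (l.map g)

theorem coboundary_labelDiff_eq_zero {X : Type*} {f g : X → Fin (q + 2)} {l : List X}
    (hl : l.length = q + 2) {i j : Fin (q + 2)} (hf : ∀ x ∈ l, f x ≠ i) (hg : ∀ x ∈ l, g x ≠ j) :
    coboundary (labelDiff f g) l = 0 := by
  have hfi : coboundary (simplexCocycle q) (l.map f) = 0 :=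
    coboundary_simplexCocycle_eq_zero (by simpa using hl) (j := i) (by simpa using hf)
  have hgj : coboundary (simplexCocycle q) (l.map g) = 0 :=
    coboundary_simplexCocycle_eq_zero (by simpa using hl) (j := j) (by simpa using hg)
  change coboundary (fun t => _ - _) l = 0
  rw [coboundary_sub, coboundary_comp_map, coboundary_comp_map, hfi, hgj, sub_zero]

theorem simplexCocycle_map_sub_eq_coboundary {X : Type*} (lam : ℕ → X → Fin (q + 2)) {n : ℕ}
    {l : List X} (hl : l.length = q + 1)
    (h : ∀ k < n, ∃ j, ∀ x ∈ l, lam k x ≠ j ∧ lam (k + 1) x ≠ j) :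
    simplexCocycle q (l.map (lam n)) - simplexCocycle q (l.map (lam 0)) =
      coboundary (fun t => ∑ k ∈ Finset.range n,
        prism (lam k) (lam (k + 1)) (simplexCocycle q) t) l := by
  rw [coboundary_sum, ← Finset.sum_range_sub fun k => simplexCocycle q (l.map (lam k))]
  refine Finset.sum_congr rfl fun k hk => ?_
  obtain ⟨j, hj⟩ := h k (Finset.mem_range.1 hk)
  rw [← coboundary_prism_add_prism_coboundary, prism_eq_zero, add_zero]
  refine fun t ht hlen => coboundary_simplexCocycle_eq_zero (j := j) (by omega) fun hjt => ?_
  obtain ⟨x, hx, h | h⟩ := ht j hjt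
  exacts [(hj x hx).1 h.symm, (hj x hx).2 h.symm]

end SimplexCocycle

section DiscreteTorus

/-- The vertices of the unit cube of the discrete torus at `v`. -/
def unitCube {D L : ℕ} (v : Fin D → ZMod L) : Set (Fin D → ZMod L) :=
  {x | ∀ c, x c = v c ∨ x c = v c + 1}

theorem kuhnVertex_mem_unitCube {D L : ℕ} (v : Fin D → ZMod L) (τ : Equiv.Perm (Fin D)) (s : ℕ) :
    kuhnVertex v τ s ∈ unitCube v := fun c => by
  unfold kuhnVertex
  split_ifs
  exacts [Or.inr rfl, Or.inl (add_zero _)]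

theorem torusEval_cupProd_labelDiff_eq_zero {q N L : ℕ} [NeZero L] (hq : q ≠ 0)
    {f g : Fin N → (Fin (N * q) → ZMod L) → Fin (q + 2)}
    (hf : ∀ j v, ∃ i, ∀ x ∈ unitCube v, f j x ≠ i) (hg : ∀ j v, ∃ i, ∀ x ∈ unitCube v, g j x ≠ i)
    (w : Fin N → List (Fin (N * q) → ZMod L) → ℤ)
    (hw : ∀ v, ∃ j, ∀ l : List _, (∀ x ∈ l, x ∈ unitCube v) → l.length = q + 1 →
      labelDiff (f j) (g j) l = coboundary (w j) l) :
    torusEval (cupProd q fun j => labelDiff (f j) (g j)) = 0 := by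
  set u : Fin N → List (Fin (N * q) → ZMod L) → ℤ := fun j => labelDiff (f j) (g j)
  set u' : Fin N → List (Fin (N * q) → ZMod L) → ℤ := fun j t => u j t - coboundary (w j) t
  have hu : ∀ j l, (∃ v, ∀ x ∈ l, x ∈ unitCube v) → l.length = q + 2 →
      coboundary (u j) l = 0 := by
    rintro j l ⟨v, hv⟩ hl
    obtain ⟨a, ha⟩ := hf j v
    obtain ⟨b, hb⟩ := hg j v
    exact coboundary_labelDiff_eq_zero hl (fun x hx => ha x (hv x hx)) fun x hx => hb x (hv x hx)
  obtain ⟨W, hW⟩ := exists_cupProd_sub_cupProd_eq_coboundary (u := u) (u' := u') (w := w)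
    (S := fun l => ∃ v, ∀ x ∈ l, x ∈ unitCube v)
    (fun hlt ⟨v, hv⟩ => ⟨v, fun x hx => hv x (hlt.subset hx)⟩) hq hu
    (fun j l hl hlen => by
      rw [coboundary_sub, coboundary_coboundary, sub_zero, hu j l hl hlen])
    fun j l _ _ => sub_sub_cancel _ _
  obtain ⟨j₀, -⟩ := hw 0
  rw [← torusEval_coboundary (Nat.mul_ne_zero j₀.pos.ne' hq) W]
  refine Finset.sum_congr rfl fun τ _ => Finset.sum_congr rfl fun v _ => ?_
  obtain ⟨j, hj⟩ := hw v
  have h_cube : ∀ x ∈ kuhnSimplex v τ, x ∈ unitCube v := by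
    simp only [kuhnSimplex, List.mem_ofFn, forall_exists_index]
    rintro _ s rfl
    exact kuhnVertex_mem_unitCube v τ s
  have h_len : (kuhnSimplex v τ).length = N * q + 1 := List.length_ofFn
  have h_j : (j + 1) * q ≤ N * q := Nat.mul_le_mul_right q j.2
  have h_factor : u' j (((kuhnSimplex v τ).drop (j * q)).take (q + 1)) = 0 := by
    refine sub_eq_zero.2 (hj _ (fun x hx => h_cube x ?_) ?_)
    · exact ((List.take_sublist ..).trans (List.drop_sublist ..)).subset hx
    · rw [List.length_take, List.length_drop, h_len]
      rw [add_mul, one_mul] at h_j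
      omega
  have h_prod : cupProd q u' (kuhnSimplex v τ) = 0 :=
    Finset.prod_eq_zero (Finset.mem_univ j) h_factor
  rw [← hW _ ⟨v, h_cube⟩ h_len, h_prod, sub_zero]

end DiscreteTorus

/-! ### Evaluation of a product of labelling cocycles -/

section Evaluation

variable {N q L : ℕ}

theorem val_symm_finProdFinEquiv_eq_iff {τ : Equiv.Perm (Fin (N * q))} {b j : Fin N}
    {i k : Fin q} : (τ.symm (finProdFinEquiv (b, i)) : ℕ) = j * q + k ↔
      τ (finProdFinEquiv (j, k)) = finProdFinEquiv (b, i) := by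
  rw [eq_comm (a := τ _), ← Equiv.symm_apply_eq, Fin.ext_iff, finProdFinEquiv_apply_val,
    mul_comm q, add_comm (k : ℕ)]

/-- The `b`-th block of `q` coordinates of an `Nq`-tuple. -/
def block {α : Type*} (b : Fin N) (x : Fin (N * q) → α) : Fin q → α :=
  fun i => x (finProdFinEquiv (b, i))

theorem block_kuhnVertex_succ (v : Fin (N * q) → ZMod L) (τ : Equiv.Perm (Fin (N * q)))
    (j b : Fin N) (k i : Fin q) :
    block b (kuhnVertex v τ (j * q + k.succ)) i = block b (kuhnVertex v τ (j * q + k.castSucc)) i ∨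
      τ (finProdFinEquiv (j, k)) = finProdFinEquiv (b, i) ∧
        block b (kuhnVertex v τ (j * q + k.castSucc)) i = v (finProdFinEquiv (b, i)) ∧
        block b (kuhnVertex v τ (j * q + k.succ)) i = v (finProdFinEquiv (b, i)) + 1 := by
  rw [← val_symm_finProdFinEquiv_eq_iff]
  simp only [block, kuhnVertex, Fin.val_succ, Fin.val_castSucc]
  rcases lt_trichotomy (τ.symm (finProdFinEquiv (b, i)) : ℕ) (j * q + k) with h | h | h
  · left
    rw [if_pos (by omega), if_pos h]
  · right
    simp [h]
  · left
    rw [if_neg (by omega), if_neg (by omega)]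

/-- The value of the pullback of the simplex cocycle along the labelling `G` of the `b`-th block on
the `j`-th segment of `q + 1` consecutive vertices of a Kuhn simplex. -/
def blockEval (v : Fin (N * q) → ZMod L) (τ : Equiv.Perm (Fin (N * q))) (j b : Fin N)
    (G : (Fin q → ZMod L) → Fin (q + 2)) : ℤ :=
  simplexCocycle q (List.ofFn fun k : Fin (q + 1) => G (block b (kuhnVertex v τ (j * q + k))))

theorem drop_take_kuhnSimplex {D : ℕ} (v : Fin D → ZMod L) (τ : Equiv.Perm (Fin D)) {a : ℕ}
    (h : a + q ≤ D) : ((kuhnSimplex v τ).drop a).take (q + 1) =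
      List.ofFn fun k : Fin (q + 1) => kuhnVertex v τ (a + k) := by
  apply List.ext_getElem
  · simp [kuhnSimplex, -List.ofFn_succ]; omega
  · simp [kuhnSimplex, -List.ofFn_succ]

theorem torusEval_cupProd_labelDiff_block [NeZero L]
    (F G : Fin N → (Fin q → ZMod L) → Fin (q + 2)) (ef eg : Fin N → Fin N) :
    torusEval (cupProd q fun j =>
        labelDiff (fun x => F j (block (ef j) x)) (fun x => G j (block (eg j) x))) =
      ∑ τ : Equiv.Perm (Fin (N * q)), ∑ v : Fin (N * q) → ZMod L, (Equiv.Perm.sign τ : ℤ) *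
        ∏ j, (blockEval v τ j (ef j) (F j) - blockEval v τ j (eg j) (G j)) := by
  refine Finset.sum_congr rfl fun τ _ => Finset.sum_congr rfl fun v _ =>
    congrArg _ (Finset.prod_congr rfl fun j _ => ?_)
  have h_le : (j : ℕ) * q + q ≤ N * q :=
    (Nat.succ_mul j q).symm.trans_le (Nat.mul_le_mul_right q j.2)
  simp only [drop_take_kuhnSimplex v τ h_le, labelDiff, List.map_ofFn]
  rfl

theorem fst_eq_of_blockEval_ne_zero {v : Fin (N * q) → ZMod L} {τ : Equiv.Perm (Fin (N * q))}
    {j b : Fin N} {G : (Fin q → ZMod L) → Fin (q + 2)} (h : blockEval v τ j b G ≠ 0) (k : Fin q) :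
    (finProdFinEquiv.symm (τ (finProdFinEquiv (j, k)))).1 = b := by
  by_contra h_ne
  refine (Fin.castSucc_lt_succ (i := k)).ne
    ((injective_and_ne_zero_of_simplexCocycle_ne_zero h).1 (congrArg G (funext fun i => ?_)))
  rcases block_kuhnVertex_succ v τ j b k i with h_eq | ⟨h_perm, -⟩
  · exact h_eq.symm
  · exact absurd (by rw [h_perm, Equiv.symm_apply_apply]) h_ne

/-- The combinatorial behaviour of the labelling of the model sphere `(S¹)^q → S^q` by the first
negative coordinate. The set `neg` is the arc of the circle on which a coordinate is negative, which
is left at `t₀` only; the label `0` is taken where the last coordinate is nonnegative. -/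
structure IsModelLabelling (neg : Set (ZMod L)) (t₀ : ZMod L)
    (H : (Fin q → ZMod L) → Fin (q + 2)) : Prop where
  notMem_of_lt {t c i} : H t = Fin.succ c → Fin.castSucc i < c → t i ∉ neg
  mem_of_eq {t i} : H t = (Fin.castSucc i).succ → t i ∈ neg
  notMem_add_one {t i} : H t ≠ 0 → t i ∉ neg → t i + 1 ∉ neg
  exit_iff {t} : t ∈ neg ∧ t + 1 ∉ neg ↔ t = t₀
  ne_zero {t} : (∀ i, t i = t₀ ∨ t i = t₀ + 1) → H t ≠ 0

namespace IsModelLabelling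

variable {neg : Set (ZMod L)} {t₀ : ZMod L} {H : (Fin q → ZMod L) → Fin (q + 2)}
  {v : Fin (N * q) → ZMod L} {τ : Equiv.Perm (Fin (N * q))} {j b : Fin N}

theorem label_kuhnVertex_eq_succ (hH : IsModelLabelling neg t₀ H) (h : blockEval v τ j b H ≠ 0)
    (k : Fin (q + 1)) : H (block b (kuhnVertex v τ (j * q + k))) = k.succ := by
  obtain ⟨h_inj, h_ne⟩ := injective_and_ne_zero_of_simplexCocycle_ne_zero h
  choose y hy using fun k => Fin.exists_succ_eq.2 (h_ne k)
  have hy_inj : Function.Injective y := fun a b hab => h_inj ((hy a).symm.trans (hab ▸ hy b))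
  have hy_mono : StrictMono y := by
    refine Fin.strictMono_iff_lt_succ.2 fun k => ?_
    by_contra h_nlt
    have h_lt : y k.succ < y k.castSucc := (not_lt.1 h_nlt).lt_of_ne
      fun h => (Fin.castSucc_lt_succ (i := k)).ne' (hy_inj h)
    obtain ⟨i, hi⟩ := Fin.exists_castSucc_eq.2 (h_lt.trans_le (Fin.le_last _)).ne
    have h_old := hH.notMem_of_lt (hy k.castSucc).symm (hi ▸ h_lt)
    have h_new := hH.mem_of_eq (i := i) (hi ▸ (hy k.succ).symm)
    have h_old' := hH.notMem_add_one (h_ne k.castSucc) h_old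
    rcases block_kuhnVertex_succ v τ j b k i with h_eq | ⟨-, h₀, h₁⟩
    · exact h_old (h_eq ▸ h_new)
    · exact h_old' (by rwa [h₀, ← h₁])
  have hy_id : y = id := (hy_mono.range_inj strictMono_id).1 <| by
    rw [(Finite.injective_iff_surjective.1 hy_inj).range_eq, Set.range_id]
  rw [← hy, hy_id, id]

theorem perm_eq_of_blockEval_ne_zero (hH : IsModelLabelling neg t₀ H)
    (h : blockEval v τ j b H ≠ 0) (k : Fin q) :
    τ (finProdFinEquiv (j, k)) = finProdFinEquiv (b, k) ∧ v (finProdFinEquiv (b, k)) = t₀ := by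
  have h_mem := hH.mem_of_eq (hH.label_kuhnVertex_eq_succ h k.castSucc)
  have h_notMem := hH.notMem_of_lt (hH.label_kuhnVertex_eq_succ h k.succ) Fin.castSucc_lt_succ
  rcases block_kuhnVertex_succ v τ j b k k with h_eq | ⟨h_perm, h₀, h₁⟩
  · exact absurd (h_eq ▸ h_mem) h_notMem
  · exact ⟨h_perm, hH.exit_iff.1 ⟨h₀ ▸ h_mem, h₁ ▸ h_notMem⟩⟩

theorem blockEval_eq_one (hH : IsModelLabelling neg t₀ H)
    (h : ∀ k, τ (finProdFinEquiv (j, k)) = finProdFinEquiv (b, k) ∧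
      v (finProdFinEquiv (b, k)) = t₀) : blockEval v τ j b H = 1 := by
  obtain ⟨h_mem, h_notMem⟩ := hH.exit_iff.2 rfl
  rw [← simplexCocycle_ofFn_succ (q := q), blockEval]
  congr 2
  funext k
  have h_apply (i : Fin q) : block b (kuhnVertex v τ (j * q + k)) i =
      if (i : ℕ) < k then t₀ + 1 else t₀ := by
    simp only [block, kuhnVertex, (h i).2, val_symm_finProdFinEquiv_eq_iff.2 (h i).1,
      add_lt_add_iff_left]
    split_ifs <;> simp
  have h_cube (i : Fin q) : block b (kuhnVertex v τ (j * q + k)) i = t₀ ∨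
      block b (kuhnVertex v τ (j * q + k)) i = t₀ + 1 := by
    rw [h_apply]
    split_ifs
    exacts [Or.inr rfl, Or.inl rfl]
  obtain ⟨c, hc⟩ := Fin.exists_succ_eq.2 (hH.ne_zero h_cube)
  rw [← hc]
  congr 1
  rcases lt_trichotomy c k with h_lt | h_eq | h_gt
  · obtain ⟨i, rfl⟩ := Fin.exists_castSucc_eq.2 (h_lt.trans_le (Fin.le_last _)).ne
    have := hH.mem_of_eq hc.symm
    rw [h_apply, if_pos (by exact h_lt)] at this
    exact absurd this h_notMem
  · exact h_eq
  · obtain ⟨i, hi⟩ := Fin.exists_castSucc_eq.2 (h_gt.trans_le (Fin.le_last _)).ne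
    have := hH.notMem_of_lt hc.symm (hi ▸ h_gt)
    rw [h_apply, if_neg (by simp [← hi])] at this
    exact absurd h_mem this

theorem blockEval_sub_blockEval (hH : IsModelLabelling neg t₀ H) (hq : q ≠ 0)
    {G : (Fin q → ZMod L) → Fin (q + 2)} {a b c : Fin N} (hab : a ≠ b) (hc : c = a ∨ c = b)
    (hG : c = b → G = H) (h : ∀ k, τ (finProdFinEquiv (j, k)) = finProdFinEquiv (c, k) ∧
      v (finProdFinEquiv (c, k)) = t₀) :
    blockEval v τ j a H - blockEval v τ j b G = if c = b then -1 else 1 := by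
  have h_other {b' : Fin N} {G'} (hb' : c ≠ b') : blockEval v τ j b' G' = 0 := by
    by_contra h_ne
    have := fst_eq_of_blockEval_ne_zero h_ne ⟨0, Nat.pos_of_ne_zero hq⟩
    rw [(h _).1, Equiv.symm_apply_apply] at this
    exact hb' this
  rcases hc with rfl | rfl
  · rw [hH.blockEval_eq_one h, h_other hab, if_neg hab, sub_zero]
  · rw [h_other hab.symm, hG rfl, hH.blockEval_eq_one h, if_pos rfl, zero_sub]

end IsModelLabelling

/-- The permutation `e` chooses one of the blocks `ef j` and `eg j` for every `j`. -/
def IsSelection {ι : Type*} (ef eg : ι → ι) (e : Equiv.Perm ι) : Prop :=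
  ∀ j, e j = ef j ∨ e j = eg j

/-- The permutation of the `N` blocks of `q` coordinates induced by a permutation of the blocks. -/
def blockPerm (q : ℕ) (e : Equiv.Perm (Fin N)) : Equiv.Perm (Fin (N * q)) :=
  finProdFinEquiv.permCongr (Equiv.prodCongrLeft fun _ => e)

@[simp]
theorem blockPerm_apply (e : Equiv.Perm (Fin N)) (j : Fin N) (k : Fin q) :
    blockPerm q e (finProdFinEquiv (j, k)) = finProdFinEquiv (e j, k) := by
  simp [blockPerm, Equiv.permCongr_apply]

theorem sign_blockPerm (hq : Even q) (e : Equiv.Perm (Fin N)) :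
    Equiv.Perm.sign (blockPerm q e) = 1 := by
  rw [blockPerm, Equiv.Perm.sign_permCongr, Equiv.Perm.sign_prodCongrLeft, Finset.prod_const,
    Finset.card_univ, Fintype.card_fin, Int.units_pow_eq_pow_mod_two, Nat.even_iff.1 hq, pow_zero]

section Selection

variable {neg : Set (ZMod L)} {t₀ : ZMod L} {H : (Fin q → ZMod L) → Fin (q + 2)}
  {G : Fin N → (Fin q → ZMod L) → Fin (q + 2)} {ef eg : Fin N → Fin N}

theorem exists_isSelection_of_blockEval_sub_ne_zero (hH : IsModelLabelling neg t₀ H) (hq : q ≠ 0)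
    (hG : ∀ e, IsSelection ef eg e → ∀ j, e j = eg j → G j = H) {v : Fin (N * q) → ZMod L}
    {τ : Equiv.Perm (Fin (N * q))}
    (h : ∀ j, blockEval v τ j (ef j) H - blockEval v τ j (eg j) (G j) ≠ 0) :
    ∃ e, IsSelection ef eg e ∧ τ = blockPerm q e ∧
      ∀ j k, v (finProdFinEquiv (e j, k)) = t₀ := by
  have h_choice (j) : ∃ b, (b = ef j ∧ blockEval v τ j b H ≠ 0) ∨
      (b = eg j ∧ blockEval v τ j b (G j) ≠ 0) := by
    by_contra! h_none
    exact h j (by rw [(h_none _).1 rfl, (h_none _).2 rfl, sub_zero])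
  choose b hb using h_choice
  have h_block (j k) : (finProdFinEquiv.symm (τ (finProdFinEquiv (j, k)))).1 = b j :=
    (hb j).elim (fun h => fst_eq_of_blockEval_ne_zero h.2 k)
      fun h => fst_eq_of_blockEval_ne_zero h.2 k
  have hb_surj : Function.Surjective b := fun a => by
    obtain ⟨c, hc⟩ := τ.surjective (finProdFinEquiv (a, (⟨0, Nat.pos_of_ne_zero hq⟩ : Fin q)))
    obtain ⟨⟨j, k⟩, rfl⟩ := finProdFinEquiv.surjective c
    exact ⟨j, by rw [← h_block j k, hc, Equiv.symm_apply_apply]⟩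
  set e : Equiv.Perm (Fin N) := Equiv.ofBijective b (Finite.surjective_iff_bijective.1 hb_surj)
  have he : IsSelection ef eg e := fun j => (hb j).imp And.left And.left
  have h_perm (j k) := hH.perm_eq_of_blockEval_ne_zero (v := v) (τ := τ) (j := j) (b := e j)
    ((hb j).elim And.right fun h => hG e he j h.1 ▸ h.2) k
  refine ⟨e, he, Equiv.ext fun c => ?_, fun j k => (h_perm j k).2⟩
  obtain ⟨⟨j, k⟩, rfl⟩ := finProdFinEquiv.surjective c
  rw [(h_perm j k).1, blockPerm_apply]

theorem prod_blockEval_sub_eq (hH : IsModelLabelling neg t₀ H) (hq : q ≠ 0)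
    (hne : ∀ j, ef j ≠ eg j) {e : Equiv.Perm (Fin N)} (he : IsSelection ef eg e)
    (hG : ∀ j, e j = eg j → G j = H) {v : Fin (N * q) → ZMod L}
    (hv : ∀ j k, v (finProdFinEquiv (e j, k)) = t₀) :
    ∏ j, (blockEval v (blockPerm q e) j (ef j) H - blockEval v (blockPerm q e) j (eg j) (G j)) =
      (-1) ^ Nat.card {j // e j = eg j} := by
  rw [Finset.prod_congr rfl fun j _ => hH.blockEval_sub_blockEval hq (hne j) (he j) (hG j)
    fun k => ⟨blockPerm_apply e j k, hv j k⟩, Finset.prod_ite, Finset.prod_const,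
    Finset.prod_const_one, mul_one, Nat.card_eq_fintype_card, Fintype.card_subtype]

theorem sum_ne_zero_of_forall_eq {ι : Type*} [Fintype ι] {f : ι → ℤ} {c : ℤ}
    (h : ∀ i, f i ≠ 0 → f i = c) {i : ι} (hi : f i ≠ 0) : ∑ i, f i ≠ 0 := by
  have h_term (i) : f i = if f i = 0 then 0 else c := by
    split_ifs with h₀
    exacts [h₀, h i h₀]
  rw [Finset.sum_congr rfl fun i _ => h_term i, Finset.sum_ite, Finset.sum_const_zero, zero_add,
    Finset.sum_const, nsmul_eq_mul]
  refine mul_ne_zero (Nat.cast_ne_zero.2 (Finset.card_ne_zero_of_mem (a := i) ?_)) (h i hi ▸ hi)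
  simpa using hi

theorem torusEval_cupProd_labelDiff_block_ne_zero [NeZero L] (hH : IsModelLabelling neg t₀ H)
    (hq : q ≠ 0) (hq_even : Even q) (hne : ∀ j, ef j ≠ eg j)
    (hG : ∀ e, IsSelection ef eg e → ∀ j, e j = eg j → G j = H) {n₀ : ℕ}
    (hcard : ∀ e, IsSelection ef eg e → Nat.card {j // e j = eg j} = n₀)
    (hex : ∃ e, IsSelection ef eg e) :
    torusEval (cupProd q fun j =>
      labelDiff (fun x => H (block (ef j) x)) (fun x => G j (block (eg j) x))) ≠ 0 := by
  rw [torusEval_cupProd_labelDiff_block (fun _ => H) G, ← Fintype.sum_prod_type']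
  obtain ⟨e₀, he₀⟩ := hex
  refine sum_ne_zero_of_forall_eq (c := (-1) ^ n₀) (fun ⟨τ, v⟩ h => ?_)
    (i := (blockPerm q e₀, fun _ => t₀)) ?_
  · obtain ⟨e, he, rfl, hv⟩ := exists_isSelection_of_blockEval_sub_ne_zero hH hq hG
      fun j => Finset.prod_ne_zero_iff.1 (right_ne_zero_of_mul h) j (Finset.mem_univ j)
    rw [sign_blockPerm hq_even, prod_blockEval_sub_eq hH hq hne he (hG e he) hv, hcard e he]
    simp
  · rw [sign_blockPerm hq_even,
      prod_blockEval_sub_eq hH hq hne he₀ (hG e₀ he₀) fun _ _ => rfl]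
    simp

end Selection

end Evaluation

/-! ### Labels of nonvanishing maps -/

section Label

open Filter Topology

variable {q : ℕ}

/-- The label of a vector of `ℝ^{q+1}`: it is `0` if the last coordinate is nonnegative and
otherwise `i + 1`, where `i` is the first index of a negative coordinate. On nonzero vectors this is
a simplicial approximation of the radial map to the boundary of the `(q + 1)`-simplex. -/
noncomputable def label (y : EuclideanSpace ℝ (Fin (q + 1))) : Fin (q + 2) :=
  open Classical in
  if h : y (Fin.last q) < 0 then (Fin.find (fun i => y i < 0) ⟨_, h⟩).succ else 0

theorem label_eq_zero_iff {y : EuclideanSpace ℝ (Fin (q + 1))} :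
    label y = 0 ↔ 0 ≤ y (Fin.last q) := by
  unfold label
  split_ifs with h
  · simpa [Fin.succ_ne_zero] using h
  · simpa using h

theorem label_eq_succ_iff {y : EuclideanSpace ℝ (Fin (q + 1))} {c : Fin (q + 1)} :
    label y = c.succ ↔ y (Fin.last q) < 0 ∧ y c < 0 ∧ ∀ i < c, 0 ≤ y i := by
  unfold label
  split_ifs with h
  · simp [h, Fin.find_eq_iff]
  · simp [h, (Fin.succ_ne_zero c).symm]

theorem label_smul (y : EuclideanSpace ℝ (Fin (q + 1))) {a : ℝ} (ha : 0 < a) :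
    label (a • y) = label y := by
  have h_neg (i) : (a • y) i < 0 ↔ y i < 0 := mul_neg_iff.trans (by simp [ha, ha.not_gt])
  simp only [label, h_neg]

theorem exists_eventually_label_ne {y : EuclideanSpace ℝ (Fin (q + 1))} (hy : y ≠ 0) :
    ∃ j, ∀ᶠ y' in 𝓝 y, label y' ≠ j := by
  have h_cont (i) : Tendsto (fun y' : EuclideanSpace ℝ (Fin (q + 1)) => y' i) (𝓝 y) (𝓝 (y i)) :=
    Continuous.tendsto (by fun_prop) y
  rcases lt_trichotomy (y (Fin.last q)) 0 with h | h | h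
  · refine ⟨0, ((h_cont _).eventually_lt_const h).mono fun y' h' h₀ => ?_⟩
    exact h'.not_ge (label_eq_zero_iff.1 h₀)
  · obtain ⟨i, hi⟩ : ∃ i, y i ≠ 0 := by
      by_contra! h_zero
      exact hy (by ext i; simpa using h_zero i)
    rcases hi.lt_or_gt with h_neg | h_pos
    · refine ⟨(Fin.last q).succ, ((h_cont i).eventually_lt_const h_neg).mono fun y' h' h₀ => ?_⟩
      have h_lt : i < Fin.last q := (Fin.le_last i).lt_of_ne fun h_eq => hi (h_eq ▸ h)
      exact h'.not_ge ((label_eq_succ_iff.1 h₀).2.2 i h_lt)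
    · refine ⟨i.succ, ((h_cont i).eventually_const_lt h_pos).mono fun y' h' h₀ => ?_⟩
      exact h'.not_gt (label_eq_succ_iff.1 h₀).2.1
  · refine ⟨Fin.last _, ((h_cont _).eventually_const_lt h).mono fun y' h' h₀ => ?_⟩
    exact Fin.last_pos.ne' (h₀.symm.trans (label_eq_zero_iff.2 h'.le))

/-- The punctured space `ℝ^q ∖ {0}`. -/
abbrev PuncturedSpace (q : ℕ) : Type :=
  {y : EuclideanSpace ℝ (Fin q) // y ≠ 0}

theorem exists_forall_mem_ball_label_ne {X : Type*} [PseudoMetricSpace X] {K : Set X}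
    (hK : IsCompact K) (φ : C(X, PuncturedSpace (q + 1))) :
    ∃ δ > 0, ∀ x ∈ K, ∃ j, ∀ x' ∈ Metric.ball x δ, label (φ x').1 ≠ j := by
  obtain ⟨δ, hδ, h⟩ := lebesgue_number_lemma_of_metric hK
    (c := fun j => interior {x | label (φ x).1 ≠ j}) (fun _ => isOpen_interior) fun x _ => by
      obtain ⟨j, hj⟩ := exists_eventually_label_ne (φ x).2
      exact mem_iUnion.2 ⟨j, mem_interior_iff_mem_nhds.2
        ((continuous_subtype_val.comp φ.continuous).continuousAt.eventually hj)⟩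
  exact ⟨δ, hδ, fun x hx => (h x hx).imp fun j hj x' hx' => interior_subset (hj hx')⟩

end Label

section Grid

open Filter Topology

variable {D q : ℕ}

/-- The inclusion of the discrete torus `(ℤ/L)^D` into the torus `(S¹)^D`. -/
noncomputable def gridPoint {L : ℕ} [NeZero L] (x : Fin D → ZMod L) : Fin D → Circle :=
  fun c => ZMod.toCircle (x c)

theorem eventually_dist_gridPoint_lt {δ : ℝ} (hδ : 0 < δ) : ∀ᶠ L : ℕ in atTop, ∀ [NeZero L],
    ∀ v, ∀ x ∈ unitCube (D := D) (L := L) v, dist (gridPoint x) (gridPoint v) < δ := by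
  have h_exp : Tendsto (fun L : ℕ => Circle.exp (2 * Real.pi / L)) atTop (𝓝 1) := by
    rw [← Circle.exp_zero]
    exact (Circle.exp.continuous.tendsto 0).comp (tendsto_const_div_atTop_nhds_zero_nat _)
  filter_upwards [h_exp (Metric.ball_mem_nhds 1 hδ)] with L hL _ v x hx
  have h_one : ZMod.toCircle (1 : ZMod L) = Circle.exp (2 * Real.pi / L) := by
    ext
    have := ZMod.toCircle_natCast (N := L) 1
    rw [Nat.cast_one] at this
    rw [this, Circle.coe_exp]
    push_cast
    ring_nf
  have h_dist (a b : Circle) : dist (a * b) a = dist b 1 := by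
    change dist ((a * b : Circle) : ℂ) a = dist (b : ℂ) (1 : Circle)
    rw [dist_eq_norm, dist_eq_norm, Circle.coe_mul, Circle.coe_one, ← mul_sub_one, norm_mul,
      Circle.norm_coe, one_mul]
  refine (dist_pi_lt_iff hδ).2 fun c => ?_
  unfold gridPoint
  rcases hx c with h | h
  · rwa [h, dist_self]
  · rw [h, AddChar.map_add_eq_mul, h_dist, h_one]
    exact hL

theorem eventually_exists_label_gridPoint_ne (φ : C(Fin D → Circle, PuncturedSpace (q + 1))) :
    ∀ᶠ L : ℕ in atTop, ∀ [NeZero L], ∀ v : Fin D → ZMod L, ∃ i, ∀ x ∈ unitCube v,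
      label (φ (gridPoint x)).1 ≠ i := by
  obtain ⟨δ, hδ, h⟩ := exists_forall_mem_ball_label_ne isCompact_univ φ
  filter_upwards [eventually_dist_gridPoint_lt hδ] with L hL _ v
  obtain ⟨i, hi⟩ := h (gridPoint v) trivial
  exact ⟨i, fun x hx => hi _ (hL v x hx)⟩

theorem exists_labels_of_homotopic {U C : Set (Fin D → Circle)} (hC : IsCompact C) (hCU : C ⊆ U)
    {φ ψ : C(Fin D → Circle, PuncturedSpace (q + 1))}
    (h : (φ.restrict U).Homotopic (ψ.restrict U)) :
    ∃ n : ℕ, ∀ᶠ L : ℕ in atTop, ∀ [NeZero L], ∃ lam : ℕ → (Fin D → ZMod L) → Fin (q + 2),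
      ∀ v, MapsTo gridPoint (unitCube v) C →
        (∀ x ∈ unitCube v, lam 0 x = label (φ (gridPoint x)).1 ∧
          lam n x = label (ψ (gridPoint x)).1) ∧
        ∀ k < n, ∃ j, ∀ x ∈ unitCube v, lam k x ≠ j ∧ lam (k + 1) x ≠ j := by
  classical
  obtain ⟨H⟩ := h
  have hK : IsCompact ((univ : Set I) ×ˢ ((↑) ⁻¹' C : Set U)) :=
    isCompact_univ.prod <| IsInducing.subtypeVal.isCompact_preimage_iff
      (by rwa [Subtype.range_coe]) |>.2 hC
  obtain ⟨δ, hδ, hδ_label⟩ := exists_forall_mem_ball_label_ne hK H.toContinuousMap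
  obtain ⟨n, hn⟩ := exists_nat_one_div_lt hδ
  set t : ℕ → I := fun k => projIcc 0 1 zero_le_one ((k : ℝ) / (n + 1 : ℕ))
  have ht (k) : dist (t (k + 1)) (t k) < δ := by
    refine ((LipschitzWith.projIcc zero_le_one).dist_le_mul _ _).trans_lt ?_
    have h_sub : (k + 1 : ℕ) / (n + 1 : ℕ) - (k : ℝ) / (n + 1 : ℕ) = 1 / ((n : ℝ) + 1) := by
      rw [← sub_div]
      push_cast
      ring
    rw [NNReal.coe_one, one_mul, Real.dist_eq, h_sub, abs_of_nonneg (by positivity)]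
    exact hn
  have ht_zero : t 0 = 0 := by simp [t]
  have ht_last : t (n + 1) = 1 := by
    simp only [t]
    rw [div_self (by positivity), projIcc_right]
    rfl
  refine ⟨n + 1, ?_⟩
  filter_upwards [eventually_dist_gridPoint_lt hδ] with L hL _
  refine ⟨fun k x => if hx : gridPoint x ∈ U then label (H (t k, ⟨_, hx⟩)).1 else 0,
    fun v hv => ⟨fun x hx => ?_, fun k _ => ?_⟩⟩
  · simp [hCU (hv hx), ht_zero, ht_last]
  · have hvC : gridPoint v ∈ C := hv fun _ => Or.inl rfl
    obtain ⟨j, hj⟩ := hδ_label (t k, ⟨_, hCU hvC⟩) ⟨trivial, hvC⟩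
    refine ⟨j, fun x hx => ?_⟩
    simp only [hCU (hv hx), dite_true]
    refine ⟨hj _ (max_lt ?_ (hL v x hx)), hj _ (max_lt (ht k) (hL v x hx))⟩
    rwa [dist_self]

theorem eventually_exists_labelDiff_eq_coboundary {U C : Set (Fin D → Circle)} (hC : IsCompact C)
    (hCU : C ⊆ U) {φ ψ : C(Fin D → Circle, PuncturedSpace (q + 1))}
    (h : (φ.restrict U).Homotopic (ψ.restrict U)) :
    ∀ᶠ L : ℕ in atTop, ∀ [NeZero L], ∃ w : List (Fin D → ZMod L) → ℤ,
      ∀ v, MapsTo gridPoint (unitCube v) C → ∀ l : List _, (∀ x ∈ l, x ∈ unitCube v) →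
        l.length = q + 1 → labelDiff (fun x => label (φ (gridPoint x)).1)
          (fun x => label (ψ (gridPoint x)).1) l = coboundary w l := by
  obtain ⟨n, hn⟩ := exists_labels_of_homotopic hC hCU h.symm
  filter_upwards [hn] with L hL _
  obtain ⟨lam, hlam⟩ := hL
  refine ⟨_, fun v hv l hl hlen => Eq.trans ?_
    (simplexCocycle_map_sub_eq_coboundary lam hlen (n := n) fun k hk => ?_)⟩
  · rw [labelDiff, List.map_congr_left fun x hx => ((hlam v hv).1 x (hl x hx)).1,
      List.map_congr_left fun x hx => ((hlam v hv).1 x (hl x hx)).2]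
  · obtain ⟨j, hj⟩ := (hlam v hv).2 k hk
    exact ⟨j, fun x hx => hj x (hl x hx)⟩

theorem eventually_torusEval_cupProd_labelDiff_eq_zero {N : ℕ} (hq : q ≠ 0)
    {φ ψ : Fin N → C(Fin (N * q) → Circle, PuncturedSpace (q + 1))}
    {U : Fin N → Set (Fin (N * q) → Circle)} (hU : ∀ j, IsOpen (U j)) (hU_cover : ⋃ j, U j = univ)
    (h : ∀ j, ((φ j).restrict (U j)).Homotopic ((ψ j).restrict (U j))) :
    ∀ᶠ L : ℕ in atTop, ∀ [NeZero L], torusEval (L := L) (cupProd q fun j =>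
      labelDiff (fun x => label (φ j (gridPoint x)).1) fun x => label (ψ j (gridPoint x)).1) =
        0 := by
  obtain ⟨V, hV_cover, hV, hVU⟩ :=
    exists_iUnion_eq_closure_subset hU (fun x => Set.toFinite _) hU_cover
  obtain ⟨δ, hδ, hδV⟩ := lebesgue_number_lemma_of_metric isCompact_univ hV hV_cover.ge
  filter_upwards [eventually_all.2 fun j => eventually_exists_label_gridPoint_ne (φ j),
    eventually_all.2 fun j => eventually_exists_label_gridPoint_ne (ψ j),
    eventually_all.2 fun j =>
      eventually_exists_labelDiff_eq_coboundary isClosed_closure.isCompact (hVU j) (h j),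
    eventually_dist_gridPoint_lt hδ] with L hφ hψ hw hL _
  choose w hw using fun j => hw j
  refine torusEval_cupProd_labelDiff_eq_zero hq (fun j => hφ j) (fun j => hψ j) w fun v => ?_
  obtain ⟨j, hj⟩ := hδV (gridPoint v) trivial
  exact ⟨j, hw j v fun x hx => subset_closure (hj (hL v x hx))⟩

end Grid

/-! ### The model map of the torus to the sphere -/

section ModelMap

open Filter Topology

variable {q : ℕ}

/-- The map `(S¹)^q → ℝ^{q+1}` whose normalisation is the model map of the torus to the sphere. The
last coordinate is positive whenever some `z i` equals `1` and negative near `(-1, …, -1)`. -/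
noncomputable def torusVector (z : Fin q → Circle) : EuclideanSpace ℝ (Fin (q + 1)) :=
  WithLp.toLp 2 (Fin.snoc (α := fun _ => ℝ) (fun i => -(z i : ℂ).im) (q - 1 + ∑ i, (z i : ℂ).re))

theorem torusVector_castSucc (z : Fin q → Circle) (i : Fin q) :
    torusVector z i.castSucc = -(z i : ℂ).im := by
  simp [torusVector]

theorem torusVector_last (z : Fin q → Circle) :
    torusVector z (Fin.last q) = q - 1 + ∑ i, (z i : ℂ).re := by
  simp [torusVector]

theorem continuous_torusVector : Continuous (torusVector (q := q)) :=
  (PiLp.continuous_toLp 2 _).comp (Continuous.finSnoc (by fun_prop) (by fun_prop))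

theorem torusVector_last_pos {z : Fin q → Circle} {i : Fin q} (hi : z i = 1) :
    0 < torusVector z (Fin.last q) := by
  have h_re (w : Circle) : 0 ≤ 1 + (w : ℂ).re := by
    have := neg_le_of_abs_le (w.norm_coe ▸ Complex.abs_re_le_norm (w : ℂ))
    linarith
  have h_le : 1 + ((z i : Circle) : ℂ).re ≤ ∑ j, (1 + (z j : ℂ).re) :=
    Finset.single_le_sum (f := fun j => 1 + (z j : ℂ).re) (fun j _ => h_re _) (Finset.mem_univ i)
  rw [hi, Circle.coe_one, Complex.one_re, Finset.sum_add_distrib, Finset.sum_const,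
    Finset.card_univ, Fintype.card_fin, nsmul_one] at h_le
  rw [torusVector_last]
  linarith

theorem torusVector_ne_zero (z : Fin q → Circle) : torusVector z ≠ 0 := by
  intro h
  have h_im (i) : (z i : ℂ).im = 0 := by simpa [h] using torusVector_castSucc z i
  have h_re (i) : (z i : ℂ).re = -1 := by
    have h_abs : |(z i : ℂ).re| = 1 := by
      rw [Complex.abs_re_eq_norm.2 (h_im i), Circle.norm_coe]
    refine (eq_or_eq_neg_of_abs_eq h_abs).resolve_left fun h_one => ?_
    have h_pos := torusVector_last_pos (z := z) (i := i) (Circle.ext (Complex.ext h_one (h_im i)))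
    simp [h] at h_pos
  have h_last := torusVector_last z
  simp only [h, h_re, PiLp.zero_apply, Finset.sum_const, Finset.card_univ, Fintype.card_fin,
    smul_neg, nsmul_one] at h_last
  linarith

/-- The model map `(S¹)^q → S^q`; it has degree `±1`. -/
noncomputable def torusSphereMap :
    C(Fin q → Circle, Metric.sphere (0 : EuclideanSpace ℝ (Fin (q + 1))) 1) where
  toFun z := ⟨‖torusVector z‖⁻¹ • torusVector z,
    mem_sphere_zero_iff_norm.2 (norm_smul_inv_norm (𝕜 := ℝ) (torusVector_ne_zero z))⟩
  continuous_toFun := Continuous.subtype_mk ((continuous_torusVector.norm.inv₀ fun z =>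
    norm_ne_zero_iff.2 (torusVector_ne_zero z)).smul continuous_torusVector) _

theorem label_torusSphereMap (z : Fin q → Circle) :
    label (torusSphereMap z).1 = label (torusVector z) :=
  label_smul _ (inv_pos.2 (norm_pos_iff.2 (torusVector_ne_zero z)))

section EvenGrid

variable {M : ℕ}

theorem toCircle_im [NeZero (2 * M)] (t : ZMod (2 * M)) :
    (ZMod.toCircle t : ℂ).im = Real.sin (Real.pi * (t.val / M)) := by
  rw [ZMod.toCircle_eq_circleExp, Circle.coe_exp, Complex.exp_ofReal_mul_I_im]
  congr 1
  push_cast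
  field_simp

theorem toCircle_re [NeZero (2 * M)] (t : ZMod (2 * M)) :
    (ZMod.toCircle t : ℂ).re = Real.cos (Real.pi * (t.val / M)) := by
  rw [ZMod.toCircle_eq_circleExp, Circle.coe_exp, Complex.exp_ofReal_mul_I_re]
  congr 1
  push_cast
  field_simp

theorem toCircle_im_pos_iff [NeZero (2 * M)] {t : ZMod (2 * M)} :
    0 < (ZMod.toCircle t : ℂ).im ↔ 0 < t.val ∧ t.val < M := by
  have hM : (0 : ℝ) < M := by
    exact_mod_cast Nat.pos_of_ne_zero (right_ne_zero_of_mul (NeZero.ne (2 * M)))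
  rw [toCircle_im]
  refine ⟨fun h => ⟨Nat.pos_of_ne_zero fun h_zero => by simp [h_zero] at h, ?_⟩, fun ⟨h₀, hM'⟩ =>
    Real.sin_pos_of_pos_of_lt_pi (by positivity) ?_⟩
  · by_contra! h_le
    have h_one : (1 : ℝ) ≤ t.val / M := (one_le_div hM).2 (by exact_mod_cast h_le)
    have h_two : (t.val : ℝ) / M ≤ 2 := (div_le_iff₀ hM).2 (by exact_mod_cast (ZMod.val_lt t).le)
    have h_nonneg := Real.sin_nonneg_of_nonneg_of_le_pi (x := Real.pi * (t.val / M) - Real.pi)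
      (by nlinarith [Real.pi_pos]) (by nlinarith [Real.pi_pos])
    rw [Real.sin_sub_pi] at h_nonneg
    linarith
  · have h_lt : (t.val : ℝ) / M < 1 := (div_lt_one hM).2 (by exact_mod_cast hM')
    nlinarith [Real.pi_pos]

theorem val_add_one_eq {L : ℕ} [NeZero L] (t : ZMod L) :
    (t + 1).val = t.val + 1 ∧ t.val + 1 < L ∨ (t + 1).val = 0 ∧ t.val + 1 = L := by
  rcases (Nat.succ_le_of_lt (ZMod.val_lt t)).lt_or_eq with h | h
  · have h_one : (1 : ZMod L).val = 1 := ZMod.val_one'' (by lia)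
    rw [ZMod.val_add_of_lt (by rwa [h_one]), h_one]
    exact Or.inl ⟨rfl, h⟩
  · have h_zero : t + 1 = 0 := by simpa using congrArg (Nat.cast : ℕ → ZMod L) h
    rw [h_zero, ZMod.val_zero]
    exact Or.inr ⟨rfl, h⟩

theorem torusVector_last_neg_of_near_neg_one [NeZero (2 * M)] (hM : 2 ≤ M)
    (hM_cos : (q : ℝ) - 1 < q * Real.cos (Real.pi / M)) {t : Fin q → ZMod (2 * M)}
    (ht : ∀ i, (t i).val = M - 1 ∨ (t i).val = M) :
    torusVector (gridPoint t) (Fin.last q) < 0 := by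
  have hM₀ : (M : ℝ) ≠ 0 := by exact_mod_cast (by lia : M ≠ 0)
  have h_re (i) : (gridPoint t i : ℂ).re ≤ -Real.cos (Real.pi / M) := by
    unfold gridPoint
    rcases ht i with h | h
    · have h_arg : Real.pi * ((M - 1 : ℕ) / M) = Real.pi - Real.pi / M := by
        rw [Nat.cast_sub (by lia)]
        field_simp
        simp
      rw [toCircle_re, h, h_arg, Real.cos_pi_sub]
    · rw [toCircle_re, h, div_self hM₀, mul_one, Real.cos_pi]
      exact neg_le_neg (Real.cos_le_one _)
  have h_sum := Finset.sum_le_card_nsmul Finset.univ _ _ fun i _ => h_re i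
  rw [Finset.card_univ, Fintype.card_fin, nsmul_eq_mul] at h_sum
  rw [torusVector_last]
  linarith

theorem isModelLabelling_label_torusVector [NeZero (2 * M)] (hM : 2 ≤ M)
    (hM_cos : (q : ℝ) - 1 < q * Real.cos (Real.pi / M)) :
    IsModelLabelling {t | 0 < (ZMod.toCircle t : ℂ).im} ((M - 1 : ℕ) : ZMod (2 * M))
      fun t : Fin q → ZMod (2 * M) => label (torusVector (gridPoint t)) := by
  have h_val : ((M - 1 : ℕ) : ZMod (2 * M)).val = M - 1 := ZMod.val_natCast_of_lt (by lia)
  constructor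
  · intro t c i h hi h_neg
    have h_le := (label_eq_succ_iff.1 h).2.2 _ hi
    rw [torusVector_castSucc] at h_le
    exact h_neg.not_ge (neg_nonneg.1 h_le)
  · intro t i h
    have h_lt := (label_eq_succ_iff.1 h).2.1
    rwa [torusVector_castSucc, neg_lt_zero] at h_lt
  · intro t i h hi hi'
    refine h (label_eq_zero_iff.2 (torusVector_last_pos (i := i) ?_).le)
    have h_zero : (t i).val = 0 := by
      have := val_add_one_eq (t i)
      simp only [mem_ofPred_eq, toCircle_im_pos_iff] at hi hi'
      lia
    rw [gridPoint, (ZMod.val_eq_zero _).1 h_zero, AddChar.map_zero_eq_one]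
  · intro t
    have := val_add_one_eq t
    rw [← (ZMod.val_injective _).eq_iff, h_val]
    simp only [mem_ofPred_eq, toCircle_im_pos_iff]
    lia
  · intro t ht h
    refine (torusVector_last_neg_of_near_neg_one hM hM_cos fun i => ?_).not_ge
      (label_eq_zero_iff.1 h)
    have := val_add_one_eq ((M - 1 : ℕ) : ZMod (2 * M))
    rcases ht i with h' | h' <;> rw [h']
    · exact Or.inl h_val
    · exact Or.inr (by lia)

end EvenGrid

theorem eventually_sub_one_lt_mul_cos (a : ℝ) :
    ∀ᶠ M : ℕ in atTop, a - 1 < a * Real.cos (Real.pi / M) := by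
  have h_lim : Tendsto (fun M : ℕ => a * Real.cos (Real.pi / M)) atTop (𝓝 (a * Real.cos 0)) :=
    ((Real.continuous_cos.tendsto 0).comp (tendsto_const_div_atTop_nhds_zero_nat _)).const_mul _
  rw [Real.cos_zero, mul_one] at h_lim
  exact h_lim.eventually_const_lt (by linarith)

theorem iUnion_ne_univ_of_homotopic_restrict_fin (hq : q ≠ 0) (hq_even : Even q) {N : ℕ}
    {φ ψ : Fin N → C(Fin (N * q) → Circle, PuncturedSpace (q + 1))} {f g : Fin N → Fin N}
    {G : Fin N → (Fin q → Circle) → Fin (q + 2)} (hfg : ∀ j, f j ≠ g j)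
    (hφ : ∀ j x, label (φ j x).1 = label (torusSphereMap (block (f j) x)).1)
    (hψ : ∀ j x, label (ψ j x).1 = G j (block (g j) x))
    (hG : ∀ e, IsSelection f g e → ∀ j, e j = g j → ∀ z, G j z = label (torusSphereMap z).1)
    {n₀ : ℕ} (hcard : ∀ e, IsSelection f g e → Nat.card {j // e j = g j} = n₀)
    (hex : ∃ e, IsSelection f g e) {U : Fin N → Set (Fin (N * q) → Circle)}
    (hU : ∀ j, IsOpen (U j)) (h : ∀ j, ((φ j).restrict (U j)).Homotopic ((ψ j).restrict (U j))) :
    ⋃ j, U j ≠ univ := by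
  intro hU_cover
  have h_double : Tendsto (fun M : ℕ => 2 * M) atTop atTop :=
    tendsto_id.const_mul_atTop' two_pos
  obtain ⟨M, h_zero, hM_cos, hM⟩ := ((h_double.eventually
    (eventually_torusEval_cupProd_labelDiff_eq_zero hq hU hU_cover h)).and
    ((eventually_sub_one_lt_mul_cos q).and (eventually_ge_atTop 2))).exists
  have : NeZero (2 * M) := ⟨by lia⟩
  simp only [label_torusSphereMap] at hφ hG
  refine torusEval_cupProd_labelDiff_block_ne_zero (isModelLabelling_label_torusVector hM hM_cos)
    hq hq_even hfg (G := fun j t => G j (gridPoint t))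
    (fun e he j hj => funext fun t => hG e he j hj _) hcard hex ?_
  simp only [hφ, hψ] at h_zero
  exact h_zero

theorem iUnion_ne_univ_of_homotopic_restrict (hq : q ≠ 0) (hq_even : Even q) {ι : Type*} {N : ℕ}
    (b : ι ≃ Fin N) {φ ψ : ι → C(Fin (N * q) → Circle, PuncturedSpace (q + 1))} {f g : ι → ι}
    {G : ι → (Fin q → Circle) → Fin (q + 2)} (hfg : ∀ j, f j ≠ g j)
    (hφ : ∀ j x, label (φ j x).1 = label (torusSphereMap (block (b (f j)) x)).1)
    (hψ : ∀ j x, label (ψ j x).1 = G j (block (b (g j)) x))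
    (hG : ∀ e, IsSelection f g e → ∀ j, e j = g j → ∀ z, G j z = label (torusSphereMap z).1)
    {n₀ : ℕ} (hcard : ∀ e, IsSelection f g e → Nat.card {j // e j = g j} = n₀)
    (hex : ∃ e, IsSelection f g e) {U : ι → Set (Fin (N * q) → Circle)}
    (hU : ∀ j, IsOpen (U j)) (h : ∀ j, ((φ j).restrict (U j)).Homotopic ((ψ j).restrict (U j))) :
    ⋃ j, U j ≠ univ := by
  have h_conj (e) (he : IsSelection (b ∘ f ∘ b.symm) (b ∘ g ∘ b.symm) e) :
      IsSelection f g (b.symm.permCongr e) := fun j => by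
    simpa [Equiv.permCongr_apply, Equiv.symm_apply_eq] using he (b j)
  rw [← b.symm.surjective.iUnion_comp U]
  refine iUnion_ne_univ_of_homotopic_restrict_fin hq hq_even (f := b ∘ f ∘ b.symm)
    (g := b ∘ g ∘ b.symm) (φ := φ ∘ b.symm) (ψ := ψ ∘ b.symm) (G := G ∘ b.symm) (n₀ := n₀)
    (fun j hj => hfg _ (b.injective hj)) (fun j => hφ _) (fun j => hψ _)
    (fun e he j hj => hG _ (h_conj e he) _ ?_) (fun e he => ?_) ?_ (fun j => hU _) fun j => h _
  · simp [Equiv.permCongr_apply, hj]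
  · rw [← hcard _ (h_conj e he)]
    exact Nat.card_congr (b.symm.subtypeEquiv fun j => by
      simp [Equiv.permCongr_apply, Equiv.symm_apply_eq])
  · obtain ⟨e, he⟩ := hex
    refine ⟨b.permCongr e, fun j => ?_⟩
    simpa [Equiv.permCongr_apply] using he (b.symm j)

end ModelMap

/-! ### The lower bound -/

section Homotopic

variable {X Y Z : Type*} [TopologicalSpace X] [TopologicalSpace Y] [TopologicalSpace Z]

theorem homotopic_restrict {φ ψ : C(Y, Z)} (h : φ.Homotopic ψ) (U : Set Y) :
    (φ.restrict U).Homotopic (ψ.restrict U) :=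
  h.comp (.refl ⟨Subtype.val, continuous_subtype_val⟩)

theorem homotopic_restrict_comp {φ ψ : C(Y, Z)} {U : Set Y}
    (h : (φ.restrict U).Homotopic (ψ.restrict U)) (T : C(X, Y)) :
    ((φ.comp T).restrict (T ⁻¹' U)).Homotopic ((ψ.comp T).restrict (T ⁻¹' U)) :=
  h.comp (.refl (T.restrictPreimage U))

theorem homotopic_of_norm_sub_lt {q : ℕ} {φ ψ : C(X, PuncturedSpace q)}
    (h : ∀ x, ‖(φ x).1 - (ψ x).1‖ < ‖(ψ x).1‖) : φ.Homotopic ψ := by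
  have h_ne (y : I × X) : (ψ y.2).1 + (σ y.1 : ℝ) • ((φ y.2).1 - (ψ y.2).1) ≠ 0 := fun h₀ => by
    have h_norm := congrArg norm (eq_neg_of_add_eq_zero_left h₀)
    rw [norm_neg, norm_smul, Real.norm_of_nonneg (σ y.1).2.1] at h_norm
    have h_le := mul_le_of_le_one_left (norm_nonneg ((φ y.2).1 - (ψ y.2).1)) (σ y.1).2.2
    exact (h_norm.trans_le h_le).not_gt (h _)
  exact ⟨{ toFun := fun y => ⟨_, h_ne y⟩
           continuous_toFun := by fun_prop
           map_zero_left := fun x => by simp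
           map_one_left := fun x => by simp }⟩

/-- The value at the `a`-th time of a tuple of points in a common fibre. -/
def paramProj {E : Type u} {B : Type v} [TopologicalSpace E] [TopologicalSpace B] (p : E → B)
    {r : ℕ} (a : Fin r) : C(ParamSpace p r, E) where
  toFun y := y.1 a
  continuous_toFun := (continuous_apply a).comp continuous_subtype_val

theorem homotopic_restrict_paramProj {E : Type u} {B : Type v} [TopologicalSpace E]
    [TopologicalSpace B] {p : E → B} {r : ℕ} {U : Set (ParamSpace p r)} (s : C(U, FibConstPath p))
    (hs : ∀ x : U, paramEval p r (s x) = (x : ParamSpace p r)) (a a' : Fin r) :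
    ((paramProj p a).restrict U).Homotopic ((paramProj p a').restrict U) := by
  have h_eval (a : Fin r) (x : U) : (s x).1 (schedule r a) = x.1.1 a :=
    congrFun (congrArg Subtype.val (hs x)) a
  have : PathConnectedSpace I := isPathConnected_iff_pathConnectedSpace.1 <|
    (convex_Icc (0 : ℝ) 1).isPathConnected (nonempty_Icc.2 zero_le_one)
  let γ := PathConnectedSpace.somePath (schedule r a) (schedule r a')
  exact ⟨{ toFun := fun y => (s y.2).1 (γ y.1)
           continuous_toFun := by fun_prop
           map_zero_left := fun x => by simp [h_eval, paramProj]
           map_one_left := fun x => by simp [h_eval, paramProj] }⟩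

/-- The difference of the `i`-th and `j`-th points of a configuration. -/
def confDiff {d N : ℕ} {i j : Fin N} (hij : i ≠ j) : C(Conf d N, PuncturedSpace d) where
  toFun u := ⟨u.1 i - u.1 j, sub_ne_zero.2 (u.2.ne hij)⟩
  continuous_toFun := (((continuous_apply i).comp continuous_subtype_val).sub
    ((continuous_apply j).comp continuous_subtype_val)).subtype_mk _

end Homotopic

section TestFamily

variable {d m n r : ℕ}

/-- The coordinates of the test family: one for each moving point at each time, and one for each
base point other than the first. -/
abbrev TestIndex (m n r : ℕ) : Type :=
  (Fin (n + 1) × Fin (r + 2)) ⊕ Fin m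

/-- The parameter space of the test family, a product of spheres. -/
abbrev TestSpheres (d m n r : ℕ) : Type :=
  TestIndex m n r → Metric.sphere (0 : EuclideanSpace ℝ (Fin d)) 1

/-- The distance of the `i`-th moving point from the origin at the `a`-th time. -/
noncomputable def movingRadius (i : Fin (n + 1)) (a : Fin (r + 2)) : ℝ :=
  if i = 0 ∧ a = 0 then 1 else 3 + i

/-- The distance of the base point `k + 1` from the initial position of the moving point `0`. -/
noncomputable def baseRadius (k : Fin m) : ℝ :=
  1 / (k + 2)

theorem baseRadius_pos (k : Fin m) : 0 < baseRadius k := by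
  unfold baseRadius
  positivity

theorem baseRadius_le (k : Fin m) : baseRadius k ≤ 1 / 2 :=
  one_div_le_one_div_of_le two_pos (by simp)

theorem baseRadius_injective : Function.Injective (baseRadius (m := m)) := fun k k' h => by
  simpa [baseRadius, Fin.val_inj] using h

theorem one_le_movingRadius (i : Fin (n + 1)) (a : Fin (r + 2)) : 1 ≤ movingRadius i a := by
  unfold movingRadius
  split_ifs
  · exact le_rfl
  · linarith [Nat.cast_nonneg (α := ℝ) (i : ℕ)]

theorem movingRadius_injective (a : Fin (r + 2)) :
    Function.Injective fun i : Fin (n + 1) => movingRadius i a := fun i i' h => by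
  simp only [movingRadius] at h
  split_ifs at h with hi hi' hi'
  · exact hi.1.trans hi'.1.symm
  · linarith [Nat.cast_nonneg (α := ℝ) (i' : ℕ)]
  · linarith [Nat.cast_nonneg (α := ℝ) (i : ℕ)]
  · exact Fin.ext (by exact_mod_cast add_left_cancel h)

/-- The position of the `i`-th moving point at the `a`-th time. -/
noncomputable def movingPoint (x : TestSpheres d m n r) (a : Fin (r + 2)) (i : Fin (n + 1)) :
    EuclideanSpace ℝ (Fin d) :=
  movingRadius i a • (x (.inl (i, a))).1

/-- The base points other than the first, all close to the initial position of the moving point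
`0`. -/
noncomputable def nearPoint (x : TestSpheres d m n r) (k : Fin m) : EuclideanSpace ℝ (Fin d) :=
  (x (.inl (0, 0))).1 + baseRadius k • (x (.inr k)).1

/-- The configuration at the `a`-th time: the origin, the other base points, the moving points. -/
noncomputable def testPoints (x : TestSpheres d m n r) (a : Fin (r + 2)) :
    Fin (m + 1 + (n + 1)) → EuclideanSpace ℝ (Fin d) :=
  Fin.append (Fin.cons 0 (nearPoint x)) (movingPoint x a)

theorem norm_baseRadius_smul (x : TestSpheres d m n r) (k : Fin m) (ρ : TestIndex m n r) :
    ‖baseRadius k • (x ρ).1‖ = baseRadius k := by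
  rw [norm_smul, norm_eq_of_mem_sphere, mul_one, Real.norm_of_nonneg (baseRadius_pos k).le]

theorem norm_movingPoint (x : TestSpheres d m n r) (a : Fin (r + 2)) (i : Fin (n + 1)) :
    ‖movingPoint x a i‖ = movingRadius i a := by
  rw [movingPoint, norm_smul, norm_eq_of_mem_sphere, mul_one,
    Real.norm_of_nonneg (zero_le_one.trans (one_le_movingRadius i a))]

theorem norm_nearPoint_le (x : TestSpheres d m n r) (k : Fin m) : ‖nearPoint x k‖ ≤ 3 / 2 := by
  have h := norm_add_le (x (.inl (0, 0))).1 (baseRadius k • (x (.inr k)).1)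
  rw [norm_eq_of_mem_sphere, norm_baseRadius_smul] at h
  exact h.trans (by linarith [baseRadius_le k])

theorem nearPoint_ne_zero (x : TestSpheres d m n r) (k : Fin m) : nearPoint x k ≠ 0 := fun h => by
  have h_norm := congrArg norm (eq_neg_of_add_eq_zero_left h)
  rw [norm_neg, norm_baseRadius_smul, norm_eq_of_mem_sphere] at h_norm
  linarith [baseRadius_le k]

theorem nearPoint_injective (x : TestSpheres d m n r) : Function.Injective (nearPoint x) :=
  fun k k' h => baseRadius_injective <| by
    simpa only [norm_baseRadius_smul] using congrArg norm (add_left_cancel h)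

theorem nearPoint_ne_movingPoint (x : TestSpheres d m n r) (k : Fin m) (a : Fin (r + 2))
    (i : Fin (n + 1)) : nearPoint x k ≠ movingPoint x a i := fun h => by
  by_cases h_first : i = 0 ∧ a = 0
  · obtain ⟨rfl, rfl⟩ := h_first
    have h_zero : baseRadius k • (x (.inr k)).1 = 0 := by
      simpa [nearPoint, movingPoint, movingRadius] using h
    have h_norm := norm_baseRadius_smul x k (.inr k)
    rw [h_zero, norm_zero] at h_norm
    exact (baseRadius_pos k).ne h_norm
  · have h_le := norm_nearPoint_le x k
    rw [h, norm_movingPoint, movingRadius, if_neg h_first] at h_le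
    linarith [Nat.cast_nonneg (α := ℝ) (i : ℕ)]

theorem testPoints_injective (x : TestSpheres d m n r) (a : Fin (r + 2)) :
    Function.Injective (testPoints x a) := by
  refine Fin.append_injective_iff.2 ⟨Fin.cons_injective_iff.2 ⟨?_, nearPoint_injective x⟩,
    fun i i' h => movingRadius_injective a ?_, Fin.cases (fun i h => ?_) fun k i =>
      nearPoint_ne_movingPoint x k a i⟩
  · rintro ⟨k, hk⟩
    exact nearPoint_ne_zero x k hk
  · simpa only [norm_movingPoint] using congrArg norm h
  · have h_norm := norm_movingPoint x a i
    rw [← h, Fin.cons_zero, norm_zero] at h_norm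
    linarith [one_le_movingRadius i a]

theorem continuous_testPoints (a : Fin (r + 2)) :
    Continuous fun x : TestSpheres d m n r => testPoints x a := by
  refine continuous_pi fun k => ?_
  refine Fin.addCases (fun k => ?_) (fun i => ?_) k
  · simp only [testPoints, Fin.append_left]
    refine Fin.cases ?_ (fun k => ?_) k
    · simpa only [Fin.cons_zero] using continuous_const
    · simp only [Fin.cons_succ, nearPoint]
      fun_prop
  · simp only [testPoints, Fin.append_right, movingPoint]
    fun_prop

/-- The test family of tuples of configurations with the same base points. -/
noncomputable def testFamily :
    C(TestSpheres d m n r, ParamSpace (fnProj d (m + 1) (n + 1)) (r + 2)) where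
  toFun x := ⟨fun a => ⟨testPoints x a, testPoints_injective x a⟩, fun a b => by
    ext1
    funext k
    simp [fnProj, testPoints]⟩
  continuous_toFun := Continuous.subtype_mk
    (continuous_pi fun a => (continuous_testPoints a).subtype_mk _) _

end TestFamily

section LowerBound

variable {d m n r : ℕ}

/-- Row `j` of the comparison matrix relates two coordinates of the test family; this is the one
seen at the end of the motion. -/
def endRow : TestIndex m n r → TestIndex m n r
  | .inl (i, a) => .inl (i, if a = 0 then 1 else a)
  | .inr k => .inr k

/-- The coordinate of the test family seen at the start of the motion of row `j`; see `endRow`. -/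
def startRow : TestIndex m n r → TestIndex m n r
  | .inl (i, _) => .inl (i, 0)
  | .inr _ => .inl (0, 1)

/-- The factor with which the coordinate `endRow j` is seen. -/
noncomputable def endScale : TestIndex m n r → ℝ
  | .inl (i, a) => movingRadius i (if a = 0 then 1 else a)
  | .inr k => baseRadius k

/-- The factor with which the coordinate `startRow j` is seen; it is negative for the rows of the
base points, since these are seen from the moving point `0`. -/
noncomputable def startScale : TestIndex m n r → ℝ
  | .inl (i, _) => movingRadius i (0 : Fin (r + 2))
  | .inr _ => -3

theorem endScale_pos (j : TestIndex m n r) : 0 < endScale j := by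
  rcases j with ⟨i, a⟩ | k
  · exact zero_lt_one.trans_le (one_le_movingRadius i _)
  · exact baseRadius_pos k

theorem startScale_inl_pos (b : Fin (n + 1) × Fin (r + 2)) :
    0 < startScale (m := m) (.inl b) :=
  zero_lt_one.trans_le (one_le_movingRadius b.1 _)

theorem startScale_ne_zero : ∀ j : TestIndex m n r, startScale j ≠ 0
  | .inl b => (startScale_inl_pos b).ne'
  | .inr _ => by norm_num [startScale]

theorem endRow_ne_startRow : ∀ j : TestIndex m n r, endRow j ≠ startRow j
  | .inl (i, a) => by
    simp only [endRow, startRow, ne_eq, Sum.inl.injEq, Prod.mk.injEq, true_and]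
    split_ifs with h
    · exact one_ne_zero
    · exact h
  | .inr k => Sum.inr_ne_inl

theorem isSelection_one : IsSelection endRow (startRow (m := m) (n := n) (r := r)) 1
  | .inl (i, a) => by
    by_cases h : a = 0 <;> simp [endRow, startRow, h]
  | .inr k => Or.inl rfl

section Selection

variable {e : Equiv.Perm (TestIndex m n r)}

theorem IsSelection.apply_inr (he : IsSelection endRow startRow e) (k : Fin m) :
    e (.inr k) = .inr k := by
  obtain ⟨⟨i, a⟩ | k', hk⟩ := e.surjective (.inr k)
  · rcases he (.inl (i, a)) with h | h <;> exact absurd (h.symm.trans hk) Sum.inl_ne_inr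
  · rcases he (.inr k') with h | h
    · obtain rfl : k' = k := Sum.inr_injective (h.symm.trans hk)
      exact hk
    · exact absurd (h.symm.trans hk) Sum.inl_ne_inr

theorem IsSelection.isLeft_of_eq (he : IsSelection endRow startRow e) {j : TestIndex m n r}
    (hj : e j = startRow j) : j.isLeft := by
  rcases j with b | k
  · rfl
  · exact absurd ((he.apply_inr k).symm.trans hj) Sum.inr_ne_inl

theorem IsSelection.eq_startRow_iff (he : IsSelection endRow startRow e) {j : TestIndex m n r} :
    e j = startRow j ↔ ∃ i, e j = .inl (i, 0) := by
  refine ⟨fun h => ?_, fun ⟨i, hi⟩ => (he j).resolve_left fun h => ?_⟩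
  · obtain ⟨⟨i, a⟩, rfl⟩ := Sum.isLeft_iff.1 (he.isLeft_of_eq h)
    exact ⟨i, h⟩
  · rcases j with ⟨i', a⟩ | k
    · simp only [hi, endRow, Sum.inl.injEq, Prod.mk.injEq] at h
      split_ifs at h with ha
      · exact zero_ne_one h.2
      · exact ha h.2.symm
    · exact Sum.inl_ne_inr (hi.symm.trans h)

theorem IsSelection.card_eq_startRow (he : IsSelection endRow startRow e) :
    Nat.card {j // e j = startRow j} = n + 1 := by
  rw [← Nat.card_fin (n + 1)]
  refine (Nat.card_eq_of_bijective (fun i : Fin (n + 1) =>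
    ⟨e.symm (.inl (i, 0)), he.eq_startRow_iff.2 ⟨i, e.apply_symm_apply _⟩⟩) ⟨?_, ?_⟩).symm
  · intro i i' h
    simpa using h
  · rintro ⟨j, hj⟩
    obtain ⟨i, hi⟩ := he.eq_startRow_iff.1 hj
    exact ⟨i, Subtype.ext (e.symm_apply_eq.2 hi.symm)⟩

end Selection

/-- The `ρ`-th coordinate of the test family, scaled by `c`. -/
def scaledCoord {c : ℝ} (hc : c ≠ 0) (ρ : TestIndex m n r) :
    C(TestSpheres d m n r, PuncturedSpace d) where
  toFun x := ⟨c • (x ρ).1, smul_ne_zero hc (ne_zero_of_mem_unit_sphere (x ρ))⟩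

/-- The difference of two points of the test family at the `a`-th time. -/
noncomputable def testDiff (a : Fin (r + 2)) {k l : Fin (m + 1 + (n + 1))} (hkl : k ≠ l) :
    C(TestSpheres d m n r, PuncturedSpace d) :=
  (confDiff hkl).comp ((paramProj _ a).comp testFamily)

section Homotopy

variable {U : Set (ParamSpace (fnProj d (m + 1) (n + 1)) (r + 2))}
  {s : C(U, FibConstPath (fnProj d (m + 1) (n + 1)))}

theorem homotopic_restrict_testDiff (hs : ∀ x : U, paramEval _ (r + 2) (s x) = x)
    (a a' : Fin (r + 2)) {k l : Fin (m + 1 + (n + 1))} (hkl : k ≠ l) :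
    ((testDiff a hkl).restrict (testFamily ⁻¹' U)).Homotopic
      ((testDiff a' hkl).restrict (testFamily ⁻¹' U)) :=
  (ContinuousMap.Homotopic.refl (confDiff hkl)).comp
    (homotopic_restrict_comp (homotopic_restrict_paramProj s hs a a') testFamily)

theorem castAdd_ne_natAdd (k : Fin (m + 1)) (i : Fin (n + 1)) :
    Fin.castAdd (n + 1) k ≠ Fin.natAdd (m + 1) i :=
  Fin.ne_of_val_ne (by simp only [Fin.val_castAdd, Fin.val_natAdd]; lia)

theorem testDiff_natAdd_zero (a : Fin (r + 2)) (i : Fin (n + 1)) :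
    testDiff (d := d) (m := m) a (castAdd_ne_natAdd 0 i).symm =
      scaledCoord (zero_lt_one.trans_le (one_le_movingRadius i a)).ne' (.inl (i, a)) := by
  ext1 x
  apply Subtype.ext
  simp [testDiff, confDiff, paramProj, testFamily, testPoints, movingPoint, scaledCoord]

theorem testDiff_castAdd_succ_zero (k : Fin m) :
    testDiff (d := d) (n := n) (0 : Fin (r + 2)) (castAdd_ne_natAdd k.succ 0) =
      scaledCoord (baseRadius_pos k).ne' (.inr k) := by
  ext1 x
  apply Subtype.ext
  simp [testDiff, confDiff, paramProj, testFamily, testPoints, movingPoint, scaledCoord,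
    nearPoint, movingRadius]

theorem homotopic_testDiff_castAdd_succ_one (k : Fin m) :
    (testDiff (d := d) (n := n) (1 : Fin (r + 2)) (castAdd_ne_natAdd k.succ 0)).Homotopic
      (scaledCoord (neg_ne_zero.2 three_ne_zero) (.inl (0, 1))) :=
  homotopic_of_norm_sub_lt fun x => by
    have h_sub : (testDiff (1 : Fin (r + 2)) (castAdd_ne_natAdd (n := n) k.succ 0) x).1 -
        (scaledCoord (c := -3) (by norm_num) (.inl (0, 1)) x).1 = nearPoint x k := by
      simp [testDiff, confDiff, paramProj, testFamily, testPoints, movingPoint, scaledCoord,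
        movingRadius]
    have h_norm : ‖(scaledCoord (c := -3) (by norm_num) (.inl (0, 1)) x).1‖ = 3 := by
      simp [scaledCoord, norm_smul]
    rw [h_sub, h_norm]
    linarith [norm_nearPoint_le x k]

theorem homotopic_restrict_scaledCoord (hs : ∀ x : U, paramEval _ (r + 2) (s x) = x)
    (j : TestIndex m n r) :
    ((scaledCoord (endScale_pos j).ne' (endRow j)).restrict (testFamily ⁻¹' U)).Homotopic
      ((scaledCoord (startScale_ne_zero j) (startRow j)).restrict (testFamily ⁻¹' U)) := by
  rcases j with ⟨i, a⟩ | k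
  · have h := homotopic_restrict_testDiff hs (if a = 0 then 1 else a) 0
      (castAdd_ne_natAdd 0 i).symm
    rwa [testDiff_natAdd_zero, testDiff_natAdd_zero] at h
  · have h := homotopic_restrict_testDiff hs 0 1 (castAdd_ne_natAdd k.succ 0)
    rw [testDiff_castAdd_succ_zero] at h
    exact h.trans (homotopic_restrict (homotopic_testDiff_castAdd_succ_one k) _)

end Homotopy

/-- The torus of parameters for the test family, one block of coordinates for each sphere. -/
noncomputable def testTorus {q N : ℕ} (b : TestIndex m n r ≃ Fin N) :
    C(Fin (N * q) → Circle, TestSpheres (q + 1) m n r) where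
  toFun x ρ := torusSphereMap (block (b ρ) x)
  continuous_toFun := by
    unfold block
    fun_prop

theorem le_of_hasSecatLE_paramEval_fnProj {q : ℕ} (hq : q ≠ 0) (hq_even : Even q) {k : ℕ}
    (h : HasSecatLE (paramEval (fnProj (q + 1) (m + 1) (n + 1)) (r + 2)) k) :
    (r + 2) * (n + 1) + m ≤ k := by
  by_contra! hk
  obtain ⟨U, hU, hU_cover, hU_section⟩ := h
  choose s hs using hU_section
  have h_card : Fintype.card (Fin (k + 1)) ≤ Fintype.card (TestIndex m n r) := by
    simpa [mul_comm (n + 1)] using Nat.succ_le_of_lt hk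
  obtain ⟨g, hg⟩ := Function.exists_surjective_iff.2
    ⟨⟨fun _ => 0⟩, Function.Embedding.nonempty_of_card_le h_card⟩
  let b := Fintype.equivFin (TestIndex m n r)
  have h_cover : ⋃ j, testTorus (q := q) b ⁻¹' (testFamily ⁻¹' U (g j)) = univ := by
    rw [hg.iUnion_comp fun i => testTorus b ⁻¹' (testFamily ⁻¹' U i), ← preimage_iUnion,
      ← preimage_iUnion, hU_cover, preimage_univ, preimage_univ]
  refine iUnion_ne_univ_of_homotopic_restrict hq hq_even b (f := endRow) (g := startRow)
    (G := fun j z => label (startScale j • (torusSphereMap z).1)) endRow_ne_startRow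
    (fun j x => label_smul _ (endScale_pos j)) (fun j x => rfl) (fun e he j hj z => ?_)
    (fun e he => he.card_eq_startRow) ⟨1, isSelection_one⟩
    (fun j => ((hU (g j)).preimage testFamily.continuous).preimage (testTorus b).continuous)
    (fun j => homotopic_restrict_comp (homotopic_restrict_scaledCoord (hs (g j)) j) (testTorus b))
    h_cover
  obtain ⟨i, rfl⟩ := Sum.isLeft_iff.1 (he.isLeft_of_eq hj)
  exact label_smul _ (startScale_inl_pos i)

end LowerBound

/-! ### Clusters of real numbers -/

section Clustering

variable {ι : Type*} {P P' : Setoid ι} {ξ : ι → ℝ} {a b : ι}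

/-- The partition `P` sorts the values of `ξ` into clusters: values in the same class are closer
than values in different classes. -/
def IsClustering (P : Setoid ι) (ξ : ι → ℝ) : Prop :=
  ∀ ⦃a b c e⦄, P a b → ¬ P c e → |ξ a - ξ b| < |ξ c - ξ e|

/-- The largest value of `ξ` in the class of `a`. -/
noncomputable def clusterSup (P : Setoid ι) (ξ : ι → ℝ) (a : ι) : ℝ :=
  ⨆ b : {b // P a b}, ξ b

/-- The smallest distance between values of `ξ` in different classes, truncated at `1`, which is
also the value when there is just one class. -/
noncomputable def clusterGap (P : Setoid ι) (ξ : ι → ℝ) : ℝ :=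
  ⨅ x : Option {x : ι × ι // ¬ P x.1 x.2}, x.elim 1 fun y => |ξ y.1.1 - ξ y.1.2|

/-- The level above the class of `a` at the fraction `θ` of the gap. -/
noncomputable def clusterLevel (P : Setoid ι) (ξ : ι → ℝ) (a : ι) (θ : ℝ) : ℝ :=
  clusterSup P ξ a + clusterGap P ξ * θ

theorem isClustering_ker (ξ : ι → ℝ) : IsClustering (Setoid.ker ξ) ξ := fun a b c e hab hce => by
  rw [Setoid.ker_def.1 hab, sub_self, abs_zero, abs_pos, sub_ne_zero]
  exact hce

theorem clusterSup_congr (h : P a b) : clusterSup P ξ a = clusterSup P ξ b :=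
  (Equiv.subtypeEquivRight fun _ => ⟨P.trans (P.symm h), P.trans h⟩).iSup_congr fun _ => rfl

theorem IsClustering.le_or_le (h : IsClustering P ξ) (h' : IsClustering P' ξ) :
    P ≤ P' ∨ P' ≤ P := by
  by_contra! h_not_le
  simp only [Setoid.le_def, not_forall] at h_not_le
  obtain ⟨⟨a, b, hab, hab'⟩, c, e, hce', hce⟩ := h_not_le
  exact lt_asymm (h hab hce) (h' hce' hab')

variable [Finite ι]

theorem eq_of_le_of_card_quotient_eq (h_le : P ≤ P')
    (h_card : Nat.card (Quotient P) = Nat.card (Quotient P')) : P = P' := by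
  have h_surj : Function.Surjective (Quotient.map' (s₁ := P) (s₂ := P') id h_le) :=
    Quotient.ind fun a => ⟨⟦a⟧, rfl⟩
  have h_inj := (h_surj.bijective_of_nat_card_le h_card.le).injective
  exact le_antisymm h_le fun a b hab => Quotient.exact (h_inj (Quotient.sound hab))

theorem IsClustering.eq_of_card_quotient_eq (h : IsClustering P ξ) (h' : IsClustering P' ξ)
    (h_card : Nat.card (Quotient P) = Nat.card (Quotient P')) : P = P' :=
  (h.le_or_le h').elim (eq_of_le_of_card_quotient_eq · h_card)
    fun h_le => (eq_of_le_of_card_quotient_eq h_le h_card.symm).symm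

theorem le_clusterSup (h : P a b) : ξ b ≤ clusterSup P ξ a :=
  le_ciSup (f := fun b : {b // P a b} => ξ b) (finite_range _).bddAbove ⟨b, h⟩

theorem exists_eq_clusterSup (P : Setoid ι) (ξ : ι → ℝ) (a : ι) :
    ∃ b, P a b ∧ ξ b = clusterSup P ξ a :=
  have : Nonempty {b // P a b} := ⟨⟨a, P.refl a⟩⟩
  let ⟨b, hb⟩ := exists_eq_ciSup_of_finite (f := fun b : {b // P a b} => ξ b)
  ⟨b, b.2, hb⟩

theorem clusterGap_le (h : ¬ P a b) : clusterGap P ξ ≤ |ξ a - ξ b| :=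
  ciInf_le (f := fun x : Option {x : ι × ι // ¬ P x.1 x.2} => x.elim 1 fun y => |ξ y.1.1 - ξ y.1.2|)
    (finite_range _).bddBelow (some ⟨(a, b), h⟩)

theorem IsClustering.clusterGap_pos (h : IsClustering P ξ) : 0 < clusterGap P ξ := by
  obtain ⟨x, hx⟩ := exists_eq_ciInf_of_finite
    (f := fun x : Option {x : ι × ι // ¬ P x.1 x.2} => x.elim 1 fun y => |ξ y.1.1 - ξ y.1.2|)
  rw [clusterGap, ← hx]
  rcases x with _ | ⟨x, h_not⟩
  · exact one_pos
  · exact (abs_nonneg _).trans_lt (h (P.refl x.1) h_not)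

theorem IsClustering.clusterSup_add_clusterGap_le (h : IsClustering P ξ) (hab : ¬ P a b)
    (h_le : ξ a ≤ ξ b) : clusterSup P ξ a + clusterGap P ξ ≤ ξ b := by
  obtain ⟨c, hac, hc⟩ := exists_eq_clusterSup P ξ a
  have h_lt := h (P.symm hac) (fun hba => hab (P.symm hba))
  have h_gap : clusterGap P ξ ≤ |ξ c - ξ b| := clusterGap_le fun hcb => hab (P.trans hac hcb)
  rw [abs_of_nonneg (sub_nonneg.2 h_le)] at h_lt
  have hcb : ξ c < ξ b := by linarith [le_abs_self (ξ c - ξ a)]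
  rw [abs_sub_comm, abs_of_pos (sub_pos.2 hcb)] at h_gap
  linarith

theorem IsClustering.disjoint_Ico (h : IsClustering P ξ) (hab : ¬ P a b) :
    Disjoint (Ico (ξ a) (clusterSup P ξ a + clusterGap P ξ))
      (Ico (ξ b) (clusterSup P ξ b + clusterGap P ξ)) := by
  refine disjoint_left.2 fun x hxa hxb => ?_
  rcases le_total (ξ a) (ξ b) with h_le | h_le
  · linarith [h.clusterSup_add_clusterGap_le hab h_le, hxa.2, hxb.1]
  · linarith [h.clusterSup_add_clusterGap_le (fun hba => hab (P.symm hba)) h_le, hxb.2, hxa.1]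

theorem IsClustering.apply_mem_Ico (h : IsClustering P ξ) (a : ι) :
    ξ a ∈ Ico (ξ a) (clusterSup P ξ a + clusterGap P ξ) :=
  ⟨le_rfl, by linarith [le_clusterSup (ξ := ξ) (P.refl a), h.clusterGap_pos]⟩

section Level

variable {θ : ℝ}

theorem IsClustering.clusterSup_lt_clusterLevel (h : IsClustering P ξ) (hθ : 0 < θ) (a : ι) :
    clusterSup P ξ a < clusterLevel P ξ a θ :=
  lt_add_of_pos_right _ (mul_pos h.clusterGap_pos hθ)

theorem IsClustering.clusterLevel_mem_Ico (h : IsClustering P ξ) (hθ : θ ∈ Ioo (0 : ℝ) 1) (a : ι) :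
    clusterLevel P ξ a θ ∈ Ico (ξ a) (clusterSup P ξ a + clusterGap P ξ) :=
  ⟨(le_clusterSup (P.refl a)).trans (h.clusterSup_lt_clusterLevel hθ.1 a).le,
    add_lt_add_right (mul_lt_of_lt_one_right h.clusterGap_pos hθ.2) _⟩

theorem IsClustering.apply_ne_clusterLevel (h : IsClustering P ξ) (hθ : θ ∈ Ioo (0 : ℝ) 1)
    (a b : ι) : ξ b ≠ clusterLevel P ξ a θ := by
  by_cases hab : P a b
  · exact ((le_clusterSup hab).trans_lt (h.clusterSup_lt_clusterLevel hθ.1 a)).ne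
  · exact ((h.disjoint_Ico hab).ne_of_mem (h.clusterLevel_mem_Ico hθ a) (h.apply_mem_Ico b)).symm

theorem IsClustering.eq_of_clusterLevel_eq (h : IsClustering P ξ) {θ' : ℝ}
    (hθ : θ ∈ Ioo (0 : ℝ) 1) (hθ' : θ' ∈ Ioo (0 : ℝ) 1)
    (h_eq : clusterLevel P ξ a θ = clusterLevel P ξ b θ') : θ = θ' := by
  by_cases hab : P a b
  · rw [clusterLevel, clusterLevel, clusterSup_congr hab] at h_eq
    exact mul_left_cancel₀ h.clusterGap_pos.ne' (add_left_cancel h_eq)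
  · exact ((h.disjoint_Ico hab).ne_of_mem (h.clusterLevel_mem_Ico hθ a)
      (h.clusterLevel_mem_Ico hθ' b) h_eq).elim

end Level

section Continuity

variable {X : Type*} [TopologicalSpace X] {ζ : X → ι → ℝ}

theorem continuous_clusterLevel (P : Setoid ι) (hζ : Continuous ζ) (a : ι) (θ : ℝ) :
    Continuous fun x => clusterLevel P (ζ x) a θ := by
  have := Fintype.ofFinite ι
  classical
  have : Nonempty {b // P a b} := ⟨⟨a, P.refl a⟩⟩
  simp only [clusterLevel, clusterSup, clusterGap, ← Finset.sup'_univ_eq_ciSup,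
    ← Finset.inf'_univ_eq_ciInf]
  refine .add (.finset_sup'_apply _ fun b _ => by fun_prop)
    (.mul_const (.finset_inf'_apply _ fun b _ => ?_) θ)
  cases b <;> simp only [Option.elim] <;> fun_prop

theorem isOpen_setOf_isClustering (P : Setoid ι) (hζ : Continuous ζ) :
    IsOpen {x | IsClustering P (ζ x)} := by
  simp only [IsClustering, ofPred_forall]
  refine isOpen_iInter_of_finite fun a => isOpen_iInter_of_finite fun b =>
    isOpen_iInter_of_finite fun c => isOpen_iInter_of_finite fun e =>
    isOpen_iInter_of_finite fun _ => isOpen_iInter_of_finite fun _ => ?_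
  exact isOpen_lt (by fun_prop) (by fun_prop)

end Continuity

end Clustering

/-! ### Motions through a common hub -/

section HubPath

variable {A : Type*} [AddCommGroup A] {r : ℕ}

/-- The path which, around each time `j`, runs through `W j` backwards and then forwards at double
speed. It is meant for `W j` which stay at `hub` from time `1` on. -/
def hubPath (hub : A) (W : Fin r → ℝ → A) (t : ℝ) : A :=
  hub + ∑ j, (W j (2 * |t - (j : ℕ)|) - hub)

theorem hubPath_eq {hub : A} {W : Fin r → ℝ → A} (hW : ∀ j w, 1 ≤ w → W j w = hub) {t : ℝ}
    {j : Fin r} (hj : |t - (j : ℕ)| ≤ 1 / 2) : hubPath hub W t = W j (2 * |t - (j : ℕ)|) := by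
  have h_sum : ∑ j', (W j' (2 * |t - (j' : ℕ)|) - hub) = W j (2 * |t - (j : ℕ)|) - hub := by
    refine Fintype.sum_eq_single j fun j' hj' => sub_eq_zero.2 (hW j' _ ?_)
    have h_one : (1 : ℝ) ≤ |((j' : ℕ) : ℝ) - (j : ℕ)| := by
      exact_mod_cast Int.one_le_abs (sub_ne_zero.2 (Nat.cast_injective.ne (Fin.val_ne_of_ne hj')))
    linarith [abs_sub_le ((j' : ℕ) : ℝ) t (j : ℕ), abs_sub_comm ((j' : ℕ) : ℝ) t]
  rw [hubPath, h_sum, add_sub_cancel]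

theorem exists_abs_sub_le_half {t : ℝ} (ht : 0 ≤ t) (htr : t < r - 1 / 2) :
    ∃ j : Fin r, |t - (j : ℕ)| ≤ 1 / 2 := by
  have h_nonneg : 0 ≤ t + 1 / 2 := by linarith
  have h_lt : ⌊t + 1 / 2⌋₊ < r := (Nat.floor_lt h_nonneg).2 (by linarith)
  have h_floor_le := Nat.floor_le h_nonneg
  have h_lt_floor := Nat.lt_floor_add_one (t + 1 / 2)
  exact ⟨⟨_, h_lt⟩, abs_le.2 ⟨by simp only; linarith, by simp only; linarith⟩⟩

theorem sub_one_mul_schedule (j : Fin r) : ((r : ℝ) - 1) * schedule r j = (j : ℕ) := by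
  have h_le : ((j : ℕ) : ℝ) ≤ r - 1 := by
    rw [le_sub_iff_add_le]
    exact_mod_cast j.2
  have h_nonneg : (0 : ℝ) ≤ (j : ℕ) := by positivity
  rw [schedule, projIcc_of_mem zero_le_one
    ⟨div_nonneg h_nonneg (h_nonneg.trans h_le), div_le_one_of_le₀ h_le (h_nonneg.trans h_le)⟩]
  exact mul_div_cancel_of_imp' fun h => le_antisymm (h ▸ h_le) h_nonneg

end HubPath

section Glue

variable {E : Type u} {B : Type v} [TopologicalSpace E] [TopologicalSpace B]

theorem exists_section_iUnion {p : E → B} {κ : Type*} {V : κ → Set B}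
    (hV : ∀ i, IsOpen (V i)) (hV_disjoint : Pairwise (Function.onFun Disjoint V))
    (hs : ∀ i, ∃ s : C(V i, E), ∀ x : V i, p (s x) = (x : B)) :
    ∃ s : C(⋃ i, V i, E), ∀ x : ⋃ i, V i, p (s x) = (x : B) := by
  choose s hs using hs
  let W (i : κ) : Set (⋃ i, V i) := Subtype.val ⁻¹' V i
  let φ (i : κ) : C(W i, E) := (s i).comp ⟨fun x => ⟨x.1.1, x.2⟩, by fun_prop⟩
  have hφ (i j : κ) (x : ⋃ i, V i) (hi : x ∈ W i) (hj : x ∈ W j) : φ i ⟨x, hi⟩ = φ j ⟨x, hj⟩ := by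
    obtain rfl : i = j := hV_disjoint.eq (not_disjoint_iff.2 ⟨x.1, hi, hj⟩)
    rfl
  have hW (x : ⋃ i, V i) : ∃ i, W i ∈ nhds x :=
    (mem_iUnion.1 x.2).imp fun i hi => ((hV i).preimage continuous_subtype_val).mem_nhds hi
  refine ⟨ContinuousMap.liftCover W φ hφ hW, fun x => ?_⟩
  obtain ⟨i, hi⟩ := mem_iUnion.1 x.2
  rw [ContinuousMap.liftCover_coe (i := i) ⟨x, hi⟩]
  exact hs i ⟨x.1, hi⟩

theorem exists_section_paramEval {p : E → B} {r : ℕ} {V : Set (ParamSpace p r)}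
    (G : C(V × I, E)) (hG : ∀ y t t', p (G (y, t)) = p (G (y, t')))
    (hG_schedule : ∀ (y : V) j, G (y, schedule r j) = y.1.1 j) :
    ∃ s : C(V, FibConstPath p), ∀ y : V, paramEval p r (s y) = (y : ParamSpace p r) :=
  ⟨⟨fun y => ⟨G.curry y, hG y⟩, G.curry.continuous.subtype_mk _⟩,
    fun y => Subtype.ext (funext (hG_schedule y))⟩

end Glue

section PushAway

variable {d m n : ℕ}

/-- Three successive motions of the last `n` points of `u`, the others being fixed. With `α`
increasing from `0` to `1` the first coordinates move to `η`, then with `β` the remaining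
coordinates move to `(ρ, 0, …, 0)`, then with `γ` the first coordinates move to `0`. -/
noncomputable def pushAway (u : Fin (m + n) → EuclideanSpace ℝ (Fin (d + 2))) (η ρ : Fin n → ℝ)
    (α β γ : ℝ) : Fin (m + n) → EuclideanSpace ℝ (Fin (d + 2)) :=
  Fin.append (fun k => u (Fin.castAdd n k)) fun i => WithLp.toLp 2 <| Fin.cons
    ((1 - γ) * ((1 - α) * u (Fin.natAdd m i) 0 + α * η i))
    fun c => (1 - β) * u (Fin.natAdd m i) c.succ + β * (Pi.single 0 (ρ i) : Fin (d + 1) → ℝ) c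

variable {u v : Fin (m + n) → EuclideanSpace ℝ (Fin (d + 2))} {η ρ η' : Fin n → ℝ} {α β γ : ℝ}

theorem pushAway_castAdd (k : Fin m) :
    pushAway u η ρ α β γ (Fin.castAdd n k) = u (Fin.castAdd n k) :=
  Fin.append_left _ _ k

theorem pushAway_natAdd_zero (i : Fin n) : pushAway u η ρ α β γ (Fin.natAdd m i) 0 =
    (1 - γ) * ((1 - α) * u (Fin.natAdd m i) 0 + α * η i) := by
  simp [pushAway]

theorem pushAway_natAdd_succ (i : Fin n) (c : Fin (d + 1)) :
    pushAway u η ρ α β γ (Fin.natAdd m i) c.succ =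
      (1 - β) * u (Fin.natAdd m i) c.succ + β * (Pi.single 0 (ρ i) : Fin (d + 1) → ℝ) c := by
  simp [pushAway]

theorem pushAway_zero : pushAway u η ρ 0 0 0 = u := by
  refine funext (Fin.addCases (fun k => pushAway_castAdd k) fun i => ?_)
  ext c
  cases c using Fin.cases with
  | zero => simp [pushAway_natAdd_zero]
  | succ c => simp [pushAway_natAdd_succ]

theorem pushAway_one_congr (h : ∀ k, u (Fin.castAdd n k) = v (Fin.castAdd n k)) :
    pushAway u η ρ 1 1 1 = pushAway v η' ρ 1 1 1 := by
  refine funext (Fin.addCases (fun k => ?_) fun i => ?_)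
  · rw [pushAway_castAdd, pushAway_castAdd, h]
  · ext c
    cases c using Fin.cases with
    | zero => simp [pushAway_natAdd_zero]
    | succ c => simp [pushAway_natAdd_succ]

theorem continuous_pushAway {X : Type*} [TopologicalSpace X]
    {u : X → Fin (m + n) → EuclideanSpace ℝ (Fin (d + 2))} {η ρ : X → Fin n → ℝ} {α β γ : X → ℝ}
    (hu : Continuous u) (hη : Continuous η) (hρ : Continuous ρ) (hα : Continuous α)
    (hβ : Continuous β) (hγ : Continuous γ) :
    Continuous fun x => pushAway (u x) (η x) (ρ x) (α x) (β x) (γ x) := by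
  refine continuous_pi (Fin.addCases (fun k => ?_) fun i => ?_)
  · simp only [pushAway_castAdd]
    fun_prop
  · simp only [pushAway, Fin.append_right]
    refine (PiLp.continuous_toLp 2 _).comp (continuous_pi (Fin.cases ?_ fun c => ?_))
    · simp only [Fin.cons_zero]
      fun_prop
    · simp only [Fin.cons_succ, Pi.single_apply]
      split_ifs <;> fun_prop

theorem injective_pushAway_first {J : Fin (m + n) → Set ℝ} (hJ : ∀ s, Convex ℝ (J s))
    (huJ : ∀ s, u s 0 ∈ J s) (hηJ : ∀ i, η i ∈ J (Fin.natAdd m i)) (hα : α ∈ Icc (0 : ℝ) 1)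
    (h : ∀ s t, s ≠ t → Disjoint (J s) (J t) ∨ ∃ c : Fin (d + 1), u s c.succ ≠ u t c.succ) :
    Function.Injective (pushAway u η ρ α 0 0) := by
  have h_mem : ∀ s, pushAway u η ρ α 0 0 s 0 ∈ J s := Fin.addCases
    (fun k => by rw [pushAway_castAdd]; exact huJ _)
    (fun i => by
      rw [pushAway_natAdd_zero, sub_zero, one_mul]
      exact hJ _ (huJ _) (hηJ i) (sub_nonneg.2 hα.2) hα.1 (sub_add_cancel 1 α))
  have h_succ (c : Fin (d + 1)) : ∀ s, pushAway u η ρ α 0 0 s c.succ = u s c.succ := Fin.addCases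
    (fun k => by rw [pushAway_castAdd])
    (fun i => by rw [pushAway_natAdd_succ, sub_zero, one_mul, zero_mul, add_zero])
  intro s t hst
  by_contra h_ne
  rcases h s t h_ne with h_disjoint | ⟨c, hc⟩
  · exact h_disjoint.ne_of_mem (h_mem s) (h_mem t) (by rw [hst])
  · rw [← h_succ, ← h_succ, hst] at hc
    exact hc rfl

theorem injective_pushAway_of_coord (hu : Function.Injective u) (c : Fin (d + 2))
    (h_inj : Function.Injective fun i => pushAway u η ρ α β γ (Fin.natAdd m i) c)
    (h_ne : ∀ k i, u (Fin.castAdd n k) c ≠ pushAway u η ρ α β γ (Fin.natAdd m i) c) :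
    Function.Injective (pushAway u η ρ α β γ) := by
  rw [← Fin.append_castAdd_natAdd (f := pushAway u η ρ α β γ), Fin.append_injective_iff]
  refine ⟨?_, fun i i' h => h_inj (by simp only [h]), fun k i h => h_ne k i ?_⟩
  · simp only [pushAway_castAdd]
    exact hu.comp (Fin.castAdd_injective m n)
  · rw [← h, pushAway_castAdd]

theorem injective_pushAway_second (hu : Function.Injective u) (hη : Function.Injective η)
    (hηu : ∀ k i, u (Fin.castAdd n k) 0 ≠ η i) : Function.Injective (pushAway u η ρ 1 β 0) :=
  have h_zero (i : Fin n) : pushAway u η ρ 1 β 0 (Fin.natAdd m i) 0 = η i := by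
    simp [pushAway_natAdd_zero]
  injective_pushAway_of_coord hu 0 (by simpa only [h_zero] using hη)
    (by simpa only [h_zero] using hηu)

theorem injective_pushAway_third (hu : Function.Injective u) (hρ : Function.Injective ρ)
    (hρu : ∀ k i, u (Fin.castAdd n k) 1 ≠ ρ i) : Function.Injective (pushAway u η ρ 1 1 γ) := by
  have h_one (i : Fin n) : pushAway u η ρ 1 1 γ (Fin.natAdd m i) 1 = ρ i := by
    simpa using pushAway_natAdd_succ (u := u) (η := η) (ρ := ρ) (α := 1) (β := 1) (γ := γ) i 0
  exact injective_pushAway_of_coord hu 1 (by simpa only [h_one] using hρ)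
    (by simpa only [h_one] using hρu)

end PushAway

/-! ### The upper bound -/

section UpperBound

variable {d m n r : ℕ}

/-- The points involved in an element of `ParamSpace (fnProj d m n) r`: the `m` base points, which
do not depend on the time, and the `n` moving points at each of the `r` times. -/
abbrev PointIndex (m n r : ℕ) : Type :=
  Fin m ⊕ (Fin r × Fin n)

/-- The indices of the points of the configuration at the `j`-th time. -/
def pointIndex (j : Fin r) : Fin (m + n) → PointIndex m n r :=
  Fin.append Sum.inl fun i => Sum.inr (j, i)

/-- The offsets, in `(0, 1)`, which separate moving points of the same cluster. -/
noncomputable def offset (i : Fin n) : ℝ :=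
  ((i : ℕ) + 1) / (n + 1)

theorem offset_mem_Ioo (i : Fin n) : offset i ∈ Ioo (0 : ℝ) 1 := by
  have h_lt : ((i : ℕ) : ℝ) < n := by exact_mod_cast i.2
  refine ⟨by unfold offset; positivity, (div_lt_one (by positivity)).2 (by linarith)⟩

theorem injective_offset : Function.Injective (offset (n := n)) := fun i i' h => by
  have h_cast := add_right_cancel ((div_left_inj' (by positivity)).1 h)
  exact Fin.ext (Nat.cast_injective h_cast)

theorem castAdd_eq_castAdd (y : ParamSpace (fnProj d m n) r) (j j' : Fin r) (k : Fin m) :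
    (y.1 j).1 (Fin.castAdd n k) = (y.1 j').1 (Fin.castAdd n k) :=
  congrFun (congrArg Subtype.val (y.2 j j')) k

theorem continuous_point (j : Fin r) :
    Continuous fun y : ParamSpace (fnProj d m n) r => (y.1 j).1 :=
  continuous_subtype_val.comp ((continuous_apply j).comp continuous_subtype_val)

theorem continuous_coord (j : Fin r) (s : Fin (m + n)) (c : Fin d) :
    Continuous fun y : ParamSpace (fnProj d m n) r => (y.1 j).1 s c :=
  (EuclideanSpace.proj c).continuous.comp ((continuous_apply s).comp (continuous_point j))

variable [NeZero r]

/-- The first coordinates of all the points. -/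
def height (y : ParamSpace (fnProj (d + 2) m n) r) : PointIndex m n r → ℝ :=
  Sum.elim (fun k => (y.1 0).1 (Fin.castAdd n k) 0) fun a => (y.1 a.1).1 (Fin.natAdd m a.2) 0

theorem height_pointIndex (y : ParamSpace (fnProj (d + 2) m n) r) (j : Fin r) :
    ∀ s, height y (pointIndex j s) = (y.1 j).1 s 0 :=
  Fin.addCases
    (fun k => by simp only [pointIndex, Fin.append_left, height, Sum.elim_inl,
      castAdd_eq_castAdd y 0 j])
    (fun i => by simp [pointIndex, height])

theorem continuous_height :
    Continuous (height : ParamSpace (fnProj (d + 2) m n) r → PointIndex m n r → ℝ) := by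
  refine continuous_pi fun a => ?_
  rcases a with k | ⟨j, i⟩ <;> exact continuous_coord _ _ 0

/-- A second coordinate, beyond those of all the base points, to which the `i`-th moving point can
escape. -/
noncomputable def escapeCoord (y : ParamSpace (fnProj (d + 2) m n) r) (i : Fin n) : ℝ :=
  ∑ k, |(y.1 0).1 (Fin.castAdd n k) 1| + 1 + (i : ℕ)

theorem continuous_escapeCoord :
    Continuous (escapeCoord : ParamSpace (fnProj (d + 2) m n) r → Fin n → ℝ) := by
  refine continuous_pi fun i => .add (.add (continuous_finsetSum _ fun k _ => ?_) ?_) ?_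
  · exact (continuous_coord _ _ 1).abs
  · exact continuous_const
  · exact continuous_const

theorem injective_escapeCoord (y : ParamSpace (fnProj (d + 2) m n) r) :
    Function.Injective (escapeCoord y) :=
  fun _ _ h => Fin.ext (Nat.cast_injective (add_left_cancel h))

theorem castAdd_lt_escapeCoord (y : ParamSpace (fnProj (d + 2) m n) r) (j : Fin r) (k : Fin m)
    (i : Fin n) : (y.1 j).1 (Fin.castAdd n k) 1 < escapeCoord y i := by
  have h_le := Finset.single_le_sum (f := fun k => |(y.1 0).1 (Fin.castAdd n k) 1|)
    (fun _ _ => abs_nonneg _) (Finset.mem_univ k)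
  rw [castAdd_eq_castAdd y j 0, escapeCoord]
  linarith [le_abs_self ((y.1 0).1 (Fin.castAdd n k) 1), (i : ℕ).cast_nonneg (α := ℝ)]

/-- The tuples for which the partition `P` clusters the first coordinates of the points, and
distinct points of one configuration in the same cluster differ in another coordinate. -/
def clusterDomain (P : Setoid (PointIndex m n r)) : Set (ParamSpace (fnProj (d + 2) m n) r) :=
  {y | IsClustering P (height y)} ∩ {y | ∀ j s t, s ≠ t → P (pointIndex j s) (pointIndex j t) →
    ∃ c : Fin (d + 1), (y.1 j).1 s c.succ ≠ (y.1 j).1 t c.succ}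

theorem isOpen_clusterDomain (P : Setoid (PointIndex m n r)) :
    IsOpen (clusterDomain (d := d) P) := by
  refine (isOpen_setOf_isClustering P continuous_height).inter ?_
  simp only [ofPred_forall, ofPred_exists]
  refine isOpen_iInter_of_finite fun j => isOpen_iInter_of_finite fun s =>
    isOpen_iInter_of_finite fun t => isOpen_iInter_of_finite fun _ =>
    isOpen_iInter_of_finite fun _ => isOpen_iUnion fun c => ?_
  exact isOpen_ne_fun (continuous_coord j s c.succ) (continuous_coord j t c.succ)

theorem mem_clusterDomain_ker (y : ParamSpace (fnProj (d + 2) m n) r) :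
    y ∈ clusterDomain (Setoid.ker (height y)) := by
  refine ⟨isClustering_ker _, fun j s t hst h => ?_⟩
  by_contra! h_eq
  refine hst ((y.1 j).2 (PiLp.ext (Fin.cases ?_ h_eq)))
  simpa only [height_pointIndex] using Setoid.ker_def.1 h

/-- The configuration at time `w` of the motion by which the `j`-th configuration escapes, the
three stages taking a third of the time each. -/
noncomputable def escape (P : Setoid (PointIndex m n r)) (y : ParamSpace (fnProj (d + 2) m n) r)
    (j : Fin r) (w : ℝ) : Fin (m + n) → EuclideanSpace ℝ (Fin (d + 2)) :=
  pushAway (y.1 j).1 (fun i => clusterLevel P (height y) (pointIndex j (Fin.natAdd m i)) (offset i))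
    (escapeCoord y) (projIcc 0 1 zero_le_one (3 * w)) (projIcc 0 1 zero_le_one (3 * w - 1))
    (projIcc 0 1 zero_le_one (3 * w - 2))

section Escape

variable (P : Setoid (PointIndex m n r)) (y : ParamSpace (fnProj (d + 2) m n) r)

theorem escape_zero (j : Fin r) : escape P y j 0 = (y.1 j).1 := by
  rw [escape, projIcc_of_le_left _ (by norm_num), projIcc_of_le_left _ (by norm_num),
    projIcc_of_le_left _ (by norm_num), pushAway_zero]

theorem escape_of_one_le (j : Fin r) (w : ℝ) (hw : 1 ≤ w) : escape P y j w = escape P y 0 1 := by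
  rw [escape, escape, projIcc_of_right_le _ (by linarith), projIcc_of_right_le _ (by linarith),
    projIcc_of_right_le _ (by linarith), projIcc_of_right_le _ (by norm_num),
    projIcc_of_right_le _ (by norm_num), projIcc_of_right_le _ (by norm_num)]
  exact pushAway_one_congr fun k => castAdd_eq_castAdd y j 0 k

theorem escape_castAdd (j : Fin r) (w : ℝ) (k : Fin m) :
    escape P y j w (Fin.castAdd n k) = (y.1 0).1 (Fin.castAdd n k) :=
  (pushAway_castAdd k).trans (castAdd_eq_castAdd y j 0 k)

theorem continuous_escape {X : Type*} [TopologicalSpace X]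
    {y : X → ParamSpace (fnProj (d + 2) m n) r} {w : X → ℝ} (hy : Continuous y)
    (hw : Continuous w) (j : Fin r) : Continuous fun x => escape P (y x) j (w x) :=
  continuous_pushAway ((continuous_point j).comp hy)
    (continuous_pi fun _ => (continuous_clusterLevel P continuous_height _ _).comp hy)
    (continuous_escapeCoord.comp hy) (by fun_prop) (by fun_prop) (by fun_prop)

variable {P y}

theorem injective_clusterLevel_offset (h : IsClustering P (height y)) (j : Fin r) :
    Function.Injective fun i =>
      clusterLevel P (height y) (pointIndex j (Fin.natAdd m i)) (offset i) :=
  fun i i' h_eq =>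
    injective_offset (h.eq_of_clusterLevel_eq (offset_mem_Ioo i) (offset_mem_Ioo i') h_eq)

theorem injective_escape (hy : y ∈ clusterDomain P) (j : Fin r) (w : ℝ) :
    Function.Injective (escape P y j w) := by
  rcases le_total w (1 / 3) with h₁ | h₁
  · rw [escape, projIcc_of_le_left (x := 3 * w - 1) _ (by linarith),
      projIcc_of_le_left (x := 3 * w - 2) _ (by linarith)]
    refine injective_pushAway_first (fun s => convex_Ico (height y (pointIndex j s))
      (clusterSup P (height y) (pointIndex j s) + clusterGap P (height y)))
      (fun s => height_pointIndex y j s ▸ hy.1.apply_mem_Ico _)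
      (fun i => hy.1.clusterLevel_mem_Ico (offset_mem_Ioo i) _) (Subtype.prop _)
      fun s t hst => ?_
    by_cases hP : P (pointIndex j s) (pointIndex j t)
    · exact .inr (hy.2 j s t hst hP)
    · exact .inl (hy.1.disjoint_Ico hP)
  rw [escape, projIcc_of_right_le (x := 3 * w) _ (by linarith)]
  rcases le_total w (2 / 3) with h₂ | h₂
  · rw [projIcc_of_le_left (x := 3 * w - 2) _ (by linarith)]
    refine injective_pushAway_second (y.1 j).2 (injective_clusterLevel_offset hy.1 j) fun k i => ?_
    rw [← height_pointIndex]
    exact hy.1.apply_ne_clusterLevel (offset_mem_Ioo i) _ _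
  · rw [projIcc_of_right_le (x := 3 * w - 1) _ (by linarith)]
    exact injective_pushAway_third (y.1 j).2 (injective_escapeCoord y)
      fun k i => (castAdd_lt_escapeCoord y j k i).ne

end Escape

theorem exists_section_clusterDomain (P : Setoid (PointIndex m n r)) :
    ∃ s : C(clusterDomain (d := d) P, FibConstPath (fnProj (d + 2) m n)),
      ∀ y : clusterDomain P,
        paramEval _ r (s y) = (y : ParamSpace (fnProj (d + 2) m n) r) := by
  let path (x : clusterDomain (d := d) P × I) : Fin (m + n) → EuclideanSpace ℝ (Fin (d + 2)) :=
    hubPath (escape P x.1.1 0 1) (escape P x.1.1) (((r : ℝ) - 1) * x.2)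
  have h_path (x : clusterDomain (d := d) P × I) (j : Fin r)
      (hj : |((r : ℝ) - 1) * x.2 - (j : ℕ)| ≤ 1 / 2) :
      path x = escape P x.1.1 j (2 * |((r : ℝ) - 1) * x.2 - (j : ℕ)|) :=
    hubPath_eq (escape_of_one_le P x.1.1) hj
  have h_exists (x : clusterDomain (d := d) P × I) : ∃ j w, path x = escape P x.1.1 j w := by
    have hr : (0 : ℝ) ≤ r - 1 := sub_nonneg.2 (by exact_mod_cast NeZero.one_le)
    obtain ⟨j, hj⟩ := exists_abs_sub_le_half (r := r) (mul_nonneg hr x.2.2.1)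
      (by linarith [mul_le_of_le_one_right hr x.2.2.2])
    exact ⟨j, _, h_path x j hj⟩
  have h_inj (x : clusterDomain (d := d) P × I) : Function.Injective (path x) := by
    obtain ⟨j, w, h⟩ := h_exists x
    exact h ▸ injective_escape x.1.2 j w
  have h_cont : Continuous path := by
    have hy : Continuous fun x : clusterDomain (d := d) P × I => x.1.1 := by fun_prop
    refine (continuous_escape P hy continuous_const 0).add (continuous_finsetSum _ fun j _ => ?_)
    exact (continuous_escape P hy (by fun_prop) j).sub (continuous_escape P hy continuous_const 0)
  refine exists_section_paramEval ⟨fun x => ⟨path x, h_inj x⟩, h_cont.subtype_mk _⟩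
    (fun y t t' => Subtype.ext (funext fun k => ?_)) (fun y j => Subtype.ext ?_)
  · obtain ⟨j, w, h⟩ := h_exists (y, t)
    obtain ⟨j', w', h'⟩ := h_exists (y, t')
    change path (y, t) (Fin.castAdd n k) = path (y, t') (Fin.castAdd n k)
    rw [h, h', escape_castAdd, escape_castAdd]
  · change path (y, schedule r j) = (y.1.1 j).1
    have h_zero : |((r : ℝ) - 1) * schedule r j - (j : ℕ)| = 0 := by
      rw [sub_one_mul_schedule, sub_self, abs_zero]
    rw [h_path _ j (by rw [h_zero]; positivity), h_zero, mul_zero, escape_zero]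

theorem pairwise_disjoint_clusterDomain (c : ℕ) :
    Pairwise (Function.onFun Disjoint
      fun P : {P : Setoid (PointIndex m n r) // Nat.card (Quotient P) = c} =>
        clusterDomain (d := d) P.1) := fun P P' h_ne =>
  disjoint_left.2 fun _ hy hy' =>
    h_ne (Subtype.ext (hy.1.eq_of_card_quotient_eq hy'.1 (P.2.trans P'.2.symm)))

theorem hasSecatLE_paramEval_fnProj {N : ℕ} (hN : N + 1 = m + r * n) :
    HasSecatLE (paramEval (fnProj (d + 2) m n) r) N := by
  refine ⟨fun i => ⋃ P : {P : Setoid (PointIndex m n r) // Nat.card (Quotient P) = i + 1},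
    clusterDomain P.1, fun i => isOpen_iUnion fun P => isOpen_clusterDomain P.1,
    eq_univ_of_forall fun y => ?_, fun i => exists_section_iUnion
      (fun P => isOpen_clusterDomain P.1) (pairwise_disjoint_clusterDomain _)
      fun P => exists_section_clusterDomain P.1⟩
  let P := Setoid.ker (height y)
  have h_card : Nat.card (PointIndex m n r) = N + 1 := by simp [hN]
  have : Nonempty (PointIndex m n r) := (Nat.card_pos_iff.1 (h_card ▸ N.succ_pos)).1
  have h_pos : 0 < Nat.card (Quotient P) :=
    have : Nonempty (Quotient P) := .map (Quotient.mk P) this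
    Nat.card_pos
  have h_le : Nat.card (Quotient P) ≤ N + 1 :=
    h_card ▸ Nat.card_le_card_of_surjective (Quotient.mk P) Quotient.mk_surjective
  exact mem_iUnion.2 ⟨⟨Nat.card (Quotient P) - 1, by lia⟩,
    mem_iUnion.2 ⟨⟨P, (Nat.sub_add_cancel h_pos).symm⟩, mem_clusterDomain_ker y⟩⟩

end UpperBound

end FadellNeuwirth

theorem stmt15_general (d m n r : ℕ) (hodd : Odd d) (hd : 3 ≤ d) (hn : 1 ≤ n) (hm : 1 ≤ m)
    (hr : 2 ≤ r) :
    seqParamTC (fnProj d m n) r = ((r * n + m - 1 : ℕ) : ℕ∞) := by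
  obtain ⟨d, rfl⟩ := Nat.exists_eq_add_of_le' hd
  obtain ⟨m, rfl⟩ := Nat.exists_eq_add_of_le' hm
  obtain ⟨n, rfl⟩ := Nat.exists_eq_add_of_le' hn
  obtain ⟨r, rfl⟩ := Nat.exists_eq_add_of_le' hr
  have h_even : Even (d + 2) := Nat.not_odd_iff_even.1 (Nat.odd_add_one.1 hodd)
  refine le_antisymm (iInf₂_le _ ?_) (le_iInf₂ fun k hk => Nat.cast_le.2 ?_)
  · exact FadellNeuwirth.hasSecatLE_paramEval_fnProj (d := d + 1) (by lia)
  · exact FadellNeuwirth.le_of_hasSecatLE_paramEval_fnProj (d + 1).succ_ne_zero h_even hk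

/-- For the Fadell–Neuwirth fibration with `d ≥ 3` odd, `n ≥ 1`, `m ≥ 2`, `r ≥ 2`:
`TC_r[p] = rn + m - 1`. -/
theorem stmt15 (d m n r : ℕ) (hodd : Odd d) (hd : 3 ≤ d) (hn : 1 ≤ n) (hm : 2 ≤ m)
    (hr : 2 ≤ r) :
    seqParamTC (fnProj d m n) r = ((r * n + m - 1 : ℕ) : ℕ∞) :=
  stmt15_general d m n r hodd hd hn (one_le_two.trans hm) hr
end

section
/- For the Fadell–Neuwirth fibration p : F(ℝ^d, m+n) → F(ℝ^d, m) with any d ≥ 2, m ≥ 2, n ≥ 1 and r ≥ 2, one has the lower bound TC_r[p] ≥ rn + m − 2. -/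
open Set unitInterval

universe u v

/-!
Take `m - 2 + r * n` unit spheres and let them parametrize `r`-tuples of configurations over a
common base point: each of the inner `m - 2` obstacles moves on a sphere around the first one, and
each of the `n` moving points of each entry circles either the first obstacle (in one distinguished
entry) or the last one (in all other entries). For every sphere factor there is a direction between
an obstacle and a moving point which, computed in a suitable entry of the tuple, is homotopic to
that coordinate of the torus of spheres, while in another entry it is null-homotopic. Over a set
with a local section of `Π_r` any two entries of the tuple are homotopic, so there the coordinate
itself is null-homotopic.

A product of `N` spheres has no open cover `U 1, …, U N` with the `j`-th coordinate null-homotopic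
on `U j`: deforming the `j`-th coordinate to a constant `c j` on a smaller set would make the
identity homotopic to a map that misses `(-c 1, …, -c N)`. This replaces the cup product of the
`N` fundamental classes by the statement that a self-map of a product of spheres homotopic to the
identity is surjective. Extending the map to the ambient vector space, this is Brouwer's theorem,
which is proved by the volume argument of Milnor and Rogers: if `g` vanishes on the boundary of a
convex body, the volume of the image of `x ↦ x + t • g x` does not change for small `t`, and the
integral of its Jacobian determinant is a polynomial in `t`.
-/

section Brouwer

open MeasureTheory Metric NNReal Polynomial

theorem exists_eval_eq_sum_eval {K : Type*} [Field K] {S : Set K} (hS : S.Infinite) (n : ℕ)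
    (x : K) : ∃ (s : Finset K) (c : K → K), ↑s ⊆ S ∧
      ∀ p : K[X], p.natDegree ≤ n → p.eval x = ∑ t ∈ s, c t * p.eval t := by
  classical
  obtain ⟨s, hsS, hs⟩ := hS.exists_subset_card_eq (n + 1)
  refine ⟨s, fun t ↦ (Lagrange.basis s id t).eval x, hsS, fun p hp ↦ ?_⟩
  have hdeg : p.degree < s.card := by
    rw [hs]
    exact degree_le_natDegree.trans_lt (by exact_mod_cast Nat.lt_succ_of_le hp)
  rw [congrArg (eval x) (Lagrange.eq_interpolate (injOn_id _) hdeg), Lagrange.interpolate_apply,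
    eval_finsetSum]
  exact Finset.sum_congr rfl fun t _ ↦ by rw [eval_mul, eval_C, mul_comm, id]

theorem exists_polynomial_eval_eq_det_one_add_smul {R M : Type*} [CommRing R] [Nontrivial R]
    [AddCommGroup M] [Module R M] [Module.Free R M] [Module.Finite R M] (A : M →ₗ[R] M) :
    ∃ p : R[X], p.natDegree ≤ Module.finrank R M ∧ ∀ t, p.eval t = LinearMap.det (1 + t • A) := by
  classical
  let b := Module.finBasis R M
  let N := LinearMap.toMatrix b b A
  refine ⟨((X : R[X]) • N.map C + (1 : Matrix _ _ R).map C).det, ?_, fun t ↦ ?_⟩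
  · simpa only [Fintype.card_fin] using natDegree_det_X_add_C_le N 1
  · rw [← LinearMap.det_toMatrix b, map_add, map_smul, LinearMap.toMatrix_one,
      ← coe_evalRingHom, RingHom.map_det, add_comm]
    congr 1
    ext i j
    by_cases hij : i = j <;> simp [N, hij, mul_comm t]

variable {E : Type*} [NormedAddCommGroup E]

theorem bijective_add_of_lipschitzWith [CompleteSpace E] {g : E → E} {K : ℝ≥0} (hK : K < 1)
    (hg : LipschitzWith K g) : Function.Bijective fun x ↦ x + g x := by
  refine Function.bijective_iff_existsUnique _ |>.2 fun y ↦ ?_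
  have hcontr : ContractingWith K fun x ↦ y - g x :=
    ⟨hK, LipschitzWith.of_dist_le_mul fun a b ↦ by
      rw [dist_sub_left]
      exact hg.dist_le_mul a b⟩
  have hfix (x : E) : x + g x = y ↔ Function.IsFixedPt (fun x ↦ y - g x) x := by
    rw [Function.IsFixedPt, sub_eq_iff_eq_add, eq_comm]
  exact ⟨hcontr.fixedPoint, (hfix _).2 hcontr.fixedPoint_isFixedPt,
    fun x hx ↦ hcontr.fixedPoint_unique ((hfix x).1 hx)⟩

variable [NormedSpace ℝ E]

theorem exists_mem_segment_frontier {s : Set E} {x y : E} (hx : x ∈ s) (hy : y ∉ s) :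
    ∃ z ∈ segment ℝ x y, z ∈ frontier s := by
  by_contra! hz
  obtain ⟨w, -, hw, hw'⟩ := (convex_segment (𝕜 := ℝ) x y).isPreconnected (interior s) (closure s)ᶜ
    isOpen_interior isClosed_closure.isOpen_compl
    (fun z h ↦ (em (z ∈ interior s)).imp_right fun hi hc ↦ hz z h ⟨hc, hi⟩)
    ⟨x, left_mem_segment ℝ x y, by_contra fun hi ↦
      hz x (left_mem_segment ℝ x y) ⟨subset_closure hx, hi⟩⟩
    ⟨y, right_mem_segment ℝ x y, fun hc ↦ hz y (right_mem_segment ℝ x y)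
      ⟨hc, fun hi ↦ hy (interior_subset hi)⟩⟩
  exact hw' (interior_subset_closure hw)

theorem lipschitzWith_indicator {F : Type*} [SeminormedAddCommGroup F] {g : E → F} {s : Set E}
    {K : ℝ≥0} (hs : IsClosed s) (hg : LipschitzOnWith K g s) (h0 : ∀ x ∈ frontier s, g x = 0) :
    LipschitzWith K (s.indicator g) := by
  have key {x y : E} (hx : x ∈ s) (hy : y ∉ s) :
      dist (s.indicator g x) (s.indicator g y) ≤ K * dist x y := by
    obtain ⟨z, hzxy, hz⟩ := exists_mem_segment_frontier hx hy
    rw [indicator_of_mem hx, indicator_of_notMem hy, ← h0 z hz]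
    refine (hg.dist_le_mul x hx z (hs.frontier_subset hz)).trans ?_
    gcongr
    linarith [dist_add_dist_of_mem_segment hzxy, dist_nonneg (x := z) (y := y)]
  refine LipschitzWith.of_dist_le_mul fun x y ↦ ?_
  by_cases hx : x ∈ s <;> by_cases hy : y ∈ s
  · rw [indicator_of_mem hx, indicator_of_mem hy]
    exact hg.dist_le_mul x hx y hy
  · exact key hx hy
  · rw [dist_comm, dist_comm x]
    exact key hy hx
  · rw [indicator_of_notMem hx, indicator_of_notMem hy, dist_self]
    positivity

variable [FiniteDimensional ℝ E] [MeasurableSpace E] [BorelSpace E] {s : Set E}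

theorem integral_det_one_add_fderiv_of_lipschitzOnWith (μ : Measure E) [μ.IsAddHaarMeasure]
    {g : E → E} {K : ℝ≥0} (hs : IsClosed s) (hgd : Differentiable ℝ g) (hK : K < 1)
    (hg : LipschitzOnWith K g s) (h0 : ∀ x ∈ frontier s, g x = 0)
    (hdet : ∀ x ∈ s, 0 < (1 + fderiv ℝ g x).det) :
    ∫ x in s, (1 + fderiv ℝ g x).det ∂μ = μ.real s := by
  have := FiniteDimensional.complete ℝ E
  set h : E → E := fun x ↦ x + s.indicator g x
  have hbij : h.Bijective := bijective_add_of_lipschitzWith hK (lipschitzWith_indicator hs hg h0)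
  have himage : h '' s = s := by
    have hcompl : h '' sᶜ = sᶜ :=
      EqOn.image_eq_self fun x hx ↦ by simp only [h, indicator_of_notMem hx, add_zero, id]
    rw [← compl_inj_iff, ← image_compl_eq hbij, hcompl]
  have hderiv : ∀ x ∈ s, HasFDerivWithinAt h (1 + fderiv ℝ g x) s x := fun x hx ↦
    ((hasFDerivAt_id x).add (hgd x).hasFDerivAt).hasFDerivWithinAt.congr
      (fun y hy ↦ by simp only [h, indicator_of_mem hy, Pi.add_apply, id])
      (by simp only [h, indicator_of_mem hx, Pi.add_apply, id])
  calc ∫ x in s, (1 + fderiv ℝ g x).det ∂μ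
      = ∫ x in s, |(1 + fderiv ℝ g x).det| • (1 : ℝ) ∂μ :=
        setIntegral_congr_fun hs.measurableSet fun x hx ↦ by
          simp only [abs_of_pos (hdet x hx), smul_eq_mul, mul_one]
    _ = ∫ _ in h '' s, (1 : ℝ) ∂μ :=
        (integral_image_eq_integral_abs_det_fderiv_smul μ hs.measurableSet hderiv
          hbij.injective.injOn fun _ ↦ 1).symm
    _ = μ.real s := by rw [himage, setIntegral_const, smul_eq_mul, mul_one]

theorem eventually_integral_det_one_add_smul_fderiv (μ : Measure E) [μ.IsAddHaarMeasure]
    {g : E → E} (hs : IsCompact s) (hconv : Convex ℝ s) (hg : ContDiff ℝ 1 g)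
    (h0 : ∀ x ∈ frontier s, g x = 0) :
    ∀ᶠ t in nhds (0 : ℝ), ∫ x in s, (1 + t • fderiv ℝ g x).det ∂μ = μ.real s := by
  obtain ⟨K, hK⟩ := hg.contDiffOn.exists_lipschitzOnWith one_ne_zero hconv hs
  have hcont : Continuous fun q : ℝ × E ↦ (1 + q.1 • fderiv ℝ g q.2).det :=
    ContinuousLinearMap.continuous_det.comp <| continuous_const.add <|
      continuous_fst.smul ((hg.continuous_fderiv one_ne_zero).comp continuous_snd)
  have hpos : ∀ᶠ t in nhds (0 : ℝ), ∀ x ∈ s, 0 < (1 + t • fderiv ℝ g x).det :=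
    hs.eventually_forall_of_forall_eventually fun x _ ↦
      hcont.continuousAt.eventually (lt_mem_nhds (by simp [ContinuousLinearMap.det]))
  have hsmall : ∀ᶠ t in nhds (0 : ℝ), ‖t‖₊ * K < 1 :=
    (continuous_nnnorm.mul continuous_const).continuousAt.eventually
      (gt_mem_nhds (by simp))
  filter_upwards [hpos, hsmall] with t hdet ht
  have hfd (x : E) : fderiv ℝ (t • g) x = t • fderiv ℝ g x :=
    fderiv_const_smul (hg.differentiable one_ne_zero x) t
  simp only [← hfd] at hdet ⊢
  exact integral_det_one_add_fderiv_of_lipschitzOnWith μ hs.isClosed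
    ((hg.differentiable one_ne_zero).const_smul t) ht
    (fun x hx y hy ↦ by
      simpa [edist_smul₀, mul_assoc, ENNReal.smul_def] using
        mul_le_mul_right (hK hx hy) (‖t‖₊ : ENNReal))
    (fun x hx ↦ by simp [h0 x hx]) hdet

theorem integral_det_fderiv_of_eqOn_frontier (μ : Measure E) [μ.IsAddHaarMeasure] {f : E → E}
    (hs : IsCompact s) (hconv : Convex ℝ s) (hf : ContDiff ℝ 1 f) (hid : EqOn f id (frontier s)) :
    ∫ x in s, (fderiv ℝ f x).det ∂μ = μ.real s := by
  set g : E → E := fun x ↦ f x - x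
  have hg : ContDiff ℝ 1 g := hf.sub contDiff_id
  have hfd (x : E) : fderiv ℝ f x = 1 + (1 : ℝ) • fderiv ℝ g x := by
    have : fderiv ℝ g x = fderiv ℝ f x - 1 :=
      ((hf.differentiable one_ne_zero x).hasFDerivAt.sub (hasFDerivAt_id x)).fderiv
    rw [this, one_smul, add_sub_cancel]
  -- The integral of `(1 + t • fderiv ℝ g x).det` is a polynomial in `t` that is constant near `0`,
  -- so its value at `1` is a combination of values near `0`.
  obtain ⟨T, c, hT, hquad⟩ := exists_eval_eq_sum_eval
    (infinite_of_mem_nhds (0 : ℝ) (eventually_integral_det_one_add_smul_fderiv μ hs hconv hg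
      fun x hx ↦ sub_eq_zero.2 (hid hx))) (Module.finrank ℝ E) 1
  have hdet (x : E) : (fderiv ℝ f x).det = ∑ t ∈ T, c t * (1 + t • fderiv ℝ g x).det := by
    obtain ⟨p, hp, hpdet⟩ := exists_polynomial_eval_eq_det_one_add_smul (fderiv ℝ g x).toLinearMap
    rw [hfd, ContinuousLinearMap.det]
    exact (hpdet 1).symm.trans <| (hquad p hp).trans <|
      Finset.sum_congr rfl fun t _ ↦ congrArg (c t * ·) (hpdet t)
  have hint (t : ℝ) : IntegrableOn (fun x ↦ (1 + t • fderiv ℝ g x).det) s μ :=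
    (ContinuousLinearMap.continuous_det.comp (continuous_const.add
      ((hg.continuous_fderiv one_ne_zero).const_smul t))).continuousOn.integrableOn_compact hs
  have hsum : ∑ t ∈ T, c t = 1 := by simpa using (hquad 1 (by simp)).symm
  calc ∫ x in s, (fderiv ℝ f x).det ∂μ
      = ∑ t ∈ T, c t * ∫ x in s, (1 + t • fderiv ℝ g x).det ∂μ := by
        simp only [hdet]
        rw [integral_finsetSum _ fun t _ ↦ (hint t).const_mul _]
        simp only [integral_const_mul]
    _ = ∑ t ∈ T, c t * μ.real s := Finset.sum_congr rfl fun t ht ↦ congrArg (c t * ·) (hT ht)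
    _ = μ.real s := by rw [← Finset.sum_mul, hsum, one_mul]

end Brouwer

section Surjectivity

open Filter MeasureTheory Metric

variable {E : Type*} [NormedAddCommGroup E]

theorem det_fderiv_eq_zero_of_norm_eq_const [InnerProductSpace ℝ E] [FiniteDimensional ℝ E]
    {f : E → E} {R : ℝ} {x : E} (hf : DifferentiableAt ℝ f x) (hR : R ≠ 0)
    (hnorm : ∀ y, ‖f y‖ = R) :
    (fderiv ℝ f x).det = 0 := by
  by_contra hdet
  obtain ⟨v, hv⟩ : ∃ v, fderiv ℝ f x v = f x :=
    (LinearMap.equivOfDetNeZero (fderiv ℝ f x).toLinearMap hdet).surjective (f x)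
  have hsq : (fun y ↦ ‖f y‖ ^ 2) = fun _ ↦ R ^ 2 := funext fun y ↦ by rw [hnorm]
  have hzero := hf.hasFDerivAt.norm_sq.unique (hsq ▸ hasFDerivAt_const _ x)
  have : R ^ 2 = 0 := by simpa [hv, hnorm] using congrArg (· v) hzero
  exact hR (pow_eq_zero_iff two_ne_zero |>.1 this)

theorem exists_norm_ne_of_eqOn_sphere [InnerProductSpace ℝ E] [FiniteDimensional ℝ E]
    {f : E → E} {R : ℝ} (hR : 0 < R) (hf : ContDiff ℝ 1 f) (hid : EqOn f id (sphere 0 R)) :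
    ∃ x, ‖f x‖ ≠ R := by
  borelize E
  by_contra! hnorm
  have hvol := integral_det_fderiv_of_eqOn_frontier Measure.addHaar (isCompact_closedBall (0 : E) R)
    (convex_closedBall 0 R) hf (by rwa [frontier_closedBall _ hR.ne'])
  simp only [det_fderiv_eq_zero_of_norm_eq_const (hf.differentiable one_ne_zero _) hR.ne' hnorm,
    integral_zero] at hvol
  exact (ENNReal.toReal_pos (measure_closedBall_pos _ 0 hR).ne'
    measure_closedBall_lt_top.ne).ne hvol

theorem exists_eq_zero_of_eventuallyEq_id [InnerProductSpace ℝ E] [FiniteDimensional ℝ E]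
    {F : E → E} (hF : Continuous F) (hid : F =ᶠ[cocompact E] id) : ∃ x, F x = 0 := by
  by_contra! hne
  obtain ⟨ρ, hρ⟩ : ∃ ρ, ∀ x, ρ < ‖x‖ → F x = x := by
    obtain ⟨ρ, -, hρ⟩ := (hasBasis_cobounded_norm (E := E)).eventually_iff.1
      (cobounded_eq_cocompact (α := E) ▸ hid)
    exact ⟨ρ, fun x hx ↦ hρ hx.le⟩
  set R := max ρ 0 + 1
  have hR : 0 < R := by positivity
  have hρR : ρ < R := (le_max_left ρ 0).trans_lt (lt_add_one _)
  obtain ⟨g, hg, hgF, hgid, -⟩ := hF.exists_contDiff_approx_and_eqOn 1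
    (ε := fun x ↦ ‖F x‖) (by fun_prop) (fun x ↦ norm_pos_iff.2 (hne x))
    (S := {x | R ≤ ‖x‖}) (U := {x | ρ < ‖x‖}) (isClosed_le continuous_const continuous_norm)
    ((isOpen_lt continuous_const continuous_norm).mem_nhdsSet.2 fun _ hx ↦ hρR.trans_le hx)
    (contDiffOn_id.congr fun x hx ↦ hρ x hx)
  have hg0 (x : E) : g x ≠ 0 := fun h0 ↦ (hgF x).ne (by rw [h0, dist_zero_left])
  obtain ⟨x, hx⟩ := exists_norm_ne_of_eqOn_sphere (f := fun x ↦ (R / ‖g x‖) • g x) hR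
    ((contDiff_const.div (hg.norm ℝ hg0) fun x ↦ norm_ne_zero_iff.2 (hg0 x)).smul hg)
    fun x hx ↦ by
      have hxR : ‖x‖ = R := mem_sphere_zero_iff_norm.1 hx
      have hgx : g x = x := (hgid hxR.ge).trans (hρ x (hxR ▸ hρR))
      simp only [hgx, hxR, div_self hR.ne', one_smul, id]
  exact hx (by rw [norm_smul, norm_div, norm_norm, Real.norm_of_nonneg hR.le,
    div_mul_cancel₀ _ (norm_ne_zero_iff.2 (hg0 x))])

theorem surjective_of_eventuallyEq_id [NormedSpace ℝ E] [FiniteDimensional ℝ E]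
    {F : E → E} (hF : Continuous F) (hid : F =ᶠ[cocompact E] id) : Function.Surjective F := by
  intro w
  let φ : E ≃ₜ EuclideanSpace ℝ (Fin (Module.finrank ℝ E)) :=
    (Homeomorph.subRight w).trans toEuclidean.toHomeomorph
  obtain ⟨y, hy⟩ := exists_eq_zero_of_eventuallyEq_id (F := φ ∘ F ∘ φ.symm) (by fun_prop) <|
    (φ.symm.isClosedEmbedding.tendsto_cocompact.eventually hid).mono fun y hy ↦ by
      simp [hy]
  exact ⟨φ.symm y, by simpa [φ, sub_eq_zero] using hy⟩

end Surjectivity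

section Homotopy

open Filter Metric

theorem continuous_dite_of_isClosed {X Y : Type*} [TopologicalSpace X] [TopologicalSpace Y]
    {U C : Set X} [∀ x, Decidable (x ∈ U)] (hU : IsOpen U) (hC : IsClosed C) (hCU : C ⊆ U)
    {g : U → Y} {b : X → Y} (hg : Continuous g) (hb : Continuous b)
    (hgb : ∀ x : U, (x : X) ∉ C → g x = b x) :
    Continuous fun x ↦ if h : x ∈ U then g ⟨x, h⟩ else b x := by
  refine continuous_iff_continuousAt.2 fun x ↦ ?_
  by_cases hx : x ∈ U
  · refine ContinuousOn.continuousAt ?_ (hU.mem_nhds hx)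
    rw [continuousOn_iff_continuous_domRestrict]
    exact hg.congr fun y ↦ by simp only [domRestrict_apply, y.2, dite_true, Subtype.coe_eta]
  · refine hb.continuousAt.congr ?_
    filter_upwards [hC.isOpen_compl.mem_nhds fun h ↦ hx (hCU h)] with y hy
    split_ifs with h
    · exact (hgb ⟨y, h⟩ hy).symm
    · rfl

theorem exists_homotopic_of_tsupport_subset {X Y : Type*} [TopologicalSpace X]
    [TopologicalSpace Y] {U : Set X} (hU : IsOpen U) {l : C(X, ℝ)} (hl : tsupport l ⊆ U)
    (hlI : ∀ x, l x ∈ I) {b : C(X, Y)} {H : C(I × U, Y)} (h0 : ∀ x : U, H (0, x) = b x) :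
    ∃ F : C(X, Y), b.Homotopic F ∧ (∀ x : U, F x = H (⟨l x, hlI x⟩, x)) ∧
      ∀ x, l x = 0 → F x = b x := by
  classical
  let τ : C(X, I) := ⟨fun x ↦ ⟨l x, hlI x⟩, by fun_prop⟩
  have hτ {x : X} (hx : l x = 0) : τ x = 0 := Subtype.ext hx
  let G : I × X → Y := fun q ↦ if h : q.2 ∈ U then H (q.1 * τ q.2, ⟨q.2, h⟩) else b q.2
  have hG : Continuous G :=
    continuous_dite_of_isClosed (U := Prod.snd ⁻¹' U) (C := Prod.snd ⁻¹' tsupport l)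
      (g := fun q ↦ H (q.1.1 * τ q.1.2, ⟨q.1.2, q.2⟩)) (hU.preimage continuous_snd)
      ((isClosed_tsupport l).preimage continuous_snd) (preimage_mono hl) (by fun_prop)
      (by fun_prop) fun q hq ↦ by rw [hτ (image_eq_zero_of_notMem_tsupport hq), mul_zero, h0]
  refine ⟨⟨fun x ↦ G (1, x), by fun_prop⟩, ⟨⟨⟨G, hG⟩, fun x ↦ ?_, fun x ↦ rfl⟩⟩,
    fun x ↦ ?_, fun x hx ↦ ?_⟩
  · by_cases hx : x ∈ U <;> simp [G, hx, h0]
  · simp [G, τ]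
  · by_cases hxU : x ∈ U <;> simp [G, hxU, hτ hx, h0]

variable {V : Type*} [NormedAddCommGroup V] [NormedSpace ℝ V]

/-- Radial projection of nonzero vectors onto the unit sphere. -/
noncomputable def direction : C(({0}ᶜ : Set V), sphere (0 : V) 1) :=
  ⟨fun v ↦ (homeomorphUnitSphereProd V v).1, by fun_prop⟩

theorem coe_direction (v : ({0}ᶜ : Set V)) : (direction v : V) = ‖(v : V)‖⁻¹ • (v : V) :=
  homeomorphUnitSphereProd_apply_fst_coe V v

theorem norm_smul_direction (v : ({0}ᶜ : Set V)) : ‖(v : V)‖ • (direction v : V) = v := by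
  rw [coe_direction, smul_inv_smul₀ (norm_ne_zero_iff.2 v.2)]

theorem direction_eq_of_eq_smul {v : ({0}ᶜ : Set V)} {w : sphere (0 : V) 1} {R : ℝ} (hR : 0 < R)
    (h : (v : V) = R • (w : V)) : direction v = w := by
  ext1
  rw [coe_direction, h, norm_smul, norm_eq_of_mem_sphere, mul_one, Real.norm_of_nonneg hR.le,
    inv_smul_smul₀ hR.ne']

theorem homotopic_of_norm_sub_lt {X : Type*} [TopologicalSpace X] {f g : C(X, ({0}ᶜ : Set V))}
    (h : ∀ x, ‖(f x : V) - g x‖ < ‖(g x : V)‖) : f.Homotopic g := by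
  have hne (q : I × X) : AffineMap.lineMap (f q.2 : V) (g q.2 : V) (q.1 : ℝ) ∈ ({0}ᶜ : Set V) := by
    intro hzero
    have hdist := dist_lineMap_right (f q.2 : V) (g q.2 : V) (q.1 : ℝ)
    rw [mem_singleton_iff.1 hzero, dist_zero_left, Real.norm_of_nonneg (sub_nonneg.2 q.1.2.2),
      dist_eq_norm] at hdist
    have := mul_le_of_le_one_left (norm_nonneg ((f q.2 : V) - g q.2)) (sub_le_self 1 q.1.2.1)
    exact (h q.2).not_ge (hdist.trans_le this)
  exact ⟨⟨⟨fun q ↦ ⟨_, hne q⟩, by fun_prop⟩, fun x ↦ by simp, fun x ↦ by simp⟩⟩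

/-- Coordinatewise radial projection of tuples of nonzero vectors onto a product of spheres. -/
noncomputable def piDirection {J : Type*} :
    C({z : J → V | ∀ j, z j ≠ 0}, J → sphere (0 : V) 1) :=
  ⟨fun z j ↦ direction ⟨z.1 j, z.2 j⟩, continuous_pi fun j ↦ direction.continuous.comp <|
    .subtype_mk ((continuous_apply j).comp continuous_subtype_val) _⟩

variable {J : Type*} [Finite J] [FiniteDimensional ℝ V]

theorem exists_norm_preserving_extension_of_homotopic_id
    {f : C(J → sphere (0 : V) 1, J → sphere (0 : V) 1)} (hf : (ContinuousMap.id _).Homotopic f) :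
    ∃ F : C(J → V, J → V), F =ᶠ[cocompact (J → V)] id ∧ (∀ z j, ‖F z j‖ = ‖z j‖) ∧
      ∀ (x : J → sphere (0 : V) 1) (j : J), F (fun i ↦ x i) j = f x j := by
  obtain ⟨⟨K, hK0, hK1⟩⟩ := hf
  let U : Set (J → V) := {z | ∀ j, z j ≠ 0}
  have hU : IsOpen U := by
    simp only [U, ofPred_forall]
    exact isOpen_iInter_of_finite fun j ↦ isOpen_ne_fun (continuous_apply j) continuous_const
  -- The homotopy moves the directions of a tuple of nonzero vectors and keeps their norms.
  let H : C(I × U, J → V) := ⟨fun q j ↦ ‖q.2.1 j‖ • (K (q.1, piDirection q.2) j : V),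
    continuous_pi fun j ↦ .smul
      ((continuous_apply j).comp (continuous_subtype_val.comp continuous_snd)).norm (by fun_prop)⟩
  have hH0 (z : U) : H (0, z) = z := funext fun j ↦
    (congrArg (fun v ↦ ‖z.1 j‖ • (v j : V)) (hK0 (piDirection z))).trans
      (norm_smul_direction ⟨z.1 j, z.2 j⟩)
  obtain ⟨l, hl1, hlcomp, hlU, hlI⟩ := exists_continuousMap_one_of_isCompact_subset_isOpen
    (isCompact_univ_pi fun _ : J ↦ isCompact_sphere (0 : V) 1) hU
    fun z hz j ↦ ne_zero_of_mem_unit_sphere ⟨z j, hz j (mem_univ j)⟩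
  obtain ⟨F, -, hFU, hF0⟩ := exists_homotopic_of_tsupport_subset hU hlU hlI
    (b := ContinuousMap.id (J → V)) hH0
  refine ⟨F, mem_of_superset hlcomp.compl_mem_cocompact fun z hz ↦
      hF0 z (image_eq_zero_of_notMem_tsupport hz), fun z j ↦ ?_, fun x j ↦ ?_⟩
  · by_cases hz : z ∈ U
    · rw [hFU ⟨z, hz⟩]
      simp [H, norm_smul]
    · rw [hF0 z (image_eq_zero_of_notMem_tsupport fun h ↦ hz (hlU h)), ContinuousMap.id_apply]
  · have hxU : (fun i ↦ (x i : V)) ∈ U := fun i ↦ ne_zero_of_mem_unit_sphere (x i)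
    have hlx : (⟨l fun i ↦ x i, hlI _⟩ : I) = 1 := Subtype.ext (hl1 fun i _ ↦ (x i).2)
    have hdir : piDirection ⟨fun i ↦ (x i : V), hxU⟩ = x :=
      funext fun i ↦ direction_eq_of_eq_smul one_pos (one_smul ℝ _).symm
    calc F (fun i ↦ x i) j = ‖(x j : V)‖ • (K (1, piDirection ⟨fun i ↦ (x i : V), hxU⟩) j : V) := by
          rw [hFU ⟨_, hxU⟩, hlx]
          rfl
      _ = K (1, x) j := by rw [hdir, norm_eq_of_mem_sphere, one_smul]
      _ = f x j := congrArg (fun v ↦ (v j : V)) (hK1 x)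

theorem surjective_of_homotopic_id
    {f : C(J → sphere (0 : V) 1, J → sphere (0 : V) 1)} (hf : (ContinuousMap.id _).Homotopic f) :
    Function.Surjective f := by
  cases nonempty_fintype J
  intro w
  obtain ⟨F, hFid, hFnorm, hFf⟩ := exists_norm_preserving_extension_of_homotopic_id hf
  obtain ⟨z, hz⟩ := surjective_of_eventuallyEq_id F.continuous hFid fun j ↦ (w j : V)
  have hz1 (j : J) : z j ∈ sphere (0 : V) 1 := by
    rw [mem_sphere_zero_iff_norm, ← hFnorm, hz, norm_eq_of_mem_sphere]
  exact ⟨fun j ↦ ⟨z j, hz1 j⟩, funext fun j ↦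
    Subtype.ext ((hFf (fun j ↦ ⟨z j, hz1 j⟩) j).symm.trans (congrFun hz j))⟩

theorem exists_not_nullhomotopic_restrict_eval {U : J → Set (J → sphere (0 : V) 1)}
    (hU : ∀ j, IsOpen (U j)) (hcover : ⋃ j, U j = univ) :
    ∃ j, ¬ ((ContinuousMap.eval j).restrict (U j)).Nullhomotopic := by
  by_contra! hnull
  choose c hc using hnull
  obtain ⟨β, hβ⟩ := BumpCovering.exists_isSubordinate isClosed_univ U hU hcover.ge
  have hmodify (j : J) : ∃ F : C(J → sphere (0 : V) 1, sphere (0 : V) 1),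
      (ContinuousMap.eval j).Homotopic F ∧ ∀ x, β j x = 1 → F x = c j := by
    obtain ⟨K⟩ := hc j
    obtain ⟨F, hF, hFU, -⟩ := exists_homotopic_of_tsupport_subset (hU j) (hβ j)
      (fun x ↦ ⟨β.nonneg j x, β.le_one j x⟩) (b := ContinuousMap.eval j) (H := K.toContinuousMap)
      K.apply_zero
    refine ⟨F, hF, fun x hx ↦ ?_⟩
    have hxU : x ∈ U j := hβ j (subset_tsupport _ (by simp [hx]))
    have h1 : (⟨β j x, β.nonneg j x, β.le_one j x⟩ : I) = 1 := Subtype.ext hx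
    rw [hFU ⟨x, hxU⟩, h1]
    exact K.apply_one _
  choose F hF hF1 using hmodify
  obtain ⟨x, hx⟩ := surjective_of_homotopic_id (f := .pi F)
    (ContinuousMap.Homotopic.pi hF) fun j ↦ -c j
  obtain ⟨j, hj⟩ : ∃ j, β j x = 1 := ⟨_, β.ind_apply x (mem_univ x)⟩
  exact ne_neg_of_mem_unit_sphere ℝ (c j) ((hF1 j x hj).symm.trans (congrFun hx j))

end Homotopy

section SectionalCategory

open Metric

/-- The `k`-th entry of a tuple in `E^r_B`. -/
def tupleEntry {E : Type u} {B : Type v} [TopologicalSpace E] [TopologicalSpace B] (p : E → B)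
    {r : ℕ} (k : Fin r) : C(ParamSpace p r, E) :=
  ⟨fun x ↦ x.1 k, (continuous_apply k).comp continuous_subtype_val⟩

variable {E : Type u} {B : Type v} [TopologicalSpace E] [TopologicalSpace B] {p : E → B} {r : ℕ}

theorem homotopic_restrict_tupleEntry {W : Set (ParamSpace p r)} {s : C(W, FibConstPath p)}
    (hs : ∀ x : W, paramEval p r (s x) = x) (k l : Fin r) :
    ((tupleEntry p k).restrict W).Homotopic ((tupleEntry p l).restrict W) := by
  have : PathConnectedSpace I := isPathConnected_iff_pathConnectedSpace.1
    ((convex_Icc (0 : ℝ) 1).isPathConnected ⟨0, unitInterval.zero_mem⟩)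
  let γ : Path (schedule r k) (schedule r l) := PathConnectedSpace.somePath _ _
  have hschedule (x : W) (i : Fin r) : (s x).1 (schedule r i) = tupleEntry p i x :=
    congrFun (congrArg Subtype.val (hs x)) i
  exact ⟨⟨⟨fun q ↦ (s q.2).1 (γ q.1), by fun_prop⟩,
    fun x ↦ by simpa using hschedule x k, fun x ↦ by simpa using hschedule x l⟩⟩

theorem card_le_seqParamTC {V J : Type*} [NormedAddCommGroup V] [NormedSpace ℝ V]
    [FiniteDimensional ℝ V] [Fintype J] (Φ : C(J → sphere (0 : V) 1, ParamSpace p r))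
    (hΦ : ∀ j, ∃ (δ : C(E, sphere (0 : V) 1)) (k l : Fin r),
      (δ.comp ((tupleEntry p k).comp Φ)).Homotopic (ContinuousMap.eval j) ∧
      (δ.comp ((tupleEntry p l).comp Φ)).Nullhomotopic) :
    (Fintype.card J : ℕ∞) ≤ seqParamTC p r := by
  refine le_iInf₂ fun q ⟨U, hUopen, hUcover, hUsec⟩ ↦ ?_
  by_contra! hlt
  obtain ⟨φ⟩ : Nonempty (Fin (q + 1) ↪ J) :=
    Function.Embedding.nonempty_of_card_le (by
      rw [Fintype.card_fin]
      exact_mod_cast hlt)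
  obtain ⟨ψ, hψ⟩ : ∃ ψ : J → Fin (q + 1), ψ.Surjective :=
    ⟨_, Function.invFun_surjective φ.injective⟩
  obtain ⟨j, hj⟩ := exists_not_nullhomotopic_restrict_eval (U := fun j ↦ Φ ⁻¹' U (ψ j))
    (fun j ↦ (hUopen _).preimage Φ.continuous)
    (by rw [← preimage_iUnion, hψ.iUnion_comp, hUcover, preimage_univ])
  obtain ⟨δ, k, l, hk, c, hl⟩ := hΦ j
  obtain ⟨s, hs⟩ := hUsec (ψ j)
  let ι : C(Φ ⁻¹' U (ψ j), J → sphere (0 : V) 1) := ⟨Subtype.val, continuous_subtype_val⟩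
  let Ψ : C(Φ ⁻¹' U (ψ j), U (ψ j)) := Φ.restrictPreimage _
  have hkl := (ContinuousMap.Homotopic.refl δ).comp <|
    (homotopic_restrict_tupleEntry hs k l).comp (.refl Ψ)
  exact hj ⟨c, (hk.symm.comp (.refl ι)).trans (hkl.trans (hl.comp (.refl ι)))⟩

end SectionalCategory

section Configuration

open Metric

/-- The direction from the `i`-th to the `j`-th point of a configuration in `ℝ^d`. -/
noncomputable def pairDirection {d N : ℕ} {i j : Fin N} (hij : i ≠ j) :
    C(Conf d N, sphere (0 : EuclideanSpace ℝ (Fin d)) 1) :=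
  direction.comp ⟨fun u ↦ ⟨u.1 j - u.1 i, sub_ne_zero.2 (u.2.ne hij.symm)⟩, by
    have hcoord (a : Fin N) : Continuous fun u : Conf d N ↦ u.1 a :=
      (continuous_apply a).comp continuous_subtype_val
    exact ((hcoord j).sub (hcoord i)).subtype_mk _⟩

theorem pairDirection_comp_homotopic {d N : ℕ} {i j : Fin N} (hij : i ≠ j) {X : Type*}
    [TopologicalSpace X] {f : C(X, Conf d N)} {w : C(X, sphere (0 : EuclideanSpace ℝ (Fin d)) 1)}
    {R : ℝ} (hR : 0 < R)
    (h : ∀ x, ‖(f x).1 j - (f x).1 i - R • (w x : EuclideanSpace ℝ (Fin d))‖ < R) :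
    ((pairDirection hij).comp f).Homotopic w := by
  let g : C(X, ({0}ᶜ : Set (EuclideanSpace ℝ (Fin d)))) :=
    ⟨fun x ↦ ⟨R • (w x : EuclideanSpace ℝ (Fin d)),
      smul_ne_zero hR.ne' (ne_zero_of_mem_unit_sphere (w x))⟩, by fun_prop⟩
  have hgw : direction.comp g = w := by
    ext1 x
    exact direction_eq_of_eq_smul hR rfl
  rw [← hgw, pairDirection, ContinuousMap.comp_assoc]
  refine (ContinuousMap.Homotopic.refl direction).comp (homotopic_of_norm_sub_lt fun x ↦ ?_)
  exact (h x).trans_eq (by simp [g, norm_smul, abs_of_pos hR])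

/-- Index set of the spheres in the test torus: one for each of the `M` inner obstacles and one for
each moving point in each entry of the tuple. -/
abbrev TorusIndex (M r n : ℕ) : Type := Fin M ⊕ Fin r × Fin n

variable {V : Type*} [NormedAddCommGroup V] [NormedSpace ℝ V] {M r n : ℕ}

/-- The common `M + 2` points of the test tuple. The `a`-th one has norm `a`, so that they are
separated by their distances to the origin; the sign makes `x (.inl b)` the direction from the
`b`-th inner obstacle back to the origin. -/
noncomputable def obstacle (e : sphere (0 : V) 1) (x : TorusIndex M r n → sphere (0 : V) 1) :
    Fin (M + 2) → V :=
  Fin.cons 0 (Fin.snoc (α := fun _ ↦ V) (fun b ↦ -((b + 1 : ℝ) • (x (.inl b) : V)))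
    ((M + 1 : ℝ) • (e : V)))

theorem obstacle_zero (e : sphere (0 : V) 1) (x : TorusIndex M r n → sphere (0 : V) 1) :
    obstacle e x 0 = 0 :=
  rfl

theorem obstacle_succ_castSucc (e : sphere (0 : V) 1) (x : TorusIndex M r n → sphere (0 : V) 1)
    (b : Fin M) : obstacle e x b.castSucc.succ = -((b + 1 : ℝ) • (x (.inl b) : V)) := by
  rw [obstacle, Fin.cons_succ, Fin.snoc_castSucc]

theorem obstacle_last (e : sphere (0 : V) 1) (x : TorusIndex M r n → sphere (0 : V) 1) :
    obstacle e x (Fin.last _) = (M + 1 : ℝ) • (e : V) := by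
  rw [← Fin.succ_last, obstacle, Fin.cons_succ, Fin.snoc_last]

theorem norm_obstacle (e : sphere (0 : V) 1) (x : TorusIndex M r n → sphere (0 : V) 1)
    (a : Fin (M + 2)) : ‖obstacle e x a‖ = a := by
  refine Fin.cases ?_ (Fin.lastCases ?_ fun b ↦ ?_) a
  · simp [obstacle_zero]
  · rw [Fin.succ_last, obstacle_last, norm_smul, norm_eq_of_mem_sphere, mul_one,
      Real.norm_of_nonneg (by positivity)]
    simp
  · rw [obstacle_succ_castSucc, norm_neg, norm_smul, norm_eq_of_mem_sphere, mul_one,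
      Real.norm_of_nonneg (by positivity)]
    simp

theorem one_le_norm_obstacle_sub (e : sphere (0 : V) 1)
    (x : TorusIndex M r n → sphere (0 : V) 1) {a b : Fin (M + 2)} (hab : a ≠ b) :
    1 ≤ ‖obstacle e x a - obstacle e x b‖ := by
  have hint : (1 : ℤ) ≤ |(a : ℤ) - (b : ℤ)| :=
    Int.one_le_abs (sub_ne_zero.2 (by exact_mod_cast Fin.val_ne_of_ne hab))
  calc (1 : ℝ) ≤ |(a : ℝ) - (b : ℝ)| := by exact_mod_cast hint
    _ = |‖obstacle e x a‖ - ‖obstacle e x b‖| := by rw [norm_obstacle, norm_obstacle]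
    _ ≤ ‖obstacle e x a - obstacle e x b‖ := abs_norm_sub_norm_le _ _

theorem obstacle_injective (e : sphere (0 : V) 1) (x : TorusIndex M r n → sphere (0 : V) 1) :
    Function.Injective (obstacle e x) := by
  intro a b hab
  by_contra hne
  have := one_le_norm_obstacle_sub e x hne
  rw [hab, sub_self, norm_zero] at this
  exact one_pos.not_ge this

theorem continuous_obstacle (e : sphere (0 : V) 1) (a : Fin (M + 2)) :
    Continuous fun x : TorusIndex M r n → sphere (0 : V) 1 ↦ obstacle e x a := by
  refine Fin.cases ?_ (Fin.lastCases ?_ fun b ↦ ?_) a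
  · exact continuous_const
  · simp only [Fin.succ_last, obstacle_last]
    exact continuous_const
  · simp only [obstacle_succ_castSucc]
    fun_prop

/-- The obstacle around which the moving points of the `k`-th entry of the test tuple sit: the
first one for the entry `k₀`, the last one for all other entries. -/
def home {r : ℕ} (M : ℕ) (k₀ k : Fin r) : Fin (M + 2) :=
  if k = k₀ then 0 else Fin.last _

theorem home_self (k₀ : Fin r) : home M k₀ k₀ = 0 :=
  if_pos rfl

theorem home_of_ne {k₀ k : Fin r} (hk : k ≠ k₀) : home M k₀ k = Fin.last _ :=
  if_neg hk

/-- The distance of the `i`-th moving point from its home obstacle. Any distinct values in `(0, 1)`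
would do. -/
noncomputable def radius (i : ℕ) : ℝ :=
  ((i : ℝ) + 2)⁻¹

theorem radius_pos (i : ℕ) : 0 < radius i := by
  unfold radius
  positivity

theorem radius_lt_one (i : ℕ) : radius i < 1 :=
  inv_lt_one_of_one_lt₀ (by linarith [i.cast_nonneg (α := ℝ)])

theorem radius_injective : Function.Injective radius := fun i j h ↦ by
  simpa [radius] using h

/-- The moving points of the `k`-th entry of the test tuple. -/
noncomputable def moving (e : sphere (0 : V) 1) (k₀ : Fin r)
    (x : TorusIndex M r n → sphere (0 : V) 1) (k : Fin r) (i : Fin n) : V :=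
  obstacle e x (home M k₀ k) + radius i • (x (.inr (k, i)) : V)

theorem norm_moving_sub_obstacle_home (e : sphere (0 : V) 1) (k₀ : Fin r)
    (x : TorusIndex M r n → sphere (0 : V) 1) (k : Fin r) (i : Fin n) :
    ‖moving e k₀ x k i - obstacle e x (home M k₀ k)‖ = radius i := by
  rw [moving, add_sub_cancel_left, norm_smul, norm_eq_of_mem_sphere, mul_one,
    Real.norm_of_nonneg (radius_pos i).le]

theorem moving_injective (e : sphere (0 : V) 1) (k₀ : Fin r)
    (x : TorusIndex M r n → sphere (0 : V) 1) (k : Fin r) :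
    Function.Injective (moving e k₀ x k) := fun i j hij ↦ by
  refine Fin.ext (radius_injective ?_)
  rw [← norm_moving_sub_obstacle_home e k₀ x k i, hij, norm_moving_sub_obstacle_home]

theorem obstacle_ne_moving (e : sphere (0 : V) 1) (k₀ : Fin r)
    (x : TorusIndex M r n → sphere (0 : V) 1) (a : Fin (M + 2)) (k : Fin r) (i : Fin n) :
    obstacle e x a ≠ moving e k₀ x k i := by
  intro h
  have hnorm := norm_moving_sub_obstacle_home e k₀ x k i
  rw [← h] at hnorm
  rcases eq_or_ne a (home M k₀ k) with rfl | ha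
  · rw [sub_self, norm_zero] at hnorm
    exact (radius_pos i).ne hnorm
  · exact (radius_lt_one i).not_ge (hnorm ▸ one_le_norm_obstacle_sub e x ha)

theorem continuous_moving (e : sphere (0 : V) 1) (k₀ k : Fin r) (i : Fin n) :
    Continuous fun x : TorusIndex M r n → sphere (0 : V) 1 ↦ moving e k₀ x k i :=
  (continuous_obstacle e _).add (by fun_prop)

variable {d : ℕ}

/-- The test tuple in `E^r_B` over a torus of spheres: its entries share the obstacles and differ in
the moving points. -/
noncomputable def testTuple (e : sphere (0 : EuclideanSpace ℝ (Fin d)) 1) (k₀ : Fin r) :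
    C(TorusIndex M r n → sphere (0 : EuclideanSpace ℝ (Fin d)) 1,
      ParamSpace (fnProj d (M + 2) n) r) where
  toFun x := ⟨fun k ↦ ⟨Fin.append (obstacle e x) (moving e k₀ x k), Fin.append_injective_iff.2
    ⟨obstacle_injective e x, moving_injective e k₀ x k, fun a i ↦ obstacle_ne_moving e k₀ x a k i⟩⟩,
    fun k l ↦ by simp [fnProj]⟩
  continuous_toFun := by
    refine .subtype_mk (continuous_pi fun k ↦ .subtype_mk (continuous_pi fun q ↦ ?_) _) _
    refine Fin.addCases (fun a ↦ ?_) (fun i ↦ ?_) q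
    · simpa only [Fin.append_left] using continuous_obstacle e a
    · simpa only [Fin.append_right] using continuous_moving e k₀ k i

/-- The direction from the `a`-th obstacle to the `i`-th moving point. -/
noncomputable def obstacleDirection (a : Fin M) (i : Fin n) :
    C(Conf d (M + n), sphere (0 : EuclideanSpace ℝ (Fin d)) 1) :=
  pairDirection (i := Fin.castAdd n a) (j := Fin.natAdd M i) (Fin.ne_of_lt (by
    rw [Fin.lt_def, Fin.val_castAdd, Fin.val_natAdd]
    lia))

variable {e : sphere (0 : EuclideanSpace ℝ (Fin d)) 1} {k₀ k : Fin r}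

theorem obstacleDirection_comp_testTuple_homotopic (a : Fin (M + 2)) (i : Fin n)
    {w : C(TorusIndex M r n → sphere (0 : EuclideanSpace ℝ (Fin d)) 1,
      sphere (0 : EuclideanSpace ℝ (Fin d)) 1)} {R : ℝ} (hR : 0 < R)
    (h : ∀ x, ‖moving e k₀ x k i - obstacle e x a - R • (w x : EuclideanSpace ℝ (Fin d))‖ < R) :
    ((obstacleDirection a i).comp ((tupleEntry _ k).comp (testTuple e k₀))).Homotopic w :=
  pairDirection_comp_homotopic _ hR fun x ↦ by
    simpa [tupleEntry, testTuple, Fin.append_left, Fin.append_right] using h x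

theorem obstacleDirection_home_homotopic_eval (k : Fin r) (i : Fin n) :
    ((obstacleDirection (home M k₀ k) i).comp
      ((tupleEntry _ k).comp (testTuple e k₀))).Homotopic (.eval (.inr (k, i))) :=
  obstacleDirection_comp_testTuple_homotopic _ i (radius_pos i) fun x ↦ by
    simpa [moving] using radius_pos i

theorem obstacleDirection_succ_castSucc_homotopic_eval (b : Fin M) (i : Fin n) :
    ((obstacleDirection b.castSucc.succ i).comp
      ((tupleEntry _ k₀).comp (testTuple e k₀))).Homotopic (.eval (.inl b)) :=
  obstacleDirection_comp_testTuple_homotopic _ i (R := b + 1) (by positivity) fun x ↦ by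
    have herror : moving e k₀ x k₀ i - obstacle e x b.castSucc.succ -
        (b + 1 : ℝ) • (x (.inl b) : EuclideanSpace ℝ (Fin d)) =
          moving e k₀ x k₀ i - obstacle e x (home M k₀ k₀) := by
      rw [obstacle_succ_castSucc, sub_neg_eq_add, add_sub_cancel_right, home_self, obstacle_zero,
        sub_zero]
    change ‖moving e k₀ x k₀ i - obstacle e x b.castSucc.succ -
      (b + 1 : ℝ) • (x (.inl b) : EuclideanSpace ℝ (Fin d))‖ < b + 1
    rw [herror, norm_moving_sub_obstacle_home]
    linarith [radius_lt_one i, b.1.cast_nonneg (α := ℝ)]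

theorem obstacleDirection_nullhomotopic_of_ne_last (hk : k ≠ k₀) {a : Fin (M + 2)}
    (ha : a ≠ Fin.last _) (i : Fin n) :
    ((obstacleDirection a i).comp ((tupleEntry _ k).comp (testTuple e k₀))).Nullhomotopic := by
  refine ⟨e, obstacleDirection_comp_testTuple_homotopic a i (R := M + 1) (by positivity)
    fun x ↦ ?_⟩
  have haM : (a : ℝ) ≤ M := by exact_mod_cast Nat.lt_succ_iff.1 (Fin.val_lt_last ha)
  calc ‖moving e k₀ x k i - obstacle e x a - (M + 1 : ℝ) • (e : EuclideanSpace ℝ (Fin d))‖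
      = ‖moving e k₀ x k i - obstacle e x (home M k₀ k) - obstacle e x a‖ := by
        rw [home_of_ne hk, obstacle_last, sub_right_comm]
    _ ≤ radius i + a :=
        (norm_sub_le _ _).trans_eq (by rw [norm_moving_sub_obstacle_home, norm_obstacle])
    _ < M + 1 := by linarith [radius_lt_one i]

theorem obstacleDirection_last_nullhomotopic (i : Fin n) :
    ((obstacleDirection (Fin.last _) i).comp
      ((tupleEntry _ k₀).comp (testTuple (M := M) e k₀))).Nullhomotopic := by
  refine ⟨-e, obstacleDirection_comp_testTuple_homotopic _ i (R := M + 1) (by positivity)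
    fun x ↦ ?_⟩
  calc ‖moving e k₀ x k₀ i - obstacle e x (Fin.last _) -
        (M + 1 : ℝ) • -(e : EuclideanSpace ℝ (Fin d))‖
      = ‖moving e k₀ x k₀ i - obstacle e x (home M k₀ k₀)‖ := by
        rw [obstacle_last, smul_neg, sub_neg_eq_add, sub_add_cancel, home_self, obstacle_zero,
          sub_zero]
    _ = radius i := norm_moving_sub_obstacle_home e k₀ x k₀ i
    _ < M + 1 := by linarith [radius_lt_one i, M.cast_nonneg (α := ℝ)]

theorem add_mul_le_seqParamTC_fnProj (e : sphere (0 : EuclideanSpace ℝ (Fin d)) 1)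
    {k₀ k₁ : Fin r} (hk : k₁ ≠ k₀) (i₀ : Fin n) :
    ((M + r * n : ℕ) : ℕ∞) ≤ seqParamTC (fnProj d (M + 2) n) r := by
  have hcard : Fintype.card (TorusIndex M r n) = M + r * n := by simp
  rw [← hcard]
  refine card_le_seqParamTC (testTuple e k₀) ?_
  rintro (b | ⟨k, i⟩)
  · exact ⟨obstacleDirection b.castSucc.succ i₀, k₀, k₁,
      obstacleDirection_succ_castSucc_homotopic_eval b i₀,
      obstacleDirection_nullhomotopic_of_ne_last hk (by simp [← Fin.succ_last]) i₀⟩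
  · obtain rfl | hkk₀ := eq_or_ne k k₀
    · refine ⟨obstacleDirection (home M k k) i, k, k₁,
        obstacleDirection_home_homotopic_eval k i, ?_⟩
      rw [home_self]
      exact obstacleDirection_nullhomotopic_of_ne_last hk (Fin.last_pos.ne) i
    · refine ⟨obstacleDirection (home M k₀ k) i, k, k₀,
        obstacleDirection_home_homotopic_eval k i, ?_⟩
      rw [home_of_ne hkk₀]
      exact obstacleDirection_last_nullhomotopic i

end Configuration

/-- For the Fadell–Neuwirth fibration with any `d ≥ 2`, `m ≥ 2`, `n ≥ 1`, `r ≥ 2`: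
`TC_r[p] ≥ rn + m - 2`. -/
theorem stmt16 (d m n r : ℕ) (hd : 2 ≤ d) (hm : 2 ≤ m) (hn : 1 ≤ n) (hr : 2 ≤ r) :
    ((r * n + m - 2 : ℕ) : ℕ∞) ≤ seqParamTC (fnProj d m n) r := by
  obtain ⟨M, rfl⟩ := Nat.exists_eq_add_of_le' hm
  let e : Metric.sphere (0 : EuclideanSpace ℝ (Fin d)) 1 :=
    ⟨EuclideanSpace.single ⟨0, by lia⟩ 1, by simp⟩
  have hne : (⟨1, hr⟩ : Fin r) ≠ ⟨0, by lia⟩ := by simp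
  rw [← Nat.add_assoc, Nat.add_sub_cancel, Nat.add_comm]
  exact add_mul_le_seqParamTC_fnProj e hne ⟨0, hn⟩
end
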